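/- Suppose 𝒳 is a compact metric space, φ:𝒳^v→ℝ is continuous, H is a tree, δ_□(W_{Q_n},W)→0 for some W∈𝒲, limsup_{n→∞} ‖𝔑_{W_{Q_n}}‖_∞ < ∞, and ‖𝔑_W‖_∞ < ∞ (essential supremum norms on [0,1]). Then both U_n(X) and V_n(X) satisfy a large deviation principle at speed n with the good rate function I₀(t) = inf{ D(ν|ρ) : ν ∈ 𝒯ℳ, D(ν|ρ) < ∞, T_{W,φ}(ν) = t }. -/

import Mathlib

open MeasureTheory Filter Set
open scoped ENNReal NNReal

noncomputable section

/-- The uniform probability measure on `[0,1]`. -/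
def unif01 : Measure ℝ := volume.restrict (Set.Icc 0 1)

instance : IsProbabilityMeasure unif01 :=
  ⟨by rw [unif01, Measure.restrict_apply_univ, Real.volume_Icc]; norm_num⟩

/-- The `L^r` norm (`r : ℝ≥0∞`) of a kernel, viewed as a function on `[0,1]²`. -/
def kerNorm (W : ℝ → ℝ → ℝ) (r : ℝ≥0∞) : ℝ≥0∞ :=
  eLpNorm (fun z : ℝ × ℝ => W z.1 z.2) r (unif01.prod unif01)

/-- The (strong) cut distance `d_□` between two kernels on `[0,1]²`. -/
def cutDist (W₁ W₂ : ℝ → ℝ → ℝ) : ℝ :=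
  ⨆ S : {S : Set ℝ // MeasurableSet S}, ⨆ T : {T : Set ℝ // MeasurableSet T},
    |∫ x in Set.Icc (0:ℝ) 1 ∩ S.1, ∫ y in Set.Icc (0:ℝ) 1 ∩ T.1, (W₁ x y - W₂ x y)|

/-- A Lebesgue-measure-preserving bijection of `[0,1]`. -/
def MPB (σ : ℝ → ℝ) : Prop :=
  Set.BijOn σ (Set.Icc 0 1) (Set.Icc 0 1) ∧ MeasurePreserving σ unif01 unif01

/-- The weak cut distance `δ_□`. -/
def weakCutDist (W₁ W₂ : ℝ → ℝ → ℝ) : ℝ :=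
  ⨅ σ : {σ : ℝ → ℝ // MPB σ}, cutDist (fun x y => W₁ (σ.1 x) (σ.1 y)) W₂

/-- The step kernel `W_{Q_n}` associated to an `n × n` matrix `Q`:
it equals `Q i j` when `⌈n x⌉ = i, ⌈n y⌉ = j`. -/
def stepKernel (n : ℕ) (Q : Fin n → Fin n → ℝ) : ℝ → ℝ → ℝ := fun x y =>
  ∑ i : Fin n, ∑ j : Fin n,
    if x ∈ Set.Ioc (((i : ℕ) : ℝ)/n) ((((i : ℕ) : ℝ)+1)/n) ∧
       y ∈ Set.Ioc (((j : ℕ) : ℝ)/n) ((((j : ℕ) : ℝ)+1)/n)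
    then Q i j else 0

/-- Product over the edges of `H` (each edge counted once) of `f a b`. -/
def edgeProd {v : ℕ} (G : SimpleGraph (Fin v)) [DecidableRel G.Adj]
    (f : Fin v → Fin v → ℝ) : ℝ :=
  ∏ p ∈ Finset.univ.filter (fun p : Fin v × Fin v => G.Adj p.1 p.2 ∧ p.1 < p.2), f p.1 p.2

/-- The number of edges `|E(H)|`. -/
def edgeCard {v : ℕ} (G : SimpleGraph (Fin v)) [DecidableRel G.Adj] : ℕ :=
  (Finset.univ.filter (fun p : Fin v × Fin v => G.Adj p.1 p.2 ∧ p.1 < p.2)).card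

/-- The inhomogeneous U-statistic `U_n(X)` (sum over distinct indices). -/
def Ustat {X : Type*} {v : ℕ} (G : SimpleGraph (Fin v)) [DecidableRel G.Adj]
    (φ : (Fin v → X) → ℝ) (n : ℕ) (Q : Fin n → Fin n → ℝ) (x : Fin n → X) : ℝ :=
  (∑ i ∈ Finset.univ.filter (fun i : Fin v → Fin n => Function.Injective i),
      φ (x ∘ i) * edgeProd G (fun a b => Q (i a) (i b))) / (n : ℝ) ^ v

/-- The inhomogeneous V-statistic `V_n(X)` (sum over all indices). -/
def Vstat {X : Type*} {v : ℕ} (G : SimpleGraph (Fin v)) [DecidableRel G.Adj]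
    (φ : (Fin v → X) → ℝ) (n : ℕ) (Q : Fin n → Fin n → ℝ) (x : Fin n → X) : ℝ :=
  (∑ i : Fin v → Fin n, φ (x ∘ i) * edgeProd G (fun a b => Q (i a) (i b))) / (n : ℝ) ^ v

open Classical in
/-- Kullback-Leibler divergence `D(ν | ρ) ∈ [0,∞]`. -/
def KLdiv {α : Type*} [MeasurableSpace α] (ν ρ : Measure α) : ℝ≥0∞ :=
  if ν ≪ ρ ∧ Integrable (llr ν ρ) ν then ENNReal.ofReal (∫ a, llr ν ρ a ∂ν) else ⊤

open Classical in
/-- `ν` itself if it is a probability measure, junk value `0` otherwise. -/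
def probOr {α : Type*} [MeasurableSpace α] (ν : Measure α) : Measure α :=
  if IsProbabilityMeasure ν then ν else 0

instance {α : Type*} [MeasurableSpace α] (ν : Measure α) : SigmaFinite (probOr ν) := by
  unfold probOr
  split_ifs with h
  · haveI := h; infer_instance
  · infer_instance

/-- `v`-fold product of a (probability) measure. -/
def piProb {α : Type*} [MeasurableSpace α] (v : ℕ) (ν : Measure α) : Measure (Fin v → α) :=
  Measure.pi fun _ => probOr ν

/-- The functional `T_{W,φ}(ν) = E[φ(B₁,…,B_v) ∏_{(a,b) ∈ E(H)} W(A_a,A_b)]`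
for `(A_a,B_a)` i.i.d. with law `ν`. -/
def TWphi {X : Type*} [MeasurableSpace X] {v : ℕ} (G : SimpleGraph (Fin v))
    [DecidableRel G.Adj] (W : ℝ → ℝ → ℝ) (φ : (Fin v → X) → ℝ)
    (ν : Measure (ℝ × X)) : ℝ :=
  ∫ z : Fin v → ℝ × X,
    φ (fun a => (z a).2) * edgeProd G (fun a b => W (z a).1 (z b).1) ∂(piProb v ν)

/-- Membership in `𝒯ℳ`: probability measures on `[0,1] × 𝒳` whose first marginal
is uniform on `[0,1]`. -/
def inTM {X : Type*} [MeasurableSpace X] (ν : Measure (ℝ × X)) : Prop :=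
  IsProbabilityMeasure ν ∧ ν.map Prod.fst = unif01

/-- The rate function `I₀(t) = inf { D(ν|ρ) : ν ∈ 𝒯ℳ, D(ν|ρ) < ∞, T_{W,φ}(ν) = t }`. -/
def rate0 {X : Type*} [MeasurableSpace X] {v : ℕ} (G : SimpleGraph (Fin v))
    [DecidableRel G.Adj] (W : ℝ → ℝ → ℝ) (φ : (Fin v → X) → ℝ) (μ : Measure X)
    (t : ℝ) : ℝ≥0∞ :=
  ⨅ ν : {ν : Measure (ℝ × X) //
      inTM ν ∧ KLdiv ν (unif01.prod μ) ≠ ⊤ ∧ TWphi G W φ ν = t},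
    KLdiv ν.1 (unif01.prod μ)

/-- Tail assumption (T): `E_μ[e^{λ ψ(X)^p}] < ∞` for all `λ > 0`; for `p = ∞`
it means `ψ` is bounded. -/
def TailCond {X : Type*} [MeasurableSpace X] (μ : Measure X) (ψ : X → ℝ)
    (p : ℝ≥0∞) : Prop :=
  if p = ⊤ then ∃ C : ℝ, ∀ x, ψ x ≤ C
  else ∀ lam : ℝ, 0 < lam →
    ∫⁻ x, ENNReal.ofReal (Real.exp (lam * ψ x ^ p.toReal)) ∂μ < ⊤

/-- A sequence of random elements `T n` defined on probability spaces `(Ω n, P n)`,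
taking values in a topological space `E`, satisfies a large deviation principle at
speed `n` with good rate function `I`. -/
def SatisfiesLDP {E : Type*} [TopologicalSpace E] {Ω : ℕ → Type*}
    [∀ n, MeasurableSpace (Ω n)] (P : ∀ n, Measure (Ω n)) (T : ∀ n, Ω n → E)
    (I : E → ℝ≥0∞) : Prop :=
  (∀ c : ℝ≥0∞, c ≠ ⊤ → IsCompact {x | I x ≤ c}) ∧
  ∀ F : Set E, MeasurableSet[borel E] F →
    (-(⨅ x ∈ interior F, (I x : EReal)) ≤
      Filter.atTop.liminf fun n : ℕ =>
        (((n : ℝ)⁻¹ : ℝ) : EReal) * ENNReal.log (P n {ω | T n ω ∈ F})) ∧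
    (Filter.atTop.limsup (fun n : ℕ =>
        (((n : ℝ)⁻¹ : ℝ) : EReal) * ENNReal.log (P n {ω | T n ω ∈ F})) ≤
      -(⨅ x ∈ closure F, (I x : EReal)))

end
/-- `𝔑_W(x) = ∫₀¹ |W(x,y)| dy`. -/
noncomputable def degFun (W : ℝ → ℝ → ℝ) : ℝ → ℝ := fun x => ∫ y, |W x y| ∂unif01


/-- Rooted recursive trees: `RTree m` has `m+1` vertices; each new vertex is attached as a leaf. -/
inductive RTree : ℕ → Type
  | nil : RTree 0
  | cons {m : ℕ} (t : RTree m) (p : Fin (m + 1)) : RTree (m + 1)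

namespace RTree

/-- Product of a kernel over the edges of a recursive tree. -/
noncomputable def prod {α : Type*} (K : α → α → ℝ) : {m : ℕ} → RTree m → (Fin (m + 1) → α) → ℝ
  | _, .nil, _ => 1
  | _, .cons t p, z => prod K t (Fin.init z) * K (z (Fin.last _)) (z p.castSucc)

theorem prod_comp {α β : Type*} (K : β → β → ℝ) (g : α → β) : {m : ℕ} → (t : RTree m) →
    (z : Fin (m + 1) → α) → t.prod K (g ∘ z) = t.prod (fun a b => K (g a) (g b)) z
  | _, .nil, _ => rfl
  | _, .cons t p, z => by
    simp only [prod]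
    rw [← prod_comp K g t]
    rfl

end RTree

theorem exists_rtree_aux : ∀ (m : ℕ) {V : Type} [Fintype V] [DecidableEq V] (G : SimpleGraph V)
    [DecidableRel G.Adj], Fintype.card V = m + 1 → G.IsTree →
    ∃ (t : RTree m) (e : Fin (m + 1) ≃ V), ∀ (f : V → V → ℝ) (hf : ∀ a b, f a b = f b a),
      ∏ s ∈ G.edgeFinset, Sym2.lift ⟨f, hf⟩ s = t.prod f e := by
  intro m
  induction m with
  | zero =>
    intro V _ _ G _ hc hG
    have : Subsingleton V := Fintype.card_le_one_iff_subsingleton.mp (by lia)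
    refine ⟨.nil, (Fintype.equivFinOfCardEq hc).symm, fun f hf => ?_⟩
    have : G.edgeFinset = ∅ := by
      ext s
      induction s using Sym2.ind with
      | h a b =>
        simp only [SimpleGraph.mem_edgeFinset, SimpleGraph.mem_edgeSet, Finset.notMem_empty, iff_false]
        intro h
        exact h.ne (Subsingleton.elim a b)
    rw [this]
    simp [RTree.prod]
  | succ m ih =>
    intro V _ _ G _ hc hG
    have : Nontrivial V := Fintype.one_lt_card_iff_nontrivial.mp (by lia)
    obtain ⟨l, hl⟩ := hG.exists_vert_degree_one_of_nontrivial
    obtain ⟨u, hu, huu⟩ := SimpleGraph.degree_eq_one_iff_existsUnique_adj.mp hl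
    have hcon := hG.connected.induce_compl_singleton_of_degree_eq_one hl
    have hac := hG.isAcyclic.induce {l}ᶜ
    have hcard : Fintype.card ↥({l}ᶜ : Set V) = m + 1 := by
      rw [Fintype.card_compl_set]
      simp [hc]
    obtain ⟨t, e, hte⟩ := ih (G.induce {l}ᶜ) hcard ⟨hcon, hac⟩
    have hul : u ∈ ({l}ᶜ : Set V) := by simpa using hu.ne'
    let g : Fin (m + 2) → V := Fin.snoc (α := fun _ => V) (fun i => (e i : V)) l
    have hg : Function.Bijective g := by
      rw [Fintype.bijective_iff_injective_and_card]
      refine ⟨?_, by simp [hc]⟩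
      intro i j
      refine Fin.lastCases ?_ (fun i => ?_) i <;> refine Fin.lastCases ?_ (fun j => ?_) j
      · simp
      · simp only [g, Fin.snoc_last, Fin.snoc_castSucc]
        intro h
        exact absurd h.symm (e j).2
      · simp only [g, Fin.snoc_last, Fin.snoc_castSucc]
        intro h
        exact absurd h (e i).2
      · simp only [g, Fin.snoc_castSucc]
        intro h
        rw [e.injective (Subtype.ext h)]
    refine ⟨.cons t (e.symm ⟨u, hul⟩), Equiv.ofBijective g hg, fun f hf => ?_⟩
    have hedge : G.edgeFinset = insert s(l, u) ((G.induce {l}ᶜ).edgeFinset.map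
        ⟨Sym2.map Subtype.val, Sym2.map.injective Subtype.val_injective⟩) := by
      ext s
      induction s using Sym2.ind with
      | h a b =>
        simp only [SimpleGraph.mem_edgeFinset, SimpleGraph.mem_edgeSet, Finset.mem_insert,
          Finset.mem_map, Function.Embedding.coeFn_mk]
        constructor
        · intro h
          by_cases ha : a = l
          · subst ha
            left
            rw [huu b h]
          by_cases hb : b = l
          · subst hb
            left
            rw [huu a h.symm, Sym2.eq_swap]
          right
          exact ⟨s(⟨a, ha⟩, ⟨b, hb⟩), by simpa using h, by simp⟩
        · rintro (h | ⟨s, hs, h⟩)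
          · rw [Sym2.eq_iff] at h
            rcases h with ⟨rfl, rfl⟩ | ⟨rfl, rfl⟩
            · exact hu
            · exact hu.symm
          · induction s using Sym2.ind with
            | h c d =>
              simp only [SimpleGraph.mem_edgeSet] at hs
              rw [Sym2.map_mk, Sym2.eq_iff] at h
              have hs' : G.Adj c d := by simpa using hs
              rcases h with ⟨rfl, rfl⟩ | ⟨rfl, rfl⟩
              · exact hs'
              · exact hs'.symm
    rw [hedge, Finset.prod_insert, Finset.prod_map]
    · have := hte (fun a b => f a b) (fun a b => hf a b)
      rw [RTree.prod, mul_comm]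
      congr 1
      · rw [← RTree.prod_comp f Subtype.val t] at this
        rw [show (Fin.init (⇑(Equiv.ofBijective g hg)) : Fin (m + 1) → V) = Subtype.val ∘ e from ?_]
        · rw [← this]
          refine Finset.prod_congr rfl fun s _ => ?_
          induction s using Sym2.ind with
          | h c d => simp
        · ext i
          simp [Fin.init, g]
      · simp [g]
    · simp only [Finset.mem_map, Function.Embedding.coeFn_mk, not_exists, not_and]
      intro s _ h
      induction s using Sym2.ind with
      | h c d =>
        rw [Sym2.map_mk, Sym2.eq_iff] at h
        rcases h with ⟨h, _⟩ | ⟨_, h⟩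
        · exact c.2 h
        · exact d.2 h

theorem exists_rtree {m : ℕ} (G : SimpleGraph (Fin (m + 1))) [DecidableRel G.Adj] (hG : G.IsTree) :
    ∃ (t : RTree m) (e : Fin (m + 1) ≃ Fin (m + 1)),
      ∀ {α : Type*} (K : α → α → ℝ) (_ : ∀ a b, K a b = K b a) (z : Fin (m + 1) → α),
        edgeProd G (fun a b => K (z a) (z b)) = t.prod K (z ∘ e) := by
  obtain ⟨t, e, h⟩ := exists_rtree_aux m G (by simp) hG
  refine ⟨t, e, fun K hK z => ?_⟩
  rw [RTree.prod_comp, ← h _ (fun a b => hK _ _), edgeProd]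
  refine Finset.prod_bij (fun p _ => s(p.1, p.2)) ?_ ?_ ?_ ?_
  · intro p hp
    simpa using (Finset.mem_filter.mp hp).2.1
  · intro p hp q hq h
    have hp := (Finset.mem_filter.mp hp).2.2
    have hq := (Finset.mem_filter.mp hq).2.2
    rw [Sym2.eq_iff] at h
    rcases h with ⟨h1, h2⟩ | ⟨h1, h2⟩
    · exact Prod.ext h1 h2
    · rw [h1, h2] at hp
      exact absurd hp hq.asymm
  · intro s hs
    induction s using Sym2.ind with
    | h a b =>
      have hab : G.Adj a b := by simpa using hs
      rcases lt_or_gt_of_ne hab.ne with h | h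
      · exact ⟨(a, b), by simp [hab, h], rfl⟩
      · exact ⟨(b, a), by simp [hab.symm, h], Sym2.eq_swap⟩
  · intro p _
    simp


section counting
variable {α : Type*} [MeasurableSpace α]

/-- A measurable kernel with row and column sums bounded by `M`. -/
structure KB (ν : Measure α) (K : α → α → ℝ) (M : ℝ) : Prop where
  meas : Measurable (Function.uncurry K)
  left : ∀ x, ∫⁻ y, ‖K y x‖ₑ ∂ν ≤ ENNReal.ofReal M
  right : ∀ x, ∫⁻ y, ‖K x y‖ₑ ∂ν ≤ ENNReal.ofReal M

/-- Cut-type closeness of two kernels (`L^∞ → L^1` operator norm). -/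
def CutB (ν : Measure α) (K K' : α → α → ℝ) (δ : ℝ) : Prop :=
  ∀ g : α → ℝ, Measurable g → (∀ x, |g x| ≤ 1) →
    ∫ x, |∫ y, K y x * g y ∂ν - ∫ y, K' y x * g y ∂ν| ∂ν ≤ δ

/-- Tree integral, defined recursively by integrating out leaves. -/
noncomputable def TI (ν : Measure α) (K : α → α → ℝ) :
    {m : ℕ} → RTree m → (Fin (m + 1) → α → ℝ) → ℝ
  | _, .nil, f => ∫ x, f 0 x ∂ν
  | _, .cons t p, f => TI ν K t (Function.update (fun a => f a.castSucc) p
      (fun x => f p.castSucc x * ∫ y, K y x * f (Fin.last _) y ∂ν))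

theorem RTree.measurable_prod {K : α → α → ℝ} (hK : Measurable (Function.uncurry K)) :
    ∀ {m : ℕ} (t : RTree m), Measurable (t.prod K)
  | _, .nil => measurable_const
  | _, .cons t p => by
    refine Measurable.mul ((RTree.measurable_prod hK t).comp ?_) ?_
    · exact measurable_pi_lambda _ fun a => measurable_pi_apply _
    · have h : Measurable fun z : Fin (_ + 1) → α => (z (Fin.last _), z p.castSucc) :=
        (measurable_pi_apply _).prodMk (measurable_pi_apply _)
      exact hK.comp h

theorem mp_snoc (ν : Measure α) [SigmaFinite ν] (m : ℕ) :
    MeasurePreserving (fun q : (Fin (m + 1) → α) × α => (Fin.snoc q.1 q.2 : Fin (m + 2) → α))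
      ((Measure.pi fun _ => ν).prod ν) (Measure.pi fun _ => ν) := by
  have h1 := (measurePreserving_piFinSuccAbove (α := fun _ : Fin (m + 2) => α)
    (fun _ => ν) (Fin.last _)).symm
  have h2 := h1.comp (Measure.measurePreserving_swap
    (μ := (Measure.pi fun _ : Fin (m + 1) => ν)) (ν := ν))
  convert h2 using 1
  ext q a
  simp only [Function.comp, MeasurableEquiv.piFinSuccAbove, MeasurableEquiv.symm_mk,
    MeasurableEquiv.coe_mk, Fin.insertNthEquiv]
  simp [Fin.insertNth_last']

theorem me_snoc (m : ℕ) :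
    Measurable (fun q : (Fin (m + 1) → α) × α => (Fin.snoc q.1 q.2 : Fin (m + 2) → α)) := by
  refine measurable_pi_lambda _ fun a => ?_
  refine Fin.lastCases ?_ (fun a => ?_) a
  · simpa using measurable_snd
  · simp only [Fin.snoc_castSucc]
    exact (measurable_pi_apply a).comp measurable_fst

theorem lintegral_snoc (ν : Measure α) [SigmaFinite ν] {m : ℕ} {F : (Fin (m + 2) → α) → ℝ≥0∞}
    (hF : Measurable F) :
    ∫⁻ z, F z ∂(Measure.pi fun _ => ν) =
      ∫⁻ y, ∫⁻ x, F (Fin.snoc (α := fun _ => α) y x) ∂ν ∂(Measure.pi fun _ => ν) := by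
  rw [← (mp_snoc ν m).lintegral_comp hF]
  exact lintegral_prod _ (hF.comp (me_snoc m)).aemeasurable

theorem integral_snoc (ν : Measure α) [SigmaFinite ν] {m : ℕ} {F : (Fin (m + 2) → α) → ℝ}
    (hF : Integrable F (Measure.pi fun _ => ν)) :
    ∫ z, F z ∂(Measure.pi fun _ => ν) =
      ∫ y, ∫ x, F (Fin.snoc (α := fun _ => α) y x) ∂ν ∂(Measure.pi fun _ => ν) := by
  have hmp := mp_snoc ν m
  rw [← hmp.map_eq, integral_map hmp.measurable.aemeasurable
    (by rw [hmp.map_eq]; exact hF.aestronglyMeasurable)]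
  exact integral_prod _ (hmp.integrable_comp_of_integrable hF)

theorem RTree.lintegral_prod_le {ν : Measure α} [IsProbabilityMeasure ν] {K : α → α → ℝ} {M : ℝ}
    (hK : KB ν K M) : ∀ {m : ℕ} (t : RTree m),
    ∫⁻ z, ‖t.prod K z‖ₑ ∂(Measure.pi fun _ => ν) ≤ ENNReal.ofReal M ^ m
  | _, .nil => by simp [RTree.prod]
  | m + 1, .cons t p => by
    rw [lintegral_snoc ν ((RTree.measurable_prod hK.meas _).enorm)]
    calc _ = ∫⁻ y, ‖t.prod K y‖ₑ * ∫⁻ x, ‖K x (y p)‖ₑ ∂ν ∂(Measure.pi fun _ => ν) := by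
            refine lintegral_congr fun y => ?_
            rw [← lintegral_const_mul']
            · refine lintegral_congr fun x => ?_
              simp [RTree.prod, enorm_mul]
            · simp
      _ ≤ ∫⁻ y, ‖t.prod K y‖ₑ * ENNReal.ofReal M ∂(Measure.pi fun _ => ν) := by
            gcongr
            exact hK.left _
      _ ≤ _ := by
            rw [lintegral_mul_const _ ((RTree.measurable_prod hK.meas t).enorm), pow_succ]
            gcongr
            exact RTree.lintegral_prod_le hK t

theorem RTree.integrable_prod {ν : Measure α} [IsProbabilityMeasure ν] {K : α → α → ℝ} {M : ℝ}
    (hK : KB ν K M) {m : ℕ} (t : RTree m) :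
    Integrable (t.prod K) (Measure.pi fun _ => ν) :=
  ⟨(RTree.measurable_prod hK.meas t).aestronglyMeasurable,
    (RTree.lintegral_prod_le hK t).trans_lt (by finiteness)⟩

theorem RTree.integrable_mul_prod {ν : Measure α} [IsProbabilityMeasure ν] {K : α → α → ℝ} {M : ℝ}
    (hK : KB ν K M) {m : ℕ} (t : RTree m) {F : (Fin (m + 1) → α) → ℝ} (hF : Measurable F)
    {C : ℝ} (hC : ∀ z, |F z| ≤ C) :
    Integrable (fun z => F z * t.prod K z) (Measure.pi fun _ => ν) :=
  (RTree.integrable_prod hK t).bdd_mul hF.aestronglyMeasurable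
    (Eventually.of_forall hC)

theorem RTree.integral_norm_prod_le {ν : Measure α} [IsProbabilityMeasure ν] {K : α → α → ℝ} {M : ℝ}
    (hM : 0 ≤ M) (hK : KB ν K M) {m : ℕ} (t : RTree m) :
    ∫ z, |t.prod K z| ∂(Measure.pi fun _ => ν) ≤ M ^ m := by
  have := RTree.lintegral_prod_le hK t
  simp_rw [← Real.norm_eq_abs]
  rw [integral_norm_eq_lintegral_enorm (RTree.integrable_prod hK t).1]
  refine ENNReal.toReal_le_of_le_ofReal (by positivity) ?_
  rwa [ENNReal.ofReal_pow hM]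

theorem RTree.abs_integral_le {ν : Measure α} [IsProbabilityMeasure ν] {K : α → α → ℝ} {M : ℝ}
    (hM : 0 ≤ M) (hK : KB ν K M) {m : ℕ} (t : RTree m) {F : (Fin (m + 1) → α) → ℝ}
    (hF : Measurable F) {C : ℝ} (hC : ∀ z, |F z| ≤ C) :
    |∫ z, F z * t.prod K z ∂(Measure.pi fun _ => ν)| ≤ C * M ^ m := by
  by_cases hn : Nonempty (Fin (m + 1) → α)
  · have hC0 : 0 ≤ C := (abs_nonneg _).trans (hC hn.some)
    calc _ ≤ ∫ z, |F z * t.prod K z| ∂(Measure.pi fun _ => ν) := abs_integral_le_integral_abs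
      _ ≤ ∫ z, C * |t.prod K z| ∂(Measure.pi fun _ => ν) := by
        refine integral_mono (RTree.integrable_mul_prod hK t hF hC).abs
          ((RTree.integrable_prod hK t).abs.const_mul C) fun z => ?_
        simp only [abs_mul]
        gcongr
        exact hC z
      _ ≤ _ := by
        rw [integral_const_mul]
        gcongr
        exact RTree.integral_norm_prod_le hM hK t
  · exfalso
    have : IsEmpty (Fin (m + 1) → α) := not_nonempty_iff.mp hn
    have h1 := measure_univ (μ := Measure.pi fun _ : Fin (m + 1) => ν)
    rw [Set.univ_eq_empty_iff.mpr this, measure_empty] at h1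
    exact zero_ne_one h1

/-! ### operator bounds -/

theorem KB.integrable_left {ν : Measure α} {K : α → α → ℝ} {M : ℝ} (hK : KB ν K M) (x : α) :
    Integrable (fun y => K y x) ν :=
  ⟨(hK.meas.comp (measurable_id.prodMk measurable_const)).aestronglyMeasurable,
    (hK.left x).trans_lt (by finiteness)⟩

theorem KB.integrable_op {ν : Measure α} {K : α → α → ℝ} {M : ℝ} (hK : KB ν K M) (x : α)
    {f : α → ℝ} (hf : Measurable f) {C : ℝ} (hC : ∀ x, |f x| ≤ C) :
    Integrable (fun y => K y x * f y) ν := by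
  have h := (hK.integrable_left x).bdd_mul hf.aestronglyMeasurable (Eventually.of_forall hC)
  exact h.congr (Eventually.of_forall fun y => mul_comm _ _)

theorem KB.measurable_op {ν : Measure α} [SFinite ν] {K : α → α → ℝ} {M : ℝ} (hK : KB ν K M)
    {f : α → ℝ} (hf : Measurable f) : Measurable (fun x => ∫ y, K y x * f y ∂ν) := by
  have h : Measurable (Function.uncurry fun x y => K y x * f y) :=
    (hK.meas.comp measurable_swap).mul (hf.comp measurable_snd)
  exact (h.stronglyMeasurable.integral_prod_right' (ν := ν)).measurable

theorem KB.abs_op_le {ν : Measure α} {K : α → α → ℝ} {M : ℝ} (hM : 0 ≤ M) (hK : KB ν K M) (x : α)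
    {f : α → ℝ} {C : ℝ} (hC0 : 0 ≤ C) (hf : Measurable f) (hC : ∀ x, |f x| ≤ C) :
    |∫ y, K y x * f y ∂ν| ≤ C * M := by
  calc _ ≤ ∫ y, |K y x * f y| ∂ν := abs_integral_le_integral_abs
    _ ≤ ∫ y, C * |K y x| ∂ν := by
      refine integral_mono (hK.integrable_op x hf hC).abs ((hK.integrable_left x).abs.const_mul C)
        fun y => ?_
      simp only [abs_mul]
      rw [mul_comm]
      gcongr
      exact hC y
    _ ≤ _ := by
      rw [integral_const_mul]
      gcongr
      simp_rw [← Real.norm_eq_abs]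
      rw [integral_norm_eq_lintegral_enorm (hK.integrable_left x).1]
      exact ENNReal.toReal_le_of_le_ofReal hM (hK.left x)

theorem KB.integral_abs_op_le {ν : Measure α} [IsFiniteMeasure ν] {K : α → α → ℝ} {M : ℝ}
    (hM : 0 ≤ M)
    (hK : KB ν K M) {f : α → ℝ} {C : ℝ} (hf : Measurable f) (hC : ∀ x, |f x| ≤ C) :
    ∫ x, |∫ y, K y x * f y ∂ν| ∂ν ≤ M * ∫ y, |f y| ∂ν := by
  have hfi : Integrable f ν := Integrable.of_bound hf.aestronglyMeasurable C
    (Eventually.of_forall hC)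
  have hmu : Measurable (Function.uncurry fun x y => ‖K y x * f y‖ₑ) :=
    ((hK.meas.comp measurable_swap).mul (hf.comp measurable_snd)).enorm
  have key : ∫⁻ x, ‖∫ y, K y x * f y ∂ν‖ₑ ∂ν ≤ ENNReal.ofReal M * ∫⁻ y, ‖f y‖ₑ ∂ν := by
    calc _ ≤ ∫⁻ x, ∫⁻ y, ‖K y x * f y‖ₑ ∂ν ∂ν := by
          gcongr
          exact enorm_integral_le_lintegral_enorm _
      _ = ∫⁻ y, ∫⁻ x, ‖K y x * f y‖ₑ ∂ν ∂ν := lintegral_lintegral_swap hmu.aemeasurable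
      _ ≤ ∫⁻ y, ENNReal.ofReal M * ‖f y‖ₑ ∂ν := by
          gcongr with y
          simp_rw [enorm_mul]
          rw [lintegral_mul_const' _ _ (by simp)]
          gcongr
          exact hK.right y
      _ = _ := lintegral_const_mul _ hf.enorm
  simp_rw [← Real.norm_eq_abs]
  rw [integral_norm_eq_lintegral_enorm (hK.measurable_op hf).aestronglyMeasurable,
    integral_norm_eq_lintegral_enorm hf.aestronglyMeasurable]
  refine (ENNReal.toReal_mono ?_ key).trans ?_
  · have := hfi.2
    rw [hasFiniteIntegral_iff_enorm] at this
    finiteness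
  · rw [ENNReal.toReal_mul, ENNReal.toReal_ofReal hM]

/-! ### representation as a tree integral -/

theorem RTree.integral_eq_TI {ν : Measure α} [IsProbabilityMeasure ν] {K : α → α → ℝ} {M : ℝ}
    (hM : 0 ≤ M) (hK : KB ν K M) : ∀ {m : ℕ} (t : RTree m) (f : Fin (m + 1) → α → ℝ)
    (C : ℝ) (_ : 1 ≤ C)
    (_ : ∀ a, Measurable (f a)) (_ : ∀ a x, |f a x| ≤ C),
    ∫ z, (∏ a, f a (z a)) * t.prod K z ∂(Measure.pi fun _ => ν) = TI ν K t f
  | _, .nil, f, C, hC1, hf, hC => by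
    simp only [RTree.prod, TI, mul_one]
    have : ∀ z : Fin (0 + 1) → α, ∏ a, f a (z a) = f 0 (z 0) := fun z => by
      exact Fin.prod_univ_one _
    simp_rw [this]
    exact integral_comp_eval (μ := fun _ : Fin 1 => ν) (i := 0) (f := f 0) (hf 0).aestronglyMeasurable
  | m + 1, .cons t p, f, C, hC1, hf, hC => by
    have hC0 : 0 ≤ C := zero_le_one.trans hC1
    have hintg : Integrable (fun z : Fin (m + 2) → α => (∏ a, f a (z a)) * (RTree.cons t p).prod K z)
        (Measure.pi fun _ => ν) := by
      refine RTree.integrable_mul_prod hK _ (C := C ^ (m + 2)) ?_ ?_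
      · exact Finset.measurable_prod _ fun a _ => (hf a).comp (measurable_pi_apply a)
      · intro z
        rw [Finset.abs_prod]
        refine (Finset.prod_le_prod (fun _ _ => abs_nonneg _) (fun a _ => hC a _)).trans ?_
        simp
    rw [integral_snoc ν hintg, TI]
    rw [← RTree.integral_eq_TI hM hK t _ (C * (C * M) + C) (by nlinarith [mul_nonneg hC0 hM])]
    · refine integral_congr_ae (Eventually.of_forall fun y => ?_)
      simp only [RTree.prod]
      calc _ = ∫ x, ((∏ a : Fin (m + 1), f a.castSucc (y a)) * t.prod K y) *
            (K x (y p) * f (Fin.last _) x) ∂ν := by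
              refine integral_congr_ae (Eventually.of_forall fun x => ?_)
              simp only [Fin.prod_univ_castSucc (n := m + 1), Fin.snoc_castSucc, Fin.snoc_last,
                Fin.init_snoc]
              ring
        _ = _ := by
          rw [integral_const_mul]
          have : ∏ a, Function.update (fun a : Fin (m + 1) => f a.castSucc) p
              (fun x => f p.castSucc x * ∫ y, K y x * f (Fin.last _) y ∂ν) a (y a) =
              (∏ a : Fin (m + 1), f a.castSucc (y a)) *
                ∫ x, K x (y p) * f (Fin.last _) x ∂ν := by
            rw [← Finset.mul_prod_erase _ _ (Finset.mem_univ p),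
              ← Finset.mul_prod_erase (Finset.univ) (fun a : Fin (m + 1) => f a.castSucc (y a))
                (Finset.mem_univ p)]
            rw [Finset.prod_congr rfl (g := fun a : Fin (m + 1) => f a.castSucc (y a))]
            · simp only [Function.update_self]
              ring
            · intro a ha
              rw [Function.update_of_ne (Finset.ne_of_mem_erase ha)]
          rw [this]
          ring
    · intro a
      by_cases h : a = p
      · subst h
        simp only [Function.update_self]
        exact (hf _).mul (hK.measurable_op (hf _))
      · rw [Function.update_of_ne h]
        exact hf _
    · intro a x
      by_cases h : a = p
      · subst h
        simp only [Function.update_self, abs_mul]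
        have h1 := hC a.castSucc x
        have h2 := hK.abs_op_le hM x hC0 (hf (Fin.last _)) (hC (Fin.last _))
        calc _ ≤ C * (C * M) := by gcongr
          _ ≤ _ := by linarith
      · rw [Function.update_of_ne h]
        refine (hC _ _).trans ?_
        have : 0 ≤ C * (C * M) := by positivity
        linarith

/-! ### the counting lemma -/

theorem CutB.scale {ν : Measure α} {K K' : α → α → ℝ} {δ : ℝ} (h : CutB ν K K' δ)
    {g : α → ℝ} (hg : Measurable g) {C : ℝ} (hC1 : 1 ≤ C) (hC : ∀ x, |g x| ≤ C) :
    ∫ x, |∫ y, K y x * g y ∂ν - ∫ y, K' y x * g y ∂ν| ∂ν ≤ C * δ := by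
  have hC0 : 0 < C := by linarith
  have := h (fun x => g x / C) (hg.div_const C) (fun x => by
    rw [abs_div, abs_of_pos hC0, div_le_one hC0]; exact hC x)
  have e : ∀ x, |∫ y, K y x * g y ∂ν - ∫ y, K' y x * g y ∂ν| =
      C * |∫ y, K y x * (g y / C) ∂ν - ∫ y, K' y x * (g y / C) ∂ν| := fun x => by
    simp_rw [← mul_div_assoc]
    rw [integral_div, integral_div, ← sub_div, abs_div, abs_of_pos hC0]
    field_simp
  simp_rw [e]
  rw [integral_const_mul]
  gcongr

theorem integrable_bdd {ν : Measure α} [IsFiniteMeasure ν] {f : α → ℝ} {C : ℝ} (hf : Measurable f)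
    (hC : ∀ x, |f x| ≤ C) : Integrable f ν :=
  Integrable.of_bound hf.aestronglyMeasurable C (Eventually.of_forall hC)

theorem CutB.nonneg {ν : Measure α} {K K' : α → α → ℝ} {δ : ℝ} (h : CutB ν K K' δ) : 0 ≤ δ :=
  (integral_nonneg fun _ => abs_nonneg _).trans (h (fun _ => 0) measurable_const (by simp))

theorem op_diff {ν : Measure α} [IsProbabilityMeasure ν] {K K' : α → α → ℝ} {M δ C η : ℝ}
    (hM : 0 ≤ M) (hK : KB ν K M) (hK' : KB ν K' M) (hδ : CutB ν K K' δ) (hC1 : 1 ≤ C)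
    {f f' g g' : α → ℝ} (hf : Measurable f) (hf' : Measurable f') (hg : Measurable g)
    (hg' : Measurable g')
    (hfC : ∀ x, |f x| ≤ C) (hfC' : ∀ x, |f' x| ≤ C) (hgC : ∀ x, |g x| ≤ C) (hgC' : ∀ x, |g' x| ≤ C)
    (hff : ∫ x, |f x - f' x| ∂ν ≤ η) (hgg : ∫ x, |g x - g' x| ∂ν ≤ η) :
    ∫ x, |f x * ∫ y, K y x * g y ∂ν - f' x * ∫ y, K' y x * g' y ∂ν| ∂ν ≤
      (2 * C * M + C * C + 1) * (η + δ) := by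
  have hC0 : 0 ≤ C := by linarith
  have hδ0 := hδ.nonneg
  have hη0 : 0 ≤ η := (integral_nonneg fun _ => abs_nonneg _).trans hff
  have hd : ∀ x, |(g - g') x| ≤ C + C := fun x => by
    simp only [Pi.sub_apply]
    exact (abs_sub _ _).trans (add_le_add (hgC x) (hgC' x))
  have hgdm : Measurable (g - g') := hg.sub hg'
  have hm0 := hK.measurable_op hgdm
  have hm1 := hK.measurable_op hg'
  have hm2 := hK'.measurable_op hg'
  have i1 : Integrable (fun x => |∫ y, K y x * (g - g') y ∂ν|) ν :=
    (integrable_bdd hm0 (fun x => hK.abs_op_le hM x (by positivity) hgdm hd)).abs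
  have i2 : Integrable (fun x => |∫ y, K y x * g' y ∂ν - ∫ y, K' y x * g' y ∂ν|) ν :=
    ((integrable_bdd hm1 (fun x => hK.abs_op_le hM x hC0 hg' hgC')).sub
      (integrable_bdd hm2 (fun x => hK'.abs_op_le hM x hC0 hg' hgC'))).abs
  have i3 : Integrable (fun x => |f x - f' x|) ν :=
    ((integrable_bdd hf hfC).sub (integrable_bdd hf' hfC')).abs
  calc _ ≤ ∫ x, (C * |∫ y, K y x * (g - g') y ∂ν| +
        C * |∫ y, K y x * g' y ∂ν - ∫ y, K' y x * g' y ∂ν| + (C * M) * |f x - f' x|) ∂ν := by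
        refine integral_mono_of_nonneg (Eventually.of_forall fun _ => abs_nonneg _)
          (((i1.const_mul C).add (i2.const_mul C)).add (i3.const_mul _))
          (Eventually.of_forall fun x => ?_)
        simp only
        have e1 : ∫ y, K y x * (g - g') y ∂ν = ∫ y, K y x * g y ∂ν - ∫ y, K y x * g' y ∂ν := by
          rw [← integral_sub (hK.integrable_op x hg hgC) (hK.integrable_op x hg' hgC')]
          simp [mul_sub]
        have b := hK'.abs_op_le hM x hC0 hg' hgC'
        rw [e1]
        set A := ∫ y, K y x * g y ∂ν
        set B := ∫ y, K y x * g' y ∂ν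
        set D := ∫ y, K' y x * g' y ∂ν
        calc |f x * A - f' x * D| = |f x * (A - B) + f x * (B - D) + D * (f x - f' x)| := by
              congr 1; ring
          _ ≤ |f x * (A - B)| + |f x * (B - D)| + |D * (f x - f' x)| := abs_add_three _ _ _
          _ ≤ _ := by
            simp only [abs_mul]
            gcongr
            · exact hfC x
            · exact hfC x
    _ = C * ∫ x, |∫ y, K y x * (g - g') y ∂ν| ∂ν +
        C * ∫ x, |∫ y, K y x * g' y ∂ν - ∫ y, K' y x * g' y ∂ν| ∂ν +
          (C * M) * ∫ x, |f x - f' x| ∂ν := by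
        have i12 : Integrable (fun x => C * |∫ y, K y x * (g - g') y ∂ν| +
            C * |∫ y, K y x * g' y ∂ν - ∫ y, K' y x * g' y ∂ν|) ν :=
          (i1.const_mul C).add (i2.const_mul C)
        rw [integral_add i12 (i3.const_mul _),
          integral_add (i1.const_mul C) (i2.const_mul C), integral_const_mul, integral_const_mul,
          integral_const_mul]
    _ ≤ C * (M * η) + C * (C * δ) + (C * M) * η := by
        have := hK.integral_abs_op_le hM hgdm hd
        gcongr
        · exact this.trans (by gcongr; exact hgg)
        · exact hδ.scale hg' hC1 hgC'
    _ ≤ _ := by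
      have h1 : 0 ≤ C * M * δ := by positivity
      have h2 : 0 ≤ C * C * η := by positivity
      nlinarith

theorem TI_diff {M : ℝ} (hM : 0 ≤ M) : ∀ {m : ℕ} (t : RTree m) (C : ℝ), 1 ≤ C →
    ∃ L : ℝ, 0 ≤ L ∧ ∀ (ν : Measure α) [IsProbabilityMeasure ν] (K K' : α → α → ℝ) (δ η : ℝ)
      (f f' : Fin (m + 1) → α → ℝ), KB ν K M → KB ν K' M → CutB ν K K' δ →
      (∀ a, Measurable (f a)) → (∀ a, Measurable (f' a)) →
      (∀ a x, |f a x| ≤ C) → (∀ a x, |f' a x| ≤ C) →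
      (∀ a, ∫ x, |f a x - f' a x| ∂ν ≤ η) →
      |TI ν K t f - TI ν K' t f'| ≤ L * (η + δ)
  | _, .nil, C, hC1 => by
    refine ⟨1, zero_le_one, fun ν _ K K' δ η f f' hK hK' hδ hf hf' hC hC' hη => ?_⟩
    simp only [TI]
    rw [← integral_sub (integrable_bdd (hf 0) (hC 0)) (integrable_bdd (hf' 0) (hC' 0))]
    refine abs_integral_le_integral_abs.trans ?_
    have := hη 0
    have := hδ.nonneg
    linarith
  | m + 1, .cons t p, C, hC1 => by
    have hC0 : 0 ≤ C := by linarith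
    have hCM : 0 ≤ C * (C * M) := by positivity
    obtain ⟨L, hL0, hL⟩ := TI_diff hM t (C * (C * M) + C) (by linarith)
    refine ⟨L * (2 * C * M + C * C + 2), by positivity,
      fun ν _ K K' δ η f f' hK hK' hδ hf hf' hC hC' hη => ?_⟩
    have hδ0 := hδ.nonneg
    have hη0 : 0 ≤ η := (integral_nonneg fun _ => abs_nonneg _).trans (hη 0)
    simp only [TI]
    have ineq : (1 : ℝ) ≤ 2 * C * M + C * C + 1 := by
      have : 0 ≤ 2 * C * M := by positivity
      nlinarith
    refine (hL ν K K' δ ((2 * C * M + C * C + 1) * (η + δ)) _ _ hK hK' hδ ?_ ?_ ?_ ?_ ?_).trans ?_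
    · intro a
      by_cases h : a = p
      · subst h
        simp only [Function.update_self]
        exact (hf _).mul (hK.measurable_op (hf _))
      · rw [Function.update_of_ne h]
        exact hf _
    · intro a
      by_cases h : a = p
      · subst h
        simp only [Function.update_self]
        exact (hf' _).mul (hK'.measurable_op (hf' _))
      · rw [Function.update_of_ne h]
        exact hf' _
    · intro a x
      by_cases h : a = p
      · subst h
        simp only [Function.update_self, abs_mul]
        have h1 := hC a.castSucc x
        have h2 := hK.abs_op_le hM x hC0 (hf (Fin.last _)) (hC (Fin.last _))
        calc _ ≤ C * (C * M) := by gcongr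
          _ ≤ _ := by linarith
      · rw [Function.update_of_ne h]
        refine (hC _ _).trans ?_
        linarith
    · intro a x
      by_cases h : a = p
      · subst h
        simp only [Function.update_self, abs_mul]
        have h1 := hC' a.castSucc x
        have h2 := hK'.abs_op_le hM x hC0 (hf' (Fin.last _)) (hC' (Fin.last _))
        calc _ ≤ C * (C * M) := by gcongr
          _ ≤ _ := by linarith
      · rw [Function.update_of_ne h]
        refine (hC' _ _).trans ?_
        linarith
    · intro a
      by_cases h : a = p
      · subst h
        simp only [Function.update_self]
        exact op_diff hM hK hK' hδ hC1 (hf _) (hf' _) (hf _) (hf' _) (hC _) (hC' _) (hC _) (hC' _)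
          (hη _) (hη _)
      · rw [Function.update_of_ne h, Function.update_of_ne h]
        refine (hη _).trans ?_
        nlinarith
    · have h : (2 * C * M + C * C + 1) * (η + δ) + δ ≤ (2 * C * M + C * C + 2) * (η + δ) := by
        nlinarith
      calc _ ≤ L * ((2 * C * M + C * C + 2) * (η + δ)) := mul_le_mul_of_nonneg_left h hL0
        _ = _ := by ring

end counting


section DV
variable {α : Type*} [MeasurableSpace α]

theorem KLdiv_eq_klDiv (ν ρ : Measure α) [IsProbabilityMeasure ν] [IsProbabilityMeasure ρ] :
    KLdiv ν ρ = InformationTheory.klDiv ν ρ := by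
  rw [KLdiv, InformationTheory.klDiv_def]
  simp

/-- Variational (Gibbs) bound on relative entropy. -/
def GB (ν ρ : Measure α) (c : ℝ) : Prop :=
  ∀ h : α → ℝ, Measurable h → (∃ C, ∀ x, |h x| ≤ C) →
    ∫ x, h x ∂ν ≤ Real.log (∫ x, Real.exp (h x) ∂ρ) + c

theorem integrable_exp_bdd {ρ : Measure α} [IsFiniteMeasure ρ] {h : α → ℝ} {C : ℝ}
    (hm : Measurable h) (hC : ∀ x, |h x| ≤ C) : Integrable (fun x => Real.exp (h x)) ρ := by
  refine integrable_bdd (C := Real.exp C) hm.exp fun x => ?_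
  rw [abs_of_pos (Real.exp_pos _)]
  exact Real.exp_le_exp.mpr ((le_abs_self _).trans (hC x))

theorem integral_exp_bdd_pos {ρ : Measure α} [IsProbabilityMeasure ρ] {h : α → ℝ} {C : ℝ}
    (hm : Measurable h) (hC : ∀ x, |h x| ≤ C) :
    Real.exp (-C) ≤ ∫ x, Real.exp (h x) ∂ρ := by
  have h1 : ∫ x, Real.exp (-C) ∂ρ ≤ ∫ x, Real.exp (h x) ∂ρ := by
    refine integral_mono (integrable_const _) (integrable_exp_bdd hm hC) fun x => ?_
    exact Real.exp_le_exp.mpr (neg_le_of_abs_le (hC x))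
  simpa using h1

theorem integral_exp_bdd_le {ρ : Measure α} [IsProbabilityMeasure ρ] {h : α → ℝ} {C : ℝ}
    (hm : Measurable h) (hC : ∀ x, |h x| ≤ C) :
    ∫ x, Real.exp (h x) ∂ρ ≤ Real.exp C := by
  have h1 : ∫ x, Real.exp (h x) ∂ρ ≤ ∫ x, Real.exp C ∂ρ := by
    refine integral_mono (integrable_exp_bdd hm hC) (integrable_const _) fun x => ?_
    exact Real.exp_le_exp.mpr ((le_abs_self _).trans (hC x))
  simpa using h1

theorem gibbs_restrict {ν ρ : Measure α} [IsProbabilityMeasure ν] [IsProbabilityMeasure ρ]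
    (hac : ν ≪ ρ) (hintg : Integrable (llr ν ρ) ν) {A : Set α} (hA : MeasurableSet A)
    {p : ℝ} (hp : 0 < p) (hνA : ν.real A = p) (hρA : ρ.real A = p) :
    GB ((ENNReal.ofReal p⁻¹) • ν.restrict A) ((ENNReal.ofReal p⁻¹) • ρ.restrict A)
      (p⁻¹ * ∫ x in A, llr ν ρ x ∂ν) := by
  rintro h hm ⟨C, hC⟩
  rw [integral_smul_measure, integral_smul_measure, ENNReal.toReal_ofReal (by positivity)]
  simp only [smul_eq_mul]
  set Z := ∫ x in A, Real.exp (h x) ∂ρ with hZ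
  have hZpos : 0 < Z := by
    have h1 : ∫ x in A, Real.exp (-C) ∂ρ ≤ Z := by
      refine integral_mono (integrable_const _) (integrable_exp_bdd hm hC) fun x => ?_
      exact Real.exp_le_exp.mpr (neg_le_of_abs_le (hC x))
    have h2 : ∫ x in A, Real.exp (-C) ∂ρ = p * Real.exp (-C) := by
      simp [hρA]
    have := Real.exp_pos (-C)
    nlinarith
  set s := Real.log (p⁻¹ * Z) with hs
  -- key inequality
  have hexp : ∫⁻ x in A, ENNReal.ofReal (Real.exp (h x - llr ν ρ x)) ∂ν ≤
      ∫⁻ x in A, ENNReal.ofReal (Real.exp (h x)) ∂ρ := by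
    have e1 : ∫⁻ x in A, ENNReal.ofReal (Real.exp (h x - llr ν ρ x)) ∂ν =
        ∫⁻ x in A, ρ.rnDeriv ν x * ENNReal.ofReal (Real.exp (h x)) ∂ν := by
      refine lintegral_congr_ae (ae_restrict_of_ae ?_)
      filter_upwards [exp_neg_llr hac, Measure.rnDeriv_lt_top ρ ν] with x hx hx2
      rw [sub_eq_add_neg, Real.exp_add, hx, mul_comm, ENNReal.ofReal_mul ENNReal.toReal_nonneg,
        ENNReal.ofReal_toReal hx2.ne]
    rw [e1]
    calc _ = ∫⁻ x in A, ENNReal.ofReal (Real.exp (h x)) ∂(ν.withDensity (ρ.rnDeriv ν)) := by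
          rw [restrict_withDensity hA, lintegral_withDensity_eq_lintegral_mul _
            (Measure.measurable_rnDeriv _ _) (hm.exp.ennreal_ofReal)]
          rfl
      _ ≤ _ := lintegral_mono' (Measure.restrict_mono_measure
          (Measure.withDensity_rnDeriv_le _ _) _) le_rfl
  have hZe : ∫⁻ x in A, ENNReal.ofReal (Real.exp (h x)) ∂ρ = ENNReal.ofReal Z := by
    rw [hZ, ofReal_integral_eq_lintegral_ofReal (integrable_exp_bdd hm hC)]
    exact Eventually.of_forall fun x => (Real.exp_pos _).le
  have hmm : Measurable fun x => Real.exp (h x - llr ν ρ x) :=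
    (hm.sub (measurable_llr _ _)).exp
  have hI : Integrable (fun x => Real.exp (h x - llr ν ρ x)) (ν.restrict A) := by
    rw [← lintegral_ofReal_ne_top_iff_integrable hmm.aestronglyMeasurable
      (Eventually.of_forall fun x => (Real.exp_pos _).le)]
    exact (hexp.trans_lt (by rw [hZe]; finiteness)).ne
  have hIle : ∫ x in A, Real.exp (h x - llr ν ρ x) ∂ν ≤ Z := by
    rw [integral_eq_lintegral_of_nonneg_ae (Eventually.of_forall fun x => (Real.exp_pos _).le)
      hmm.aestronglyMeasurable]
    exact ENNReal.toReal_le_of_le_ofReal hZpos.le (hexp.trans hZe.le)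
  have hih : Integrable h (ν.restrict A) := integrable_bdd hm hC
  have hil : Integrable (llr ν ρ) (ν.restrict A) := hintg.restrict
  have hcomp : ∫ x in A, ((h x - llr ν ρ x) + (1 - s)) ∂ν ≤
      ∫ x in A, Real.exp (-s) * Real.exp (h x - llr ν ρ x) ∂ν := by
    refine integral_mono ((hih.sub hil).add (integrable_const _)) (hI.const_mul _) fun x => ?_
    simp only
    rw [← Real.exp_add]
    have := Real.add_one_le_exp (-s + (h x - llr ν ρ x))
    linarith
  have hl : ∫ x in A, ((h x - llr ν ρ x) + (1 - s)) ∂ν =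
      (∫ x in A, h x ∂ν - ∫ x in A, llr ν ρ x ∂ν) + p * (1 - s) := by
    have hd : Integrable (fun x => h x - llr ν ρ x) (ν.restrict A) := hih.sub hil
    rw [integral_add hd (integrable_const _), integral_sub hih hil]
    simp [hνA]
  rw [hl, integral_const_mul] at hcomp
  have hes : Real.exp (-s) = (p⁻¹ * Z)⁻¹ := by
    rw [Real.exp_neg, hs, Real.exp_log (by positivity)]
  have h3 : Real.exp (-s) * ∫ x in A, Real.exp (h x - llr ν ρ x) ∂ν ≤ p := by
    calc _ ≤ Real.exp (-s) * Z := by gcongr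
      _ = p := by rw [hes]; field_simp
  have h4 : ∫ x in A, h x ∂ν ≤ p * s + ∫ x in A, llr ν ρ x ∂ν := by linarith
  calc _ ≤ p⁻¹ * (p * s + ∫ x in A, llr ν ρ x ∂ν) := by gcongr
    _ = _ := by field_simp

theorem GB.of_KLdiv {ν ρ : Measure α} [IsProbabilityMeasure ν] [IsProbabilityMeasure ρ]
    (hk : KLdiv ν ρ ≠ ⊤) : GB ν ρ (KLdiv ν ρ).toReal := by
  rw [KLdiv] at hk ⊢
  split_ifs at hk ⊢ with h
  have := gibbs_restrict h.1 h.2 MeasurableSet.univ one_pos (by simp) (by simp)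
  simp only [inv_one, ENNReal.ofReal_one, one_smul, Measure.restrict_univ, one_mul] at this
  rw [ENNReal.toReal_ofReal]
  · exact this
  · have := this (fun _ => 0) measurable_const ⟨0, by simp⟩
    simpa using this
  · simp at hk

theorem GB.mono {ν ρ : Measure α} {c d : ℝ} (h : GB ν ρ c) (hcd : c ≤ d) : GB ν ρ d :=
  fun f hf hb => (h f hf hb).trans (by linarith)

theorem GB.map {β : Type*} [MeasurableSpace β] {ν ρ : Measure α} {c : ℝ} (h : GB ν ρ c)
    {f : α → β} (hf : Measurable f) : GB (ν.map f) (ρ.map f) c := by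
  rintro g hg ⟨C, hC⟩
  rw [integral_map hf.aemeasurable hg.aestronglyMeasurable,
    integral_map hf.aemeasurable hg.exp.aestronglyMeasurable]
  exact h (g ∘ f) (hg.comp hf) ⟨C, fun x => hC _⟩

theorem GB.prod {β : Type*} [MeasurableSpace β] {ν ρ : Measure α} {ν' ρ' : Measure β}
    [IsProbabilityMeasure ν] [IsProbabilityMeasure ρ] [IsProbabilityMeasure ν']
    [IsProbabilityMeasure ρ'] {c c' : ℝ} (h : GB ν ρ c) (h' : GB ν' ρ' c') :
    GB (ν.prod ν') (ρ.prod ρ') (c + c') := by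
  rintro f hf ⟨C, hC⟩
  have hfx : ∀ x, Measurable fun y => f (x, y) := fun x => hf.comp (measurable_const.prodMk
    measurable_id)
  set g : α → ℝ := fun x => Real.log (∫ y, Real.exp (f (x, y)) ∂ρ') with hg
  have hgm : Measurable g := by
    have : Measurable (fun x => ∫ y, Real.exp (f (x, y)) ∂ρ') :=
      (hf.exp.stronglyMeasurable.integral_prod_right' (ν := ρ')).measurable
    exact this.log
  have hpos : ∀ x, 0 < ∫ y, Real.exp (f (x, y)) ∂ρ' := fun x =>
    (Real.exp_pos _).trans_le (integral_exp_bdd_pos (hfx x) (fun y => hC (x, y)))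
  have hgC : ∀ x, |g x| ≤ C := fun x => by
    rw [abs_le]
    constructor
    · rw [← Real.log_exp (-C)]
      exact Real.log_le_log (Real.exp_pos _) (integral_exp_bdd_pos (hfx x) (fun y => hC (x, y)))
    · rw [← Real.log_exp C]
      exact Real.log_le_log (hpos x) (integral_exp_bdd_le (hfx x) (fun y => hC (x, y)))
  rw [integral_prod _ (integrable_bdd hf hC), integral_prod _ (integrable_exp_bdd hf hC)]
  calc ∫ x, ∫ y, f (x, y) ∂ν' ∂ν ≤ ∫ x, (g x + c') ∂ν := by
        refine integral_mono (integrable_bdd hf hC).integral_prod_left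
          ((integrable_bdd hgm hgC).add (integrable_const _)) fun x => ?_
        exact h' (fun y => f (x, y)) (hfx x) ⟨C, fun y => hC _⟩
    _ = ∫ x, g x ∂ν + c' := by
        rw [integral_add (integrable_bdd hgm hgC) (integrable_const _)]
        simp
    _ ≤ Real.log (∫ x, Real.exp (g x) ∂ρ) + c + c' := by
        gcongr
        exact h g hgm ⟨C, hgC⟩
    _ = _ := by
      simp only [hg]
      rw [add_assoc]
      congr 2
      refine integral_congr_ae (Eventually.of_forall fun x => ?_)
      simp only
      rw [Real.exp_log (hpos x)]

theorem GB.pi : ∀ {n : ℕ} (ν ρ : Fin n → Measure α) [∀ i, IsProbabilityMeasure (ν i)]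
    [∀ i, IsProbabilityMeasure (ρ i)] (c : Fin n → ℝ), (∀ i, GB (ν i) (ρ i) (c i)) →
    GB (Measure.pi ν) (Measure.pi ρ) (∑ i, c i)
  | 0, ν, ρ, _, _, c, h => by
    rintro f hf ⟨C, hC⟩
    have e : ∀ x : Fin 0 → α, f x = f default := fun x => by rw [Subsingleton.elim x default]
    simp_rw [e]
    simp
  | n + 1, ν, ρ, _, _, c, h => by
    have ih := GB.pi (fun i => ν (Fin.succAbove 0 i)) (fun i => ρ (Fin.succAbove 0 i))
      (fun i => c (Fin.succAbove 0 i)) (fun i => h _)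
    have h1 := (h 0).prod ih
    have m1 := (measurePreserving_piFinSuccAbove ν 0).symm
    have m2 := (measurePreserving_piFinSuccAbove ρ 0).symm
    have h2 := h1.map (MeasurableEquiv.piFinSuccAbove (fun _ => α) 0).symm.measurable
    rw [m1.map_eq, m2.map_eq] at h2
    rw [Fin.sum_univ_succ]
    simpa using h2

/-- Lower bound for probabilities from an entropy bound. -/
theorem GB.lower {ν ρ : Measure α} [IsProbabilityMeasure ν] [IsProbabilityMeasure ρ] {c : ℝ}
    (h : GB ν ρ c) {E : Set α} (hE : MeasurableSet E) (hEpos : 0 < ν.real E) :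
    0 < ρ.real E ∧ -(c + Real.log 2) ≤ ν.real E * Real.log (ρ.real E) := by
  have key : ∀ l : ℝ, l * ν.real E ≤ Real.log (1 + (Real.exp l - 1) * ρ.real E) + c := by
    intro l
    have := h (E.indicator fun _ => l) (measurable_const.indicator hE)
      ⟨|l|, fun x => by by_cases hx : x ∈ E <;> simp [hx]⟩
    rw [integral_indicator_const _ hE] at this
    have e : (fun x => Real.exp (E.indicator (fun _ => l) x)) =
        fun x => 1 + E.indicator (fun _ => Real.exp l - 1) x := by
      ext x
      by_cases hx : x ∈ E <;> simp [hx]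
    rw [e, integral_add (integrable_const _) ((integrable_const _).indicator hE),
      integral_indicator_const _ hE] at this
    simp only [smul_eq_mul, integral_const, probReal_univ, mul_one] at this
    rw [mul_comm l, mul_comm (Real.exp l - 1)]
    exact this
  have hpos : 0 < ρ.real E := by
    by_contra hcon
    have h0 : ρ.real E = 0 := le_antisymm (not_lt.mp hcon) measureReal_nonneg
    have := key ((c + 1) / ν.real E)
    rw [h0, div_mul_cancel₀ _ hEpos.ne'] at this
    simp at this
    linarith
  refine ⟨hpos, ?_⟩
  have := key (-Real.log (ρ.real E))
  rw [Real.exp_neg, Real.exp_log hpos] at this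
  have h2 : Real.log (1 + ((ρ.real E)⁻¹ - 1) * ρ.real E) ≤ Real.log 2 := by
    have e : 1 + ((ρ.real E)⁻¹ - 1) * ρ.real E = 2 - ρ.real E := by
      field_simp; ring
    rw [e]
    have : ρ.real E ≤ 1 := measureReal_le_one
    exact Real.log_le_log (by linarith) (by linarith)
  linarith [mul_comm (Real.log (ρ.real E)) (ν.real E)]

/-- Donsker-Varadhan, bounded measurable test functions. -/
theorem GB.KLdiv_le {ν ρ : Measure α} [IsProbabilityMeasure ν] [IsProbabilityMeasure ρ] {c : ℝ}
    (h : GB ν ρ c) : KLdiv ν ρ ≤ ENNReal.ofReal c := by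
  have hac : ν ≪ ρ := by
    refine Measure.AbsolutelyContinuous.mk fun B hB h0 => ?_
    by_contra hne
    have hp : 0 < ν.real B := by
      rw [measureReal_def]
      exact ENNReal.toReal_pos hne (measure_ne_top _ _)
    have := (h.lower hB hp).1
    simp [measureReal_def, h0] at this
  rw [KLdiv_eq_klDiv, InformationTheory.klDiv_eq_lintegral_klFun_of_ac hac]
  set g : α → ℝ := fun x => (ν.rnDeriv ρ x).toReal with hg
  have hgm : Measurable g := (Measure.measurable_rnDeriv _ _).ennreal_toReal
  have hg0 : ∀ x, 0 ≤ g x := fun x => ENNReal.toReal_nonneg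
  have hgi : Integrable g ρ := Measure.integrable_toReal_rnDeriv
  let hR : ℕ → ℝ → ℝ := fun k y => if y = 0 then -(k : ℝ) else max (-(k : ℝ)) (min k (Real.log y))
  have hRm : ∀ k, Measurable (hR k) := fun k =>
    Measurable.ite (measurableSet_singleton 0) measurable_const
      (measurable_const.max (measurable_const.min Real.measurable_log))
  have hRb : ∀ k y, |hR k y| ≤ k := fun k y => by
    have hk : (0 : ℝ) ≤ k := Nat.cast_nonneg k
    simp only [hR]
    split_ifs
    · simp
    · rw [abs_le]
      exact ⟨le_max_left _ _, max_le (by linarith) (min_le_left _ _)⟩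
  let F : ℕ → ℝ → ℝ := fun k y => y * hR k y - Real.exp (hR k y) + 1
  have hF0 : ∀ k y, 0 ≤ y → 0 ≤ F k y := by
    intro k y hy
    have hk : (0 : ℝ) ≤ k := Nat.cast_nonneg k
    have h1 : Real.exp (hR k y) * (1 - hR k y) ≤ 1 := by
      have := Real.add_one_le_exp (-hR k y)
      calc _ ≤ Real.exp (hR k y) * Real.exp (-hR k y) := by gcongr; linarith
        _ = 1 := by rw [← Real.exp_add]; simp
    have h2 : 0 ≤ (y - Real.exp (hR k y)) * hR k y := by
      rcases eq_or_lt_of_le hy with hy0 | hy0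
      · have e : hR k y = -k := by simp [hR, ← hy0]
        rw [← hy0] at e ⊢
        rw [e]
        have := Real.exp_pos (-(k : ℝ))
        nlinarith
      · have e : hR k y = max (-(k : ℝ)) (min k (Real.log y)) := by simp [hR, hy0.ne']
        rcases lt_trichotomy (hR k y) 0 with hs | hs | hs
        · refine mul_nonneg_of_nonpos_of_nonpos ?_ hs.le
          have : Real.log y ≤ hR k y := by
            rw [e] at hs ⊢
            have h3 := (max_lt_iff.mp hs).2
            rcases min_lt_iff.mp h3 with h | h
            · linarith
            · rw [min_eq_right (by linarith)]
              exact le_max_right _ _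
          have := Real.exp_le_exp.mpr this
          rw [Real.exp_log hy0] at this
          linarith
        · rw [hs]; simp
        · refine mul_nonneg ?_ hs.le
          have : hR k y ≤ Real.log y := by
            rw [e] at hs ⊢
            rcases lt_max_iff.mp hs with h | h
            · linarith
            · rw [max_eq_right (by linarith)]
              exact min_le_right _ _
          have := Real.exp_le_exp.mpr this
          rw [Real.exp_log hy0] at this
          linarith
    simp only [F]
    nlinarith
  have hFlim : ∀ y, 0 ≤ y → Tendsto (fun k => F k y) atTop (nhds (InformationTheory.klFun y)) := by
    intro y hy
    rcases eq_or_lt_of_le hy with hy0 | hy0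
    · rw [← hy0]
      simp only [F, hR, InformationTheory.klFun_zero]
      have h1 : Tendsto (fun k : ℕ => Real.exp (-(k : ℝ))) atTop (nhds 0) :=
        Real.tendsto_exp_neg_atTop_nhds_zero.comp tendsto_natCast_atTop_atTop
      have := (h1.const_sub 0).add_const 1
      simpa using this
    · refine tendsto_const_nhds.congr' ?_
      filter_upwards [eventually_ge_atTop ⌈|Real.log y|⌉₊] with k hk
      have hk' : |Real.log y| ≤ k := Nat.ceil_le.mp hk
      have h1 := abs_le.mp hk'
      have e : hR k y = Real.log y := by
        simp only [hR, hy0.ne', if_false]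
        rw [min_eq_right h1.2, max_eq_right h1.1]
      simp only [F, e, Real.exp_log hy0, InformationTheory.klFun_apply]
      ring
  have hFm : ∀ k, Measurable (F k) := fun k =>
    ((measurable_id.mul (hRm k)).sub (hRm k).exp).add_const 1
  have hFint : ∀ k, ∫⁻ x, ENNReal.ofReal (F k (g x)) ∂ρ ≤ ENNReal.ofReal c := by
    intro k
    have i1 : Integrable (fun x => g x * hR k (g x)) ρ := by
      have := hgi.bdd_mul (c := (k : ℝ)) ((hRm k).comp hgm).aestronglyMeasurable
        (Eventually.of_forall fun x => hRb k (g x))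
      exact this.congr (Eventually.of_forall fun x => mul_comm _ _)
    have i2 : Integrable (fun x => Real.exp (hR k (g x))) ρ :=
      integrable_exp_bdd ((hRm k).comp hgm) (fun x => hRb k (g x))
    have i3 : Integrable (fun x => g x * hR k (g x) - Real.exp (hR k (g x))) ρ := i1.sub i2
    have i4 : Integrable (fun x => F k (g x)) ρ := i3.add (integrable_const _)
    rw [← ofReal_integral_eq_lintegral_ofReal i4 (Eventually.of_forall fun x => hF0 k _ (hg0 x))]
    refine ENNReal.ofReal_le_ofReal ?_
    simp only [F]
    rw [integral_add i3 (integrable_const _), integral_sub i1 i2]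
    have e : ∫ x, g x * hR k (g x) ∂ρ = ∫ x, hR k (g x) ∂ν :=
      integral_rnDeriv_smul (f := fun x => hR k (g x)) hac
    rw [e]
    have h5 := h (fun x => hR k (g x)) ((hRm k).comp hgm) ⟨k, fun x => hRb k _⟩
    have h6 : 0 < ∫ x, Real.exp (hR k (g x)) ∂ρ :=
      (Real.exp_pos _).trans_le (integral_exp_bdd_pos ((hRm k).comp hgm) (fun x => hRb k (g x)))
    have h7 := Real.log_le_sub_one_of_pos h6
    simp only [integral_const, probReal_univ, smul_eq_mul, mul_one]
    linarith
  calc ∫⁻ x, ENNReal.ofReal (InformationTheory.klFun (g x)) ∂ρ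
      = ∫⁻ x, liminf (fun k => ENNReal.ofReal (F k (g x))) atTop ∂ρ := by
        refine lintegral_congr fun x => ?_
        exact ((ENNReal.continuous_ofReal.tendsto _).comp (hFlim _ (hg0 x))).liminf_eq.symm
    _ ≤ liminf (fun k => ∫⁻ x, ENNReal.ofReal (F k (g x)) ∂ρ) atTop :=
        lintegral_liminf_le fun k => ((hFm k).comp hgm).ennreal_ofReal
    _ ≤ _ := by
        refine liminf_le_of_le (by isBoundedDefault) fun b hb => ?_
        obtain ⟨k, hk⟩ := hb.exists
        exact hk.trans (hFint k)

/-- It suffices to test with bounded continuous functions. -/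
theorem GB.of_continuous {α : Type*} [TopologicalSpace α] [NormalSpace α] [MeasurableSpace α]
    [BorelSpace α] {ν ρ : Measure α} [IsProbabilityMeasure ν] [IsProbabilityMeasure ρ]
    [(ν + ρ).WeaklyRegular] {c : ℝ}
    (h : ∀ h : α → ℝ, Continuous h → (∃ C, ∀ x, |h x| ≤ C) →
      ∫ x, h x ∂ν ≤ Real.log (∫ x, Real.exp (h x) ∂ρ) + c) : GB ν ρ c := by
  rintro f hf ⟨C, hC⟩
  -- it suffices to prove the bound up to a continuous error
  set Z := ∫ x, Real.exp (f x) ∂ρ with hZ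
  have hZpos : 0 < Z := (Real.exp_pos _).trans_le (integral_exp_bdd_pos hf hC)
  have hstep : ∀ ε > 0, ∫ x, f x ∂ν ≤ Real.log (Z + Real.exp C * ε) + c + ε := by
    intro ε hε
    have hfi : Integrable f (ν + ρ) := integrable_bdd hf hC
    obtain ⟨g0, hg0, -⟩ := hfi.exists_boundedContinuous_integral_sub_le hε
    set g : α → ℝ := fun x => max (-C) (min C (g0 x)) with hg
    have hgc : Continuous g := continuous_const.max (continuous_const.min g0.continuous)
    have hgm := hgc.measurable
    have hgC : ∀ x, |g x| ≤ C := fun x => by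
      have : 0 ≤ C := (abs_nonneg _).trans (hC x)
      rw [abs_le]
      exact ⟨le_max_left _ _, max_le (by linarith) (min_le_left _ _)⟩
    have hcl : ∀ x, |f x - g x| ≤ ‖f x - g0 x‖ := fun x => by
      have h1 := abs_le.mp (hC x)
      have e : f x = max (-C) (min C (f x)) := by rw [min_eq_right h1.2, max_eq_right h1.1]
      rw [Real.norm_eq_abs]
      conv_lhs => rw [e]
      refine (abs_max_sub_max_le_max _ _ _ _).trans ?_
      simp only [sub_self, abs_zero, abs_nonneg, sup_of_le_right]
      refine (abs_min_sub_min_le_max _ _ _ _).trans ?_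
      simp
    have hd : Integrable (fun x => |f x - g x|) (ν + ρ) :=
      ((integrable_bdd hf hC).sub (integrable_bdd hgm hgC)).abs
    have hdν : Integrable (fun x => |f x - g x|) ν :=
      ((integrable_bdd hf hC).sub (integrable_bdd hgm hgC)).abs
    have hdρ : Integrable (fun x => |f x - g x|) ρ :=
      ((integrable_bdd hf hC).sub (integrable_bdd hgm hgC)).abs
    have hsum : ∫ x, |f x - g x| ∂ν + ∫ x, |f x - g x| ∂ρ ≤ ε := by
      rw [← integral_add_measure hdν hdρ]
      refine (integral_mono hd ?_ hcl).trans hg0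
      exact (hfi.sub (integrable_bdd (C := ‖g0‖) g0.continuous.measurable
        (fun x => g0.norm_coe_le_norm x))).norm
    have n1 : 0 ≤ ∫ x, |f x - g x| ∂ν := integral_nonneg fun _ => abs_nonneg _
    have n2 : 0 ≤ ∫ x, |f x - g x| ∂ρ := integral_nonneg fun _ => abs_nonneg _
    have h1 : ∫ x, f x ∂ν ≤ ∫ x, g x ∂ν + ε := by
      have : ∫ x, f x ∂ν - ∫ x, g x ∂ν ≤ ∫ x, |f x - g x| ∂ν := by
        rw [← integral_sub (integrable_bdd hf hC) (integrable_bdd hgm hgC)]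
        exact (le_abs_self _).trans abs_integral_le_integral_abs
      linarith
    have h2 : ∫ x, Real.exp (g x) ∂ρ ≤ Z + Real.exp C * ε := by
      have : ∫ x, Real.exp (g x) ∂ρ ≤ ∫ x, (Real.exp (f x) + Real.exp C * |f x - g x|) ∂ρ := by
        refine integral_mono (integrable_exp_bdd hgm hgC)
          ((integrable_exp_bdd hf hC).add (hdρ.const_mul _)) fun x => ?_
        simp only
        have a1 := Real.add_one_le_exp (f x - g x)
        have a2 : Real.exp (g x) * Real.exp (f x - g x) = Real.exp (f x) := by
          rw [← Real.exp_add]; ring_nf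
        have a3 : Real.exp (g x) ≤ Real.exp C :=
          Real.exp_le_exp.mpr ((le_abs_self _).trans (hgC x))
        have a4 : Real.exp (g x) * (f x - g x + 1) ≤ Real.exp (f x) := by
          rw [← a2]; gcongr
        have a5 : -(f x - g x) ≤ |f x - g x| := neg_le_abs _
        have a6 := Real.exp_pos (g x)
        have a7 : Real.exp (g x) * |f x - g x| ≤ Real.exp C * |f x - g x| := by gcongr
        nlinarith
      rw [integral_add (integrable_exp_bdd hf hC) (hdρ.const_mul _), integral_const_mul] at this
      refine this.trans ?_
      gcongr
      linarith
    have h3 := h g hgc ⟨C, hgC⟩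
    have h4 : Real.log (∫ x, Real.exp (g x) ∂ρ) ≤ Real.log (Z + Real.exp C * ε) :=
      Real.log_le_log ((Real.exp_pos _).trans_le (integral_exp_bdd_pos hgm hgC)) h2
    linarith
  have hlim : Tendsto (fun ε : ℝ => Real.log (Z + Real.exp C * ε) + c + ε) (nhdsWithin 0 (Ioi 0))
      (nhds (Real.log (Z + Real.exp C * 0) + c + 0)) := by
    refine Tendsto.mono_left ?_ nhdsWithin_le_nhds
    refine (Tendsto.add_const _ ?_).add tendsto_id
    refine Tendsto.log ?_ (by simpa using hZpos.ne')
    exact (tendsto_id.const_mul _).const_add _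
  have := ge_of_tendsto hlim (eventually_nhdsWithin_of_forall hstep)
  simpa using this

end DV


section AL
variable {X : Type*} [MetricSpace X] [CompactSpace X] [MeasurableSpace X] [BorelSpace X]

/-- `τ` partitions `[0,1]` into `n` cells of equal mass. -/
structure Good {n : ℕ} (τ : ℝ → Fin n) : Prop where
  meas : Measurable τ
  mass : ∀ i, unif01 (τ ⁻¹' {i}) = ENNReal.ofReal ((n : ℝ)⁻¹)

/-- The empirical measure. -/
noncomputable def emp {X : Type*} [MeasurableSpace X] {n : ℕ} (τ : ℝ → Fin n) (x : Fin n → X) : Measure (ℝ × X) :=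
  unif01.map (fun a => (a, x (τ a)))

theorem emp_meas {n : ℕ} {τ : ℝ → Fin n} (hτ : Measurable τ) (x : Fin n → X) :
    Measurable (fun a => (a, x (τ a))) :=
  measurable_id.prodMk ((measurable_of_finite x).comp hτ)

theorem emp_inTM {n : ℕ} {τ : ℝ → Fin n} (hτ : Measurable τ) (x : Fin n → X) :
    inTM (emp τ x) := by
  refine ⟨Measure.isProbabilityMeasure_map (emp_meas hτ x).aemeasurable, ?_⟩
  rw [emp, Measure.map_map measurable_fst (emp_meas hτ x)]
  exact Measure.map_id

theorem Good.pos {n : ℕ} {τ : ℝ → Fin n} (_ : Good τ) : 0 < (n : ℝ) := by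
  have := (τ 0).pos
  exact_mod_cast this

theorem Good.real {n : ℕ} {τ : ℝ → Fin n} (h : Good τ) (i : Fin n) :
    unif01.real (τ ⁻¹' {i}) = (n : ℝ)⁻¹ := by
  rw [measureReal_def, h.mass, ENNReal.toReal_ofReal]
  have := h.pos
  positivity

theorem Good.ms {n : ℕ} {τ : ℝ → Fin n} (h : Good τ) (i : Fin n) :
    MeasurableSet (τ ⁻¹' {i}) := h.meas (measurableSet_singleton i)

theorem Good.integral_sum {β : Type*} [MeasurableSpace β] {ν : Measure β} {n : ℕ} {τ : β → Fin n}
    (h : Measurable τ)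
    (F : Fin n → β → ℝ) (hF : ∀ i, Integrable (F i) ν) :
    ∫ a, F (τ a) a ∂ν = ∑ i, ∫ a in τ ⁻¹' {i}, F i a ∂ν := by
  have e : ∀ a, F (τ a) a = ∑ i, (τ ⁻¹' {i}).indicator (F i) a := fun a => by
    rw [Finset.sum_eq_single (τ a)]
    · simp
    · intro b _ hb
      exact indicator_of_notMem (by simpa using fun h => hb h.symm) _
    · simp
  have hm : ∀ i, MeasurableSet (τ ⁻¹' {i}) := fun i => h (measurableSet_singleton i)
  simp_rw [e]
  rw [integral_finset_sum _ fun i _ => (hF i).indicator (hm i)]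
  exact Finset.sum_congr rfl fun i _ => integral_indicator (hm i)

/-- Cell average of a test function. -/
noncomputable def cellG {X : Type*} {n : ℕ} (τ : ℝ → Fin n) (h : ℝ × X → ℝ) (i : Fin n) (y : X) : ℝ :=
  (n : ℝ) * ∫ a in τ ⁻¹' {i}, h (a, y) ∂unif01

theorem cellG_meas {n : ℕ} {τ : ℝ → Fin n} {h : ℝ × X → ℝ} (hh : Measurable h) (i : Fin n) :
    Measurable (cellG τ h i) := by
  refine Measurable.const_mul ?_ _
  exact (hh.stronglyMeasurable.integral_prod_left' (μ := unif01.restrict (τ ⁻¹' {i}))).measurable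

theorem slice_meas {h : ℝ × X → ℝ} (hh : Measurable h) (y : X) : Measurable fun a => h (a, y) :=
  hh.comp (measurable_id.prodMk measurable_const)

theorem cellG_bdd {n : ℕ} {τ : ℝ → Fin n} (hτ : Good τ) {h : ℝ × X → ℝ} {C : ℝ}
    (hC : ∀ z, |h z| ≤ C) (i : Fin n) (y : X) : |cellG τ h i y| ≤ C := by
  have hn := hτ.pos
  rw [cellG, abs_mul, abs_of_pos hn]
  have : ‖∫ a in τ ⁻¹' {i}, h (a, y) ∂unif01‖ ≤ C * (unif01.restrict (τ ⁻¹' {i})).real univ :=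
    norm_integral_le_of_norm_le_const (Eventually.of_forall fun a => hC _)
  rw [measureReal_restrict_apply_univ, hτ.real] at this
  calc _ ≤ (n : ℝ) * (C * (n : ℝ)⁻¹) := by gcongr; exact this
    _ = C := by field_simp

theorem integral_emp {n : ℕ} {τ : ℝ → Fin n} (hτ : Good τ) {h : ℝ × X → ℝ} (hh : Measurable h)
    {C : ℝ} (hC : ∀ z, |h z| ≤ C) (x : Fin n → X) :
    ∫ z, h z ∂(emp τ x) = (n : ℝ)⁻¹ * ∑ i, cellG τ h i (x i) := by
  have hn := hτ.pos
  rw [emp, integral_map (emp_meas hτ.meas x).aemeasurable hh.aestronglyMeasurable]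
  rw [Good.integral_sum hτ.meas (fun i a => h (a, x i))
    (fun i => integrable_bdd (slice_meas hh _) (fun a => hC _))]
  simp only [cellG]
  rw [← Finset.mul_sum, inv_mul_cancel_left₀ hn.ne']

/-- Exponential moment bound. -/
theorem exp_moment {n : ℕ} {τ : ℝ → Fin n} (hτ : Good τ) (μ : Measure X) [IsProbabilityMeasure μ]
    {h : ℝ × X → ℝ} (hh : Measurable h)
    {C : ℝ} (hC : ∀ z, |h z| ≤ C) :
    ∫ x, Real.exp (n * ∫ z, h z ∂(emp τ x)) ∂(Measure.pi fun _ : Fin n => μ) ≤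
      (∫ z, Real.exp (h z) ∂(unif01.prod μ)) ^ n := by
  have hn := hτ.pos
  set Z := ∫ z, Real.exp (h z) ∂(unif01.prod μ) with hZ
  have hZpos : 0 < Z := (Real.exp_pos _).trans_le (integral_exp_bdd_pos hh hC)
  have e1 : ∀ x : Fin n → X, Real.exp (n * ∫ z, h z ∂(emp τ x)) =
      ∏ i, Real.exp (cellG τ h i (x i)) := fun x => by
    rw [integral_emp hτ hh hC, mul_inv_cancel_left₀ hn.ne', Real.exp_sum]
  simp_rw [e1]
  rw [integral_fintype_prod_eq_prod (𝕜 := ℝ) (f := fun i y => Real.exp (cellG τ h i y))]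
  set z : Fin n → ℝ := fun i => n * ∫ a in τ ⁻¹' {i}, ∫ y, Real.exp (h (a, y)) ∂μ ∂unif01 with hz
  have hexpb : ∀ z, |Real.exp (h z)| ≤ Real.exp C := fun z => by
    rw [abs_of_pos (Real.exp_pos _)]
    exact Real.exp_le_exp.mpr ((le_abs_self _).trans (hC z))
  have hJ : ∀ i, ∫ y, Real.exp (cellG τ h i y) ∂μ ≤ z i := by
    intro i
    have h1 : ∀ y, Real.exp (cellG τ h i y) ≤ cellG τ (fun z => Real.exp (h z)) i y := by
      intro y
      haveI : IsProbabilityMeasure ((ENNReal.ofReal (n : ℝ)) • unif01.restrict (τ ⁻¹' {i})) := ⟨by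
        rw [Measure.smul_apply, Measure.restrict_apply_univ, hτ.mass, smul_eq_mul,
          ← ENNReal.ofReal_mul hn.le, mul_inv_cancel₀ hn.ne', ENNReal.ofReal_one]⟩
      have := ConvexOn.map_integral_le (μ := (ENNReal.ofReal (n : ℝ)) • unif01.restrict (τ ⁻¹' {i}))
        (g := Real.exp) (s := univ) (f := fun a => h (a, y)) convexOn_exp Real.continuous_exp.continuousOn
        isClosed_univ (by simp) (integrable_bdd (slice_meas hh y) (fun a => hC _))
        (integrable_exp_bdd (slice_meas hh y) (fun a => hC _))
      simp only [integral_smul_measure, ENNReal.toReal_ofReal hn.le, smul_eq_mul] at this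
      exact this
    calc _ ≤ ∫ y, cellG τ (fun z => Real.exp (h z)) i y ∂μ := by
          refine integral_mono (integrable_exp_bdd (cellG_meas hh i) (cellG_bdd hτ hC i))
            (integrable_bdd (cellG_meas hh.exp i) (cellG_bdd hτ hexpb i)) h1
      _ = _ := by
        simp only [cellG, hz]
        rw [integral_const_mul]
        congr 1
        rw [integral_integral_swap]
        exact integrable_bdd (hh.exp.comp measurable_swap) (fun z => hexpb _)
  have hsum : ∑ i, z i = n * Z := by
    simp only [hz]
    rw [← Finset.mul_sum]
    congr 1
    rw [hZ, integral_prod _ (integrable_exp_bdd hh hC)]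
    rw [← Good.integral_sum hτ.meas (fun _ a => ∫ y, Real.exp (h (a, y)) ∂μ)]
    intro i
    exact (integrable_exp_bdd hh hC).integral_prod_left
  calc ∏ i, ∫ y, Real.exp (cellG τ h i y) ∂μ ≤ ∏ i, (Z * Real.exp (z i / Z - 1)) := by
        refine Finset.prod_le_prod (fun i _ => integral_nonneg fun _ => (Real.exp_pos _).le)
          fun i _ => (hJ i).trans ?_
        have := Real.add_one_le_exp (z i / Z - 1)
        have h2 : z i = Z * (z i / Z) := by field_simp
        calc z i = Z * (z i / Z) := h2
          _ ≤ _ := by gcongr; linarith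
    _ = Z ^ n * Real.exp (∑ i, (z i / Z - 1)) := by
        rw [Finset.prod_mul_distrib, Real.exp_sum]; simp
    _ = Z ^ n := by
        have : ∑ i, (z i / Z - 1) = 0 := by
          rw [Finset.sum_sub_distrib, ← Finset.sum_div, hsum]
          field_simp
          simp
        rw [this]; simp

/-- Chernoff-type bound. -/
theorem chernoff {n : ℕ} {τ : ℝ → Fin n} (hτ : Good τ) (μ : Measure X) [IsProbabilityMeasure μ]
    {h : ℝ × X → ℝ} (hh : Measurable h)
    {C : ℝ} (hC : ∀ z, |h z| ≤ C) (c : ℝ) :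
    (Measure.pi fun _ : Fin n => μ) {x | Real.log (∫ z, Real.exp (h z) ∂(unif01.prod μ)) + c
      ≤ ∫ z, h z ∂(emp τ x)} ≤ ENNReal.ofReal (Real.exp (-(n * c))) := by
  have hn := hτ.pos
  set Z := ∫ z, Real.exp (h z) ∂(unif01.prod μ) with hZ
  have hZpos : 0 < Z := (Real.exp_pos _).trans_le (integral_exp_bdd_pos hh hC)
  set P := Measure.pi fun _ : Fin n => μ
  have hm : Measurable fun x : Fin n → X => n * ∫ z, h z ∂(emp τ x) := by
    simp_rw [integral_emp hτ hh hC]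
    refine Measurable.const_mul (Measurable.const_mul ?_ _) _
    exact Finset.measurable_sum _ fun i _ => (cellG_meas hh i).comp (measurable_pi_apply i)
  have hb : ∀ x : Fin n → X, |n * ∫ z, h z ∂(emp τ x)| ≤ n * C := fun x => by
    haveI := (emp_inTM hτ.meas x).1
    rw [abs_mul, abs_of_pos hn]
    gcongr
    have := norm_integral_le_of_norm_le_const (μ := emp τ x) (f := h) (Eventually.of_forall hC)
    simpa using this
  have hi : Integrable (fun x => Real.exp (n * ∫ z, h z ∂(emp τ x))) P := integrable_exp_bdd hm hb
  have h1 := mul_meas_ge_le_integral_of_nonneg (μ := P)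
    (Eventually.of_forall fun x => (Real.exp_pos (n * ∫ z, h z ∂(emp τ x))).le) hi
    (Real.exp (n * (Real.log Z + c)))
  have h2 := exp_moment hτ μ hh hC
  have hset : {x | Real.log Z + c ≤ ∫ z, h z ∂(emp τ x)} =
      {x | Real.exp (n * (Real.log Z + c)) ≤ Real.exp (n * ∫ z, h z ∂(emp τ x))} := by
    ext x
    simp only [mem_setOf_eq, Real.exp_le_exp]
    exact (mul_le_mul_iff_right₀ hn).symm
  rw [hset]
  set p := P.real {x | Real.exp (n * (Real.log Z + c)) ≤ Real.exp (n * ∫ z, h z ∂(emp τ x))} with hp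
  have h3 : Real.exp (n * (Real.log Z + c)) * p ≤ Z ^ n := h1.trans h2
  have h4 : Real.exp (n * (Real.log Z + c)) = Z ^ n * Real.exp (n * c) := by
    rw [mul_add, Real.exp_add, Real.exp_nat_mul, Real.exp_log hZpos]
  rw [h4] at h3
  have h5 : p ≤ Real.exp (-(n * c)) := by
    rw [Real.exp_neg]
    have a := pow_pos hZpos n
    have b := Real.exp_pos (n * c)
    rw [← one_div, le_div_iff₀ b]
    have : Z ^ n * (p * Real.exp (n * c)) ≤ Z ^ n * 1 := by linarith
    exact le_of_mul_le_mul_left this a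
  rw [← ENNReal.ofReal_toReal (measure_ne_top P _)]
  exact ENNReal.ofReal_le_ofReal h5

end AL


section AM
variable {X : Type*} [MetricSpace X] [CompactSpace X] [MeasurableSpace X] [BorelSpace X]

/-- `𝒯ℳ` as a set of probability measures. -/
def TMset (X : Type*) [MeasurableSpace X] : Set (ProbabilityMeasure (ℝ × X)) :=
  {ν | inTM (ν : Measure (ℝ × X))}

theorem TMset_closed : IsClosed (TMset X) := by
  have h1 : Continuous fun ν : ProbabilityMeasure (ℝ × X) => ν.map
      (continuous_fst.aemeasurable (μ := (ν : Measure (ℝ × X)))) :=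
    ProbabilityMeasure.continuous_map continuous_fst
  have h2 : TMset X = (fun ν : ProbabilityMeasure (ℝ × X) => ν.map
      (continuous_fst.aemeasurable (μ := (ν : Measure (ℝ × X))))) ⁻¹'
      {(⟨unif01, inferInstance⟩ : ProbabilityMeasure ℝ)} := by
    ext ν
    simp only [TMset, inTM, mem_preimage, mem_singleton_iff, mem_setOf_eq]
    constructor
    · exact fun h => ProbabilityMeasure.toMeasure_injective h.2
    · exact fun h => ⟨ν.2, congrArg (fun p : ProbabilityMeasure ℝ => (p : Measure ℝ)) h⟩
  rw [h2]
  exact isClosed_singleton.preimage h1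

theorem inTM_ae {ν : Measure (ℝ × X)} (h : inTM ν) : ∀ᵐ z ∂ν, z.1 ∈ Icc (0 : ℝ) 1 := by
  have h1 : ∀ᵐ a ∂unif01, a ∈ Icc (0 : ℝ) 1 := ae_restrict_mem measurableSet_Icc
  rw [← h.2] at h1
  exact ae_of_ae_map measurable_fst.aemeasurable h1

theorem TMset_compact : IsCompact (TMset X) := by
  let e : Icc (0 : ℝ) 1 × X → ℝ × X := fun z => (z.1, z.2)
  have he : Continuous e := by fun_prop
  let p : ℝ × X → Icc (0 : ℝ) 1 × X := fun z => (projIcc 0 1 zero_le_one z.1, z.2)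
  have hp : Continuous p := by
    exact (continuous_projIcc.comp continuous_fst).prodMk continuous_snd
  have h1 : Continuous fun ν : ProbabilityMeasure (Icc (0 : ℝ) 1 × X) => ν.map
      (he.aemeasurable (μ := (ν : Measure _))) := ProbabilityMeasure.continuous_map he
  refine (isCompact_range h1).of_isClosed_subset TMset_closed ?_
  intro ν hν
  refine ⟨ν.map hp.aemeasurable, ?_⟩
  apply ProbabilityMeasure.toMeasure_injective
  change Measure.map e (Measure.map p (ν : Measure _)) = ν
  rw [Measure.map_map he.measurable hp.measurable]
  conv_rhs => rw [← Measure.map_id (μ := (ν : Measure (ℝ × X)))]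
  refine Measure.map_congr ?_
  filter_upwards [inTM_ae hν] with z hz
  simp only [Function.comp, e, p, id]
  rw [projIcc_of_mem _ hz]

theorem continuous_int {h : ℝ × X → ℝ} (hh : Continuous h) {C : ℝ} (hC : ∀ z, |h z| ≤ C) :
    Continuous fun ν : ProbabilityMeasure (ℝ × X) => ∫ z, h z ∂(ν : Measure (ℝ × X)) := by
  rw [continuous_iff_continuousAt]
  intro ν
  have h1 := ProbabilityMeasure.tendsto_iff_forall_integral_tendsto.mp (tendsto_id (x := nhds ν))
  exact h1 (BoundedContinuousFunction.ofNormedAddCommGroup h hh C hC)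

/-- Uniform approximability on `𝒯ℳ` by polynomials in integrals. -/
def PolyApprox {X : Type*} [TopologicalSpace X] [MeasurableSpace X] (T : Measure (ℝ × X) → ℝ) : Prop :=
  ∀ ε > 0, ∃ (N k : ℕ) (g : Fin N → Fin k → ℝ × X → ℝ) (C : ℝ),
    (∀ l a, Continuous (g l a)) ∧ (∀ l a z, |g l a z| ≤ C) ∧
    ∀ ν, inTM ν → |T ν - ∑ l, ∏ a, ∫ z, g l a z ∂ν| ≤ ε

theorem PolyApprox.continuousOn {T : Measure (ℝ × X) → ℝ} (hT : PolyApprox T) :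
    ContinuousOn (fun ν : ProbabilityMeasure (ℝ × X) => T ν) (TMset X) := by
  refine continuousOn_of_uniform_approx_of_continuousOn fun u hu => ?_
  obtain ⟨ε, hε, hu⟩ := Metric.mem_uniformity_dist.mp hu
  obtain ⟨N, k, g, C, hg, hC, hap⟩ := hT (ε / 2) (by positivity)
  refine ⟨fun ν => ∑ l, ∏ a, ∫ z, g l a z ∂(ν : Measure (ℝ × X)), ?_, ?_⟩
  · refine Continuous.continuousOn ?_
    exact continuous_finset_sum _ fun l _ => continuous_finset_prod _ fun a _ =>
      continuous_int (hg l a) (hC l a)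
  · intro ν hν
    refine hu ?_
    rw [Real.dist_eq]
    exact (hap _ hν).trans_lt (by linarith)

variable (μ : Measure X) [IsProbabilityMeasure μ]

/-- DV test. -/
theorem exists_test {ν : Measure (ℝ × X)} [IsProbabilityMeasure ν] {c : ℝ}
    (h : ENNReal.ofReal c < KLdiv ν (unif01.prod μ)) :
    ∃ h : ℝ × X → ℝ, Continuous h ∧ (∃ C, ∀ x, |h x| ≤ C) ∧
      Real.log (∫ x, Real.exp (h x) ∂(unif01.prod μ)) + c < ∫ x, h x ∂ν := by
  by_contra hcon
  push Not at hcon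
  have : GB ν (unif01.prod μ) c := GB.of_continuous hcon
  exact absurd this.KLdiv_le (not_le.mpr h)

theorem KLset_compact (c : ℝ≥0∞) (hc : c ≠ ⊤) :
    IsCompact {ν : ProbabilityMeasure (ℝ × X) | inTM (ν : Measure (ℝ × X)) ∧
      KLdiv (ν : Measure (ℝ × X)) (unif01.prod μ) ≤ c} := by
  refine TMset_compact.of_isClosed_subset ?_ (fun ν h => h.1)
  have e : {ν : ProbabilityMeasure (ℝ × X) | inTM (ν : Measure (ℝ × X)) ∧
      KLdiv (ν : Measure (ℝ × X)) (unif01.prod μ) ≤ c} = TMset X ∩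
      ⋂ (h : ℝ × X → ℝ) (_ : Continuous h) (_ : ∃ C, ∀ x, |h x| ≤ C),
        {ν : ProbabilityMeasure (ℝ × X) | ∫ x, h x ∂(ν : Measure (ℝ × X)) ≤
          Real.log (∫ x, Real.exp (h x) ∂(unif01.prod μ)) + c.toReal} := by
    ext ν
    simp only [mem_setOf_eq, mem_inter_iff, mem_iInter]
    constructor
    · rintro ⟨h1, h2⟩
      refine ⟨h1, fun h hh hb => ?_⟩
      have h3 := (GB.of_KLdiv (h2.trans_lt hc.lt_top).ne) h hh.measurable hb
      exact h3.trans (by gcongr)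
    · rintro ⟨h1, h2⟩
      refine ⟨h1, ?_⟩
      have : GB (ν : Measure (ℝ × X)) (unif01.prod μ) c.toReal := GB.of_continuous h2
      have := this.KLdiv_le
      rwa [ENNReal.ofReal_toReal hc] at this
  rw [e]
  refine TMset_closed.inter (isClosed_iInter fun h => isClosed_iInter fun hh =>
    isClosed_iInter fun hb => ?_)
  obtain ⟨C, hC⟩ := hb
  exact isClosed_le (continuous_int hh hC) continuous_const

/-- The abstract rate function. -/
noncomputable def rateT (T : Measure (ℝ × X) → ℝ) (t : ℝ) : ℝ≥0∞ :=
  ⨅ ν : {ν : Measure (ℝ × X) // inTM ν ∧ KLdiv ν (unif01.prod μ) ≠ ⊤ ∧ T ν = t},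
    KLdiv ν.1 (unif01.prod μ)

theorem rateT_good {T : Measure (ℝ × X) → ℝ} (hT : PolyApprox T) (c : ℝ≥0∞) (hc : c ≠ ⊤) :
    IsCompact {t | rateT μ T t ≤ c} := by
  let K : ℝ≥0∞ → Set (ProbabilityMeasure (ℝ × X)) := fun d =>
    {ν : ProbabilityMeasure (ℝ × X) | inTM (ν : Measure (ℝ × X)) ∧
      KLdiv (ν : Measure (ℝ × X)) (unif01.prod μ) ≤ d}
  have hK : ∀ d, d ≠ ⊤ → IsCompact (Set.image (fun ν : ProbabilityMeasure (ℝ × X) => T ν) (K d)) :=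
    fun d hd => (KLset_compact μ d hd).image_of_continuousOn
      (hT.continuousOn.mono fun ν h => h.1)
  have e : {t | rateT μ T t ≤ c} = ⋂ d ∈ Ioo c ⊤,
      (Set.image (fun ν : ProbabilityMeasure (ℝ × X) => T ν) (K d)) := by
    ext t
    simp only [mem_setOf_eq, mem_iInter]
    constructor
    · intro h d hd
      have h1 : rateT μ T t < d := h.trans_lt hd.1
      obtain ⟨ν, hν⟩ := iInf_lt_iff.mp h1
      exact ⟨⟨ν.1, ν.2.1.1⟩, ⟨ν.2.1, hν.le⟩, ν.2.2.2⟩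
    · intro h
      refine le_of_forall_gt_imp_ge_of_dense fun d hd => ?_
      rcases eq_or_ne d ⊤ with rfl | hd'
      · exact le_top
      obtain ⟨ν, hν, hνt⟩ := h d ⟨hd, hd'.lt_top⟩
      exact (iInf_le _ (⟨ν, hν.1, (hν.2.trans_lt hd'.lt_top).ne, hνt⟩ :
        {ν : Measure (ℝ × X) // inTM ν ∧ KLdiv ν (unif01.prod μ) ≠ ⊤ ∧ T ν = t})).trans hν.2
  have hc1 : c < c + 1 := ENNReal.lt_add_right hc one_ne_zero
  have hc2 : c + 1 < ⊤ := by finiteness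
  rw [e]
  refine (hK (c + 1) hc2.ne).of_isClosed_subset ?_ (biInter_subset_of_mem (mem_Ioo.mpr ⟨hc1, hc2⟩))
  exact isClosed_biInter fun d hd => (hK d hd.2.ne).isClosed

end AM


section AN
variable {X : Type*} [MetricSpace X] [CompactSpace X] [MeasurableSpace X] [BorelSpace X]

theorem upper_aux (μ : Measure X) [IsProbabilityMeasure μ] {T : Measure (ℝ × X) → ℝ}
    (hT : PolyApprox T) {F : Set ℝ} (hF : IsClosed F) {c : ℝ}
    (hc : ∀ ν, inTM ν → T ν ∈ F → ENNReal.ofReal c < KLdiv ν (unif01.prod μ)) :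
    ∃ N : ℕ, ∃ ε > 0, ∀ (n : ℕ) (τ : ℝ → Fin n), Good τ → ∀ s : (Fin n → X) → ℝ,
      (∀ x, |s x - T (emp τ x)| ≤ ε) →
      (Measure.pi fun _ : Fin n => μ) {x | s x ∈ F} ≤ N * ENNReal.ofReal (Real.exp (-(n * c))) := by
  have key : ∃ N : ℕ, ∃ ε > 0, ∀ (n : ℕ) (τ : ℝ → Fin n), Good τ → ∀ s : (Fin n → X) → ℝ,
      (∀ x, |s x - T (emp τ x)| ≤ ε) →
      (Measure.pi fun _ : Fin n => μ) {x | (∃ p ∈ TMset X, (p : Measure (ℝ × X)) = emp τ x) ∧ s x ∈ F}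
        ≤ N * ENNReal.ofReal (Real.exp (-(n * c))) := by
    refine TMset_compact.induction_on (p := fun A : Set (ProbabilityMeasure (ℝ × X)) =>
      ∃ N : ℕ, ∃ ε > 0, ∀ (n : ℕ) (τ : ℝ → Fin n), Good τ → ∀ s : (Fin n → X) → ℝ,
      (∀ x, |s x - T (emp τ x)| ≤ ε) →
      (Measure.pi fun _ : Fin n => μ) {x | (∃ p ∈ A, (p : Measure (ℝ × X)) = emp τ x) ∧ s x ∈ F}
        ≤ N * ENNReal.ofReal (Real.exp (-(n * c)))) ?_ ?_ ?_ ?_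
    · exact ⟨0, 1, one_pos, fun n τ hτ s hs => by simp⟩
    · rintro A B hAB ⟨N, ε, hε, h⟩
      refine ⟨N, ε, hε, fun n τ hτ s hs => (measure_mono ?_).trans (h n τ hτ s hs)⟩
      rintro x ⟨⟨p, hp, hpx⟩, hx⟩
      exact ⟨⟨p, hAB hp, hpx⟩, hx⟩
    · rintro A B ⟨N, ε, hε, h⟩ ⟨N', ε', hε', h'⟩
      refine ⟨N + N', min ε ε', lt_min hε hε', fun n τ hτ s hs => ?_⟩
      have h1 := h n τ hτ s (fun x => (hs x).trans (min_le_left _ _))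
      have h2 := h' n τ hτ s (fun x => (hs x).trans (min_le_right _ _))
      push_cast
      rw [add_mul]
      refine le_trans (measure_mono ?_) ((measure_union_le _ _).trans (add_le_add h1 h2))
      rintro x ⟨⟨p, hp | hp, hpx⟩, hx⟩
      · exact Or.inl ⟨⟨p, hp, hpx⟩, hx⟩
      · exact Or.inr ⟨⟨p, hp, hpx⟩, hx⟩
    · intro ν hν
      by_cases hνF : T ν ∈ F
      · obtain ⟨h, hh, ⟨C, hC⟩, hlt⟩ := exists_test μ (hc ν hν hνF)
        refine ⟨{p | Real.log (∫ x, Real.exp (h x) ∂(unif01.prod μ)) + c < ∫ x, h x ∂(p : Measure (ℝ × X))},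
          mem_nhdsWithin_of_mem_nhds ((isOpen_lt continuous_const (continuous_int hh hC)).mem_nhds hlt),
          1, 1, one_pos, fun n τ hτ s hs => ?_⟩
        rw [Nat.cast_one, one_mul]
        refine (measure_mono ?_).trans (chernoff hτ μ hh.measurable hC c)
        rintro x ⟨⟨p, hp, hpx⟩, hx⟩
        rw [mem_setOf_eq, ← hpx]
        exact le_of_lt hp
      · obtain ⟨r, hr, hrF⟩ := Metric.isOpen_iff.mp hF.isOpen_compl _ hνF
        have h1 := (hT.continuousOn ν hν) (Metric.ball_mem_nhds _ (half_pos hr))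
        refine ⟨_, h1, 0, r / 2, half_pos hr, fun n τ hτ s hs => ?_⟩
        have : {x | (∃ p ∈ (fun ν : ProbabilityMeasure (ℝ × X) => T ν) ⁻¹' Metric.ball (T ν) (r / 2),
            (p : Measure (ℝ × X)) = emp τ x) ∧ s x ∈ F} = ∅ := by
          ext x
          simp only [mem_setOf_eq, mem_empty_iff_false, iff_false]
          rintro ⟨⟨p, hp, hpx⟩, hx⟩
          refine hrF ?_ hx
          have h2 := hs x
          rw [← hpx] at h2
          rw [mem_preimage, Metric.mem_ball, Real.dist_eq] at hp
          rw [Metric.mem_ball, Real.dist_eq]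
          have := abs_sub_le (s x) (T p) (T ν)
          linarith
        rw [this]
        simp
  obtain ⟨N, ε, hε, h⟩ := key
  refine ⟨N, ε, hε, fun n τ hτ s hs => (measure_mono ?_).trans (h n τ hτ s hs)⟩
  intro x hx
  exact ⟨⟨⟨emp τ x, (emp_inTM hτ.meas x).1⟩, emp_inTM hτ.meas x, rfl⟩, hx⟩

theorem chebyshev {n : ℕ} (hn : 0 < n) (ν : Fin n → Measure X) [∀ i, IsProbabilityMeasure (ν i)]
    (f : Fin n → X → ℝ) (hf : ∀ i, Measurable (f i)) {C : ℝ} (hC : ∀ i y, |f i y| ≤ C)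
    {η : ℝ} (hη : 0 < η) :
    (Measure.pi ν) {x | η ≤ |(n : ℝ)⁻¹ * ∑ i, f i (x i) - (n : ℝ)⁻¹ * ∑ i, ∫ y, f i y ∂(ν i)|} ≤
      ENNReal.ofReal (C ^ 2 / η ^ 2 / n) := by
  have hn' : (0 : ℝ) < n := by exact_mod_cast hn
  have hmem : ∀ i, MemLp (f i) 2 (ν i) := fun i =>
    MemLp.of_bound (hf i).aestronglyMeasurable C (Eventually.of_forall fun y => hC i y)
  have hmem' : ∀ i, MemLp (fun x : Fin n → X => f i (x i)) 2 (Measure.pi ν) := fun i =>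
    MemLp.of_bound ((hf i).comp (measurable_pi_apply i)).aestronglyMeasurable C
      (Eventually.of_forall fun y => hC i _)
  have hmem2 : MemLp (∑ i, fun x : Fin n → X => f i (x i)) 2 (Measure.pi ν) :=
    memLp_finset_sum' _ fun i _ => hmem' i
  have h1 := ProbabilityTheory.meas_ge_le_variance_div_sq hmem2 (c := n * η) (by positivity)
  have hexp : ∫ x, (∑ i, fun x : Fin n → X => f i (x i)) x ∂(Measure.pi ν) = ∑ i, ∫ y, f i y ∂(ν i) := by
    simp only [Finset.sum_apply]
    rw [integral_finsetSum _ fun i _ => (hmem' i).integrable (by norm_num)]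
    refine Finset.sum_congr rfl fun i _ => ?_
    exact integral_comp_eval (hf i).aestronglyMeasurable
  rw [hexp, ProbabilityTheory.variance_sum_pi hmem] at h1
  refine le_trans (measure_mono ?_) (h1.trans (ENNReal.ofReal_le_ofReal ?_))
  · intro x hx
    simp only [mem_setOf_eq, Finset.sum_apply] at hx ⊢
    rw [← mul_sub, abs_mul, abs_of_pos (inv_pos.mpr hn')] at hx
    rw [inv_mul_eq_div, le_div_iff₀ hn'] at hx
    linarith
  · have h2 : ∀ i, ProbabilityTheory.variance (f i) (ν i) ≤ C ^ 2 := fun i => by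
      have := ProbabilityTheory.variance_le_sq_of_bounded (μ := ν i) (X := f i) (a := -C) (b := C)
        (Eventually.of_forall fun y => abs_le.mp (hC i y)) (hf i).aemeasurable
      have e : ((C - -C) / 2) ^ 2 = C ^ 2 := by ring
      rwa [e] at this
    have h3 : ∑ i, ProbabilityTheory.variance (f i) (ν i) ≤ n * C ^ 2 := by
      refine (Finset.sum_le_sum fun i _ => h2 i).trans ?_
      simp
    calc _ ≤ n * C ^ 2 / (n * η) ^ 2 := by gcongr
      _ = _ := by field_simp

/-- conditional laws on cells -/
noncomputable def cellL {X : Type*} [MeasurableSpace X] {n : ℕ} (τ : ℝ → Fin n) (ν : Measure (ℝ × X)) (i : Fin n) : Measure X :=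
  (ENNReal.ofReal (n : ℝ) • ν.restrict (Prod.fst ⁻¹' (τ ⁻¹' {i}))).map Prod.snd

/-- averaged measure -/
noncomputable def barM {X : Type*} [MeasurableSpace X] {n : ℕ} (τ : ℝ → Fin n) (ν : Measure (ℝ × X)) : Measure (ℝ × X) :=
  ∑ i, (unif01.restrict (τ ⁻¹' {i})).prod (cellL τ ν i)

theorem inTM_cell {n : ℕ} {τ : ℝ → Fin n} (hτ : Good τ) {ν : Measure (ℝ × X)} (hν : inTM ν) (i : Fin n) :
    ν (Prod.fst ⁻¹' (τ ⁻¹' {i})) = ENNReal.ofReal ((n : ℝ)⁻¹) := by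
  rw [← Measure.map_apply measurable_fst (hτ.ms i), hν.2, hτ.mass]

theorem cellL_prob {n : ℕ} {τ : ℝ → Fin n} (hτ : Good τ) {ν : Measure (ℝ × X)} (hν : inTM ν) (i : Fin n) :
    IsProbabilityMeasure (cellL τ ν i) := by
  have hn := hτ.pos
  refine ⟨?_⟩
  rw [cellL, Measure.map_apply measurable_snd MeasurableSet.univ, preimage_univ, Measure.smul_apply,
    Measure.restrict_apply_univ, inTM_cell hτ hν, smul_eq_mul, ← ENNReal.ofReal_mul hn.le,
    mul_inv_cancel₀ hn.ne', ENNReal.ofReal_one]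

theorem cellL_prod {n : ℕ} {τ : ℝ → Fin n} (hτ : Good τ) (μ : Measure X) [IsProbabilityMeasure μ] (i : Fin n) :
    cellL τ (unif01.prod μ) i = μ := by
  have hn := hτ.pos
  ext B hB
  rw [cellL, Measure.map_apply measurable_snd hB, Measure.smul_apply,
    Measure.restrict_apply (measurable_snd hB)]
  have : Prod.snd ⁻¹' B ∩ Prod.fst ⁻¹' (τ ⁻¹' {i}) = (τ ⁻¹' {i}) ×ˢ B := by
    ext ⟨a, b⟩
    simp [and_comm]
  rw [this, Measure.prod_prod, hτ.mass, smul_eq_mul, ← mul_assoc, ← ENNReal.ofReal_mul hn.le,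
    mul_inv_cancel₀ hn.ne', ENNReal.ofReal_one, one_mul]

theorem prod_inTM (μ : Measure X) [IsProbabilityMeasure μ] : inTM (unif01.prod μ) :=
  ⟨inferInstance, by rw [Measure.map_fst_prod]; simp⟩

theorem barM_apply {n : ℕ} {τ : ℝ → Fin n} (ν : Measure (ℝ × X)) (B : Set (ℝ × X)) :
    barM τ ν B = ∑ i, (unif01.restrict (τ ⁻¹' {i})).prod (cellL τ ν i) B := by
  rw [barM, Measure.coe_finsetSum, Finset.sum_apply]

theorem sum_cells {β : Type*} [MeasurableSpace β] {n : ℕ} {τ : β → Fin n} (hτ : Measurable τ)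
    (ν : Measure β) (B : Set β) :
    ∑ i, ν (B ∩ τ ⁻¹' {i}) = ν B := by
  have := sum_measure_preimage_singleton (μ := ν.restrict B) (f := τ) Finset.univ
    (fun i _ => hτ (measurableSet_singleton i))
  simp only [Finset.coe_univ, preimage_univ, Measure.restrict_apply_univ] at this
  rw [← this]
  refine Finset.sum_congr rfl fun i _ => ?_
  rw [Measure.restrict_apply (hτ (measurableSet_singleton i)), inter_comm]

theorem barM_push {n : ℕ} {τ : ℝ → Fin n} (hτ : Good τ) {ν : Measure (ℝ × X)} (hν : inTM ν) :
    (barM τ ν).map (Prod.map τ id) = ν.map (Prod.map τ id) := by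
  have hn := hτ.pos
  have hm : Measurable (Prod.map τ (id : X → X)) := hτ.meas.prodMap measurable_id
  ext C hC
  rw [Measure.map_apply hm hC, Measure.map_apply hm hC, barM_apply,
    ← sum_cells (hτ.meas.comp measurable_fst) ν]
  refine Finset.sum_congr rfl fun i _ => ?_
  haveI := cellL_prob hτ hν i
  rw [Measure.prod_apply (hm hC)]
  have hCi : MeasurableSet {x | (i, x) ∈ C} := measurable_prodMk_left hC
  have h1 : ∫⁻ a in τ ⁻¹' {i}, cellL τ ν i (Prod.mk a ⁻¹' (Prod.map τ id ⁻¹' C)) ∂unif01 =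
      ∫⁻ a in τ ⁻¹' {i}, cellL τ ν i {x | (i, x) ∈ C} ∂unif01 := by
    refine setLIntegral_congr_fun (hτ.ms i) fun a ha => ?_
    have : τ a = i := ha
    simp only [← this]
    rfl
  rw [h1, setLIntegral_const, hτ.mass, cellL, Measure.map_apply measurable_snd hCi, Measure.smul_apply,
    Measure.restrict_apply (measurable_snd hCi), smul_eq_mul, mul_right_comm,
    ← ENNReal.ofReal_mul hn.le, mul_inv_cancel₀ hn.ne', ENNReal.ofReal_one, one_mul]
  congr 1
  ext ⟨a, x⟩
  simp only [mem_inter_iff, mem_preimage, mem_setOf_eq, mem_singleton_iff, Prod.map, Function.comp, id]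
  constructor
  · rintro ⟨h, h'⟩
    rw [h']
    exact ⟨h, rfl⟩
  · rintro ⟨h, h'⟩
    rw [h'] at h
    exact ⟨h, h'⟩

theorem barM_inTM {n : ℕ} {τ : ℝ → Fin n} (hτ : Good τ) {ν : Measure (ℝ × X)} (hν : inTM ν) :
    inTM (barM τ ν) := by
  have h1 : (barM τ ν).map Prod.fst = unif01 := by
    ext B hB
    rw [Measure.map_apply measurable_fst hB, barM_apply, ← sum_cells hτ.meas unif01 B]
    refine Finset.sum_congr rfl fun i _ => ?_
    haveI := cellL_prob hτ hν i
    rw [← prod_univ, Measure.prod_prod, measure_univ, mul_one, Measure.restrict_apply hB]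
  refine ⟨⟨?_⟩, h1⟩
  have : (barM τ ν).map Prod.fst univ = 1 := by rw [h1]; exact measure_univ
  rwa [Measure.map_apply measurable_fst MeasurableSet.univ, preimage_univ] at this

theorem integral_bar {n : ℕ} {τ : ℝ → Fin n} (hτ : Good τ) {ν : Measure (ℝ × X)} (hν : inTM ν)
    {h : ℝ × X → ℝ} (hh : Measurable h) {C : ℝ} (hC : ∀ z, |h z| ≤ C) :
    ∫ z, h z ∂(barM τ ν) = (n : ℝ)⁻¹ * ∑ i, ∫ y, cellG τ h i y ∂(cellL τ ν i) := by
  have hn := hτ.pos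
  haveI := fun i => cellL_prob hτ hν i
  rw [barM, integral_finsetSum_measure fun i _ => integrable_bdd hh hC, Finset.mul_sum]
  refine Finset.sum_congr rfl fun i _ => ?_
  rw [integral_prod_symm _ (integrable_bdd hh hC)]
  simp only [cellG]
  rw [integral_const_mul, inv_mul_cancel_left₀ hn.ne']

theorem lower_aux (μ : Measure X) [IsProbabilityMeasure μ] {T : Measure (ℝ × X) → ℝ}
    (hT : PolyApprox T) {ν : Measure (ℝ × X)} (hν : inTM ν)
    (hk : KLdiv ν (unif01.prod μ) ≠ ⊤) {ε : ℝ} (hε : 0 < ε) :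
    ∃ D : ℝ, 0 ≤ D ∧ ∀ (n : ℕ) (τ : ℝ → Fin n), Good τ → D < n →
      (∀ ν', inTM ν' → ν'.map (Prod.map τ id) = ν.map (Prod.map τ id) → |T ν' - T ν| ≤ ε) →
      ∃ E : Set (Fin n → X), MeasurableSet E ∧ (∀ x ∈ E, |T (emp τ x) - T ν| ≤ 4 * ε) ∧
        0 < (Measure.pi fun _ : Fin n => μ).real E ∧
        -(((KLdiv ν (unif01.prod μ)).toReal + Real.log 2 / n) / (1 - D / n)) ≤
          (n : ℝ)⁻¹ * Real.log ((Measure.pi fun _ : Fin n => μ).real E) := by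
  obtain ⟨N, k, g, C, hg, hC, hap⟩ := hT ε hε
  let P : (Fin N → Fin k → ℝ) → ℝ := fun w => ∑ l, ∏ a, w l a
  have hP : Continuous P := by fun_prop
  have huc := (isCompact_closedBall (0 : Fin N → Fin k → ℝ) (max C 0)).uniformContinuousOn_of_continuous
    hP.continuousOn
  rw [Metric.uniformContinuousOn_iff] at huc
  obtain ⟨η, hη, huc⟩ := huc ε hε
  let J : Measure (ℝ × X) → (Fin N → Fin k → ℝ) := fun ν' l a => ∫ z, g l a z ∂ν'
  have hJ : ∀ ν', inTM ν' → J ν' ∈ Metric.closedBall (0 : Fin N → Fin k → ℝ) (max C 0) := by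
    intro ν' hν'
    haveI := hν'.1
    rw [mem_closedBall_zero_iff, pi_norm_le_iff_of_nonneg (le_max_right _ _)]
    intro l
    rw [pi_norm_le_iff_of_nonneg (le_max_right _ _)]
    intro a
    have := norm_integral_le_of_norm_le_const (μ := ν') (f := g l a) (C := C)
      (Eventually.of_forall fun z => hC l a z)
    simp only [probReal_univ, mul_one] at this
    exact this.trans (le_max_left _ _)
  refine ⟨N * k * (C ^ 2 / η ^ 2), by positivity, fun n τ hτ hnD hpush => ?_⟩
  have hn := hτ.pos
  have hnN : 0 < n := by exact_mod_cast hn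
  haveI := hν.1
  haveI := fun i => cellL_prob hτ hν i
  let R : Measure (Fin n → X) := Measure.pi (cellL τ ν)
  let b := J (barM τ ν)
  have hbT := barM_inTM hτ hν
  let E : Set (Fin n → X) := ⋂ l, ⋂ a, {x | |J (emp τ x) l a - b l a| < η}
  have hEm : MeasurableSet E := by
    refine MeasurableSet.iInter fun l => MeasurableSet.iInter fun a => ?_
    refine measurableSet_lt ?_ measurable_const
    have : (fun x : Fin n → X => |J (emp τ x) l a - b l a|) = fun x =>
        |(n : ℝ)⁻¹ * ∑ i, cellG τ (g l a) i (x i) - b l a| := by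
      ext x
      rw [← integral_emp hτ (hg l a).measurable (hC l a)]
    rw [this]
    refine Measurable.abs (Measurable.sub_const (Measurable.const_mul ?_ _) _)
    exact Finset.measurable_sum _ fun i _ => (cellG_meas (hg l a).measurable i).comp (measurable_pi_apply i)
  have hRE : 1 - N * k * (C ^ 2 / η ^ 2) / n ≤ R.real E := by
    have h1 : R Eᶜ ≤ ENNReal.ofReal (N * k * (C ^ 2 / η ^ 2) / n) := by
      have h2 : Eᶜ = ⋃ l, ⋃ a, {x | η ≤ |J (emp τ x) l a - b l a|} := by
        simp only [E, compl_iInter]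
        congr! with l a
        ext x
        simp
      rw [h2]
      calc _ ≤ ∑ l : Fin N, ∑ a : Fin k, ENNReal.ofReal (C ^ 2 / η ^ 2 / n) := by
            refine (measure_iUnion_fintype_le _ _).trans (Finset.sum_le_sum fun l _ => ?_)
            refine (measure_iUnion_fintype_le _ _).trans (Finset.sum_le_sum fun a _ => ?_)
            have := chebyshev hnN (cellL τ ν) (cellG τ (g l a)) (cellG_meas (hg l a).measurable)
              (cellG_bdd hτ (hC l a)) hη
            rw [← integral_bar hτ hν (hg l a).measurable (hC l a)] at this
            simp_rw [← integral_emp hτ (hg l a).measurable (hC l a)] at this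
            exact this
        _ = _ := by
            simp only [Finset.sum_const, Finset.card_univ, Fintype.card_fin, nsmul_eq_mul]
            rw [← mul_assoc, ← ENNReal.ofReal_natCast, ← ENNReal.ofReal_natCast,
              ← ENNReal.ofReal_mul (by positivity), ← ENNReal.ofReal_mul (by positivity), mul_div_assoc]
    have h3 : R.real Eᶜ ≤ N * k * (C ^ 2 / η ^ 2) / n :=
      ENNReal.toReal_le_of_le_ofReal (by positivity) h1
    rw [probReal_compl_eq_one_sub hEm] at h3
    linarith
  have hpos : 0 < 1 - N * k * (C ^ 2 / η ^ 2) / n := by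
    rw [sub_pos, div_lt_one hn]
    exact hnD
  rw [KLdiv] at hk
  split_ifs at hk with hk'
  · have hnu : ∀ i, ν.real (Prod.fst ⁻¹' (τ ⁻¹' {i})) = (n : ℝ)⁻¹ := fun i => by
      rw [measureReal_def, inTM_cell hτ hν, ENNReal.toReal_ofReal (by positivity)]
    have hrho : ∀ i, (unif01.prod μ).real (Prod.fst ⁻¹' (τ ⁻¹' {i})) = (n : ℝ)⁻¹ := fun i => by
      rw [measureReal_def, inTM_cell hτ (prod_inTM μ), ENNReal.toReal_ofReal (by positivity)]
    have hGBi : ∀ i, GB (cellL τ ν i) μ (n * ∫ z in Prod.fst ⁻¹' (τ ⁻¹' {i}), llr ν (unif01.prod μ) z ∂ν) := by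
      intro i
      have := (gibbs_restrict hk'.1 hk'.2 (measurable_fst (hτ.ms i)) (inv_pos.mpr hn) (hnu i) (hrho i)).map
        measurable_snd
      rw [inv_inv] at this
      have e := cellL_prod hτ μ i
      rw [cellL] at e
      rw [e] at this
      exact this
    have hGB := GB.pi (cellL τ ν) (fun _ => μ) _ hGBi
    have hsum : ∑ i, (n : ℝ) * ∫ z in Prod.fst ⁻¹' (τ ⁻¹' {i}), llr ν (unif01.prod μ) z ∂ν =
        n * ∫ z, llr ν (unif01.prod μ) z ∂ν := by
      rw [← Finset.mul_sum]
      congr 1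
      exact (Good.integral_sum (τ := fun z : ℝ × X => τ z.1) (hτ.meas.comp measurable_fst)
        (fun _ => llr ν (unif01.prod μ)) (fun _ => hk'.2)).symm
    rw [hsum] at hGB
    obtain ⟨hpE, hlE⟩ := hGB.lower hEm (hpos.trans_le hRE)
    refine ⟨E, hEm, ?_, hpE, ?_⟩
    · intro x hx
      have hem := emp_inTM hτ.meas x
      have hd : dist (J (emp τ x)) b < η := by
        rw [dist_pi_lt_iff hη]
        intro l
        rw [dist_pi_lt_iff hη]
        intro a
        rw [Real.dist_eq]
        exact mem_iInter.mp (mem_iInter.mp hx l) a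
      have h1 := huc _ (hJ _ hem) _ (hJ _ hbT) hd
      rw [Real.dist_eq] at h1
      have h2 := hap _ hem
      have h3 := hap _ hbT
      have h4 := hpush _ hbT (barM_push hτ hν)
      change |T (emp τ x) - P (J (emp τ x))| ≤ ε at h2
      change |T (barM τ ν) - P (J (barM τ ν))| ≤ ε at h3
      rw [abs_le] at *
      rw [abs_lt] at h1
      constructor <;> linarith [h1.1, h1.2, h2.1, h2.2, h3.1, h3.2, h4.1, h4.2]
    · have hkl : ∫ z, llr ν (unif01.prod μ) z ∂ν ≤ (KLdiv ν (unif01.prod μ)).toReal := by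
        rw [KLdiv, if_pos hk', ENNReal.toReal_ofReal']
        exact le_max_left _ _
      have hlog : Real.log ((Measure.pi fun _ : Fin n => μ).real E) ≤ 0 :=
        Real.log_nonpos measureReal_nonneg measureReal_le_one
      set L := Real.log ((Measure.pi fun _ : Fin n => μ).real E)
      have h5 : (1 - N * k * (C ^ 2 / η ^ 2) / n) * -L ≤ n * (KLdiv ν (unif01.prod μ)).toReal + Real.log 2 := by
        calc _ ≤ R.real E * -L := by
              refine mul_le_mul_of_nonneg_right hRE (by linarith)
          _ ≤ n * ∫ z, llr ν (unif01.prod μ) z ∂ν + Real.log 2 := by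
              have := hlE
              change -_ ≤ R.real E * L at this
              linarith
          _ ≤ _ := by gcongr
      rw [neg_le, ← mul_neg, le_div_iff₀ hpos]
      calc (n : ℝ)⁻¹ * -L * (1 - N * k * (C ^ 2 / η ^ 2) / n) =
            (n : ℝ)⁻¹ * ((1 - N * k * (C ^ 2 / η ^ 2) / n) * -L) := by ring
        _ ≤ (n : ℝ)⁻¹ * (n * (KLdiv ν (unif01.prod μ)).toReal + Real.log 2) := by gcongr
        _ = _ := by field_simp
  · exact absurd rfl hk

end AN


section AO
variable {X : Type*} [MetricSpace X] [CompactSpace X] [MeasurableSpace X] [BorelSpace X]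

theorem abstract_LDP (μ : Measure X) [IsProbabilityMeasure μ] {T : Measure (ℝ × X) → ℝ}
    (hT : PolyApprox T) (S : ∀ n, (Fin n → X) → ℝ)
    (H : ∀ ε > 0, ∀ᶠ n : ℕ in atTop, ∃ τ : ℝ → Fin n, Good τ ∧
      (∀ x, |S n x - T (emp τ x)| ≤ ε) ∧
      ∀ ν ν', inTM ν → inTM ν' → ν'.map (Prod.map τ id) = ν.map (Prod.map τ id) → |T ν' - T ν| ≤ ε) :
    SatisfiesLDP (fun n => Measure.pi fun _ : Fin n => μ) S (rateT μ T) := by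
  refine ⟨fun c hc => rateT_good μ hT c hc, fun F _ => ⟨?_, ?_⟩⟩
  · -- lower bound
    set L := Filter.atTop.liminf fun n : ℕ =>
        (((n : ℝ)⁻¹ : ℝ) : EReal) * ENNReal.log ((Measure.pi fun _ : Fin n => μ) {ω | S n ω ∈ F}) with hL
    have key : ∀ ν, inTM ν → KLdiv ν (unif01.prod μ) ≠ ⊤ → T ν ∈ interior F →
        ((-(KLdiv ν (unif01.prod μ)).toReal : ℝ) : EReal) ≤ L := by
      intro ν hν hk hνF
      obtain ⟨r, hr, hrF⟩ := Metric.isOpen_iff.mp isOpen_interior _ hνF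
      have hε : 0 < r / 6 := by positivity
      obtain ⟨D, hD, hlow⟩ := lower_aux μ hT hν hk hε
      set k := (KLdiv ν (unif01.prod μ)).toReal
      have hlim : Tendsto (fun n : ℕ => ((-((k + Real.log 2 / n) / (1 - D / n)) : ℝ) : EReal)) atTop
          (nhds ((-k : ℝ) : EReal)) := by
        refine (continuous_coe_real_ereal.tendsto _).comp ?_
        have h1 := tendsto_const_div_atTop_nhds_zero_nat (Real.log 2)
        have h2 := tendsto_const_div_atTop_nhds_zero_nat D
        have := ((h1.const_add k).div (h2.const_sub 1) (by norm_num)).neg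
        simpa using this
      rw [← hlim.liminf_eq]
      refine liminf_le_liminf ?_
      filter_upwards [H _ hε, eventually_gt_atTop ⌈D⌉₊] with n hn hnD
      obtain ⟨τ, hτ, h1, h2⟩ := hn
      have hDn : D < n := (Nat.le_ceil D).trans_lt (by exact_mod_cast hnD)
      obtain ⟨E, hE, hEx, hEpos, hElog⟩ := hlow n τ hτ hDn (fun ν' hν' => h2 ν ν' hν hν')
      have hsub : E ⊆ {ω | S n ω ∈ F} := by
        intro x hx
        show S n x ∈ F
        refine interior_subset (hrF ?_)
        rw [Metric.mem_ball, Real.dist_eq]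
        have := abs_sub_le (S n x) (T (emp τ x)) (T ν)
        linarith [h1 x, hEx x hx]
      have hn := hτ.pos
      calc ((-((k + Real.log 2 / n) / (1 - D / n)) : ℝ) : EReal)
          ≤ (((n : ℝ)⁻¹ * Real.log ((Measure.pi fun _ : Fin n => μ).real E) : ℝ) : EReal) := by
            exact_mod_cast hElog
        _ = (((n : ℝ)⁻¹ : ℝ) : EReal) * ENNReal.log ((Measure.pi fun _ : Fin n => μ) E) := by
            rw [EReal.coe_mul, ENNReal.log_pos_real' hEpos]
            rfl
        _ ≤ _ := by
            refine mul_le_mul_of_nonneg_left (ENNReal.log_monotone (measure_mono hsub)) ?_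
            exact_mod_cast (inv_pos.mpr hn).le
    rw [EReal.neg_le]
    refine le_iInf₂ fun t ht => ?_
    by_contra hcon
    rw [not_le] at hcon
    obtain ⟨r, hr1, hr2⟩ := EReal.lt_iff_exists_real_btwn.mp hcon
    have hr0 : 0 ≤ r := by
      have : (0 : EReal) ≤ r := (EReal.coe_ennreal_nonneg _).trans hr1.le
      exact_mod_cast this
    have hrT : rateT μ T t < ENNReal.ofReal r := by
      rw [← EReal.coe_ennreal_lt_coe_ennreal_iff, EReal.coe_ennreal_ofReal, max_eq_left hr0]
      exact hr1
    obtain ⟨ν, hν⟩ := iInf_lt_iff.mp hrT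
    have h1 := key ν.1 ν.2.1 ν.2.2.1 (by rw [ν.2.2.2]; exact ht)
    have h2 : (KLdiv ν.1 (unif01.prod μ)).toReal ≤ r :=
      ENNReal.toReal_le_of_le_ofReal hr0 hν.le
    have h3 : ((-r : ℝ) : EReal) ≤ L := le_trans (by exact_mod_cast neg_le_neg h2) h1
    rw [EReal.coe_neg, EReal.neg_le] at h3
    exact absurd hr2 (not_lt.mpr h3)
  · rw [EReal.le_neg]
    rw [← EReal.ge_of_forall_gt_iff_ge]
    intro c hc
    rw [EReal.le_neg]
    rcases lt_or_ge c 0 with hc0 | hc0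
    · have h1 : ((0 : ℝ) : EReal) ≤ -(c : EReal) := by
        rw [← EReal.coe_neg]
        exact_mod_cast (neg_pos.mpr hc0).le
      refine le_trans ?_ h1
      refine limsup_le_of_le (h := Eventually.of_forall fun n => ?_)
      have h2 : ENNReal.log ((Measure.pi fun _ : Fin n => μ) {ω | S n ω ∈ F}) ≤ 0 := by
        rw [← ENNReal.log_one]
        exact ENNReal.log_monotone prob_le_one
      have h3 : (0 : EReal) ≤ (((n : ℝ)⁻¹ : ℝ) : EReal) := by
        have : (0 : ℝ) ≤ (n : ℝ)⁻¹ := by positivity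
        exact_mod_cast this
      simpa using mul_le_mul_of_nonneg_left h2 h3
    · obtain ⟨N, ε, hε, hup⟩ := upper_aux μ hT (isClosed_closure (s := F)) (c := c) (by
        intro ν hν hνF
        by_contra hcon
        rw [not_lt] at hcon
        have h1 : rateT μ T (T ν) ≤ ENNReal.ofReal c :=
          (iInf_le _ (⟨ν, hν, (hcon.trans_lt ENNReal.ofReal_lt_top).ne, rfl⟩ :
            {ν' : Measure (ℝ × X) // inTM ν' ∧ KLdiv ν' (unif01.prod μ) ≠ ⊤ ∧ T ν' = T ν})).trans hcon
        have h2 : ((rateT μ T (T ν) : ℝ≥0∞) : EReal) ≤ c := by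
          rw [← EReal.coe_ennreal_le_coe_ennreal_iff, EReal.coe_ennreal_ofReal, max_eq_left hc0] at h1
          exact h1
        exact absurd hc (not_lt.mpr ((iInf₂_le _ hνF).trans h2)))
      have hlim : Tendsto (fun n : ℕ => ((Real.log (N + 1) / n + -c : ℝ) : EReal)) atTop
          (nhds (-(c : EReal))) := by
        rw [← EReal.coe_neg]
        refine (continuous_coe_real_ereal.tendsto _).comp ?_
        have h1 := tendsto_const_div_atTop_nhds_zero_nat (Real.log (N + 1))
        simpa using h1.add_const (-c)
      rw [← hlim.limsup_eq]
      refine limsup_le_limsup ?_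
      filter_upwards [H _ hε] with n hn
      obtain ⟨τ, hτ, h1, -⟩ := hn
      have hn := hτ.pos
      have h2 : (Measure.pi fun _ : Fin n => μ) {ω | S n ω ∈ F} ≤
          ENNReal.ofReal ((N + 1) * Real.exp (-(n * c))) := by
        refine (measure_mono (t := {x | S n x ∈ closure F}) fun x hx => subset_closure (s := F) hx).trans ((hup n τ hτ (S n) h1).trans ?_)
        rw [ENNReal.ofReal_mul (by positivity)]
        gcongr
        rw [← ENNReal.ofReal_natCast]
        exact ENNReal.ofReal_le_ofReal (by linarith)
      calc _ ≤ (((n : ℝ)⁻¹ : ℝ) : EReal) * ENNReal.log (ENNReal.ofReal ((N + 1) * Real.exp (-(n * c)))) := by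
            refine mul_le_mul_of_nonneg_left (ENNReal.log_monotone h2) ?_
            exact_mod_cast (inv_pos.mpr hn).le
        _ = _ := by
            rw [ENNReal.log_ofReal_of_pos (by positivity), ← EReal.coe_mul,
              Real.log_mul (by positivity) (Real.exp_pos _).ne', Real.log_exp]
            congr 1
            field_simp

end AO


section SW
variable {Y : Type*} [MetricSpace Y] [CompactSpace Y]

/-- The algebra of finite sums of product functions. -/
def ppAlg (Y : Type*) [MetricSpace Y] (m : ℕ) : Subalgebra ℝ C(Fin (m + 1) → Y, ℝ) where
  carrier := {F | ∃ (κ : Type) (_ : Fintype κ) (g : κ → Fin (m + 1) → Y → ℝ),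
    (∀ l a, Continuous (g l a)) ∧ ∀ y, F y = ∑ l, ∏ a, g l a (y a)}
  mul_mem' := by
    rintro F F' ⟨κ, _, g, hg, hF⟩ ⟨κ', _, g', hg', hF'⟩
    refine ⟨κ × κ', inferInstance, fun l a y => g l.1 a y * g' l.2 a y,
      fun l a => (hg _ _).mul (hg' _ _), fun y => ?_⟩
    rw [ContinuousMap.mul_apply, hF, hF', Fintype.sum_mul_sum, Fintype.sum_prod_type]
    simp_rw [Finset.prod_mul_distrib]
  add_mem' := by
    rintro F F' ⟨κ, _, g, hg, hF⟩ ⟨κ', _, g', hg', hF'⟩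
    refine ⟨κ ⊕ κ', inferInstance, Sum.elim g g',
      fun l a => ?_, fun y => ?_⟩
    · rcases l with l | l
      · exact hg l a
      · exact hg' l a
    rw [ContinuousMap.add_apply, hF, hF', Fintype.sum_sum_type]
    rfl
  algebraMap_mem' := fun r => by
    refine ⟨Unit, inferInstance, fun _ a _ => if a = 0 then r else 1, fun l a => continuous_const,
      fun y => ?_⟩
    simp

theorem sw_prod {m : ℕ} {F : (Fin (m + 1) → Y) → ℝ} (hF : Continuous F) {ε : ℝ} (hε : 0 < ε) :
    ∃ (N : ℕ) (g : Fin N → Fin (m + 1) → Y → ℝ), (∀ l a, Continuous (g l a)) ∧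
      ∀ y, |F y - ∑ l, ∏ a, g l a (y a)| ≤ ε := by
  have hsep : (ppAlg Y m).SeparatesPoints := by
    intro x y hxy
    obtain ⟨b, hb⟩ := Function.ne_iff.mp hxy
    let f : C(Fin (m + 1) → Y, ℝ) := ⟨fun z => dist (z b) (x b), by fun_prop⟩
    refine ⟨f, ⟨f, ?_, rfl⟩, ?_⟩
    · refine ⟨Unit, inferInstance, fun _ a u => if a = b then dist u (x b) else 1, fun l a => ?_,
        fun y => ?_⟩
      · dsimp only
        split_ifs <;> fun_prop
      · simp [f]
    · simp only [f, ContinuousMap.coe_mk, dist_self]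
      exact (dist_pos.mpr (Ne.symm hb)).ne
  have h1 := ContinuousMap.subalgebra_topologicalClosure_eq_top_of_separatesPoints _ hsep
  have h2 : (⟨F, hF⟩ : C(Fin (m + 1) → Y, ℝ)) ∈ (ppAlg Y m).topologicalClosure := by
    rw [h1]; trivial
  have h3 : (⟨F, hF⟩ : C(Fin (m + 1) → Y, ℝ)) ∈ closure (ppAlg Y m : Set C(Fin (m + 1) → Y, ℝ)) := h2
  obtain ⟨f, ⟨κ, _, g, hg, hf⟩, hd⟩ := Metric.mem_closure_iff.mp h3 ε hε
  let e := Fintype.equivFin κ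
  refine ⟨Fintype.card κ, fun l => g (e.symm l), fun l a => hg _ _, fun y => ?_⟩
  rw [Equiv.sum_comp e.symm (fun l => ∏ a, g l a (y a)), ← hf]
  have := ContinuousMap.dist_apply_le_dist (f := (⟨F, hF⟩ : C(Fin (m + 1) → Y, ℝ))) (g := f) y
  rw [Real.dist_eq] at this
  exact this.trans hd.le

end SW

section AQ
variable {X : Type*} [MetricSpace X] [CompactSpace X] [MeasurableSpace X] [BorelSpace X]

/-- lift of a kernel -/
def liftK {X : Type*} (W : ℝ → ℝ → ℝ) : ℝ × X → ℝ × X → ℝ := fun p q => W p.1 q.1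

/-- Rooted version of the functional. -/
noncomputable def TR {X : Type*} [MeasurableSpace X] {m : ℕ} (t : RTree m) (W : ℝ → ℝ → ℝ)
    (φ : (Fin (m + 1) → X) → ℝ) (ν : Measure (ℝ × X)) : ℝ :=
  ∫ z, φ (fun a => (z a).2) * t.prod (liftK W) z ∂(Measure.pi fun _ => ν)

theorem KB.lift {W : ℝ → ℝ → ℝ} {M : ℝ} (h : KB unif01 W M) {ν : Measure (ℝ × X)} (hν : inTM ν) :
    KB ν (liftK W) M := by
  refine ⟨?_, fun x => ?_, fun x => ?_⟩
  · exact h.meas.comp ((measurable_fst.comp measurable_fst).prodMk (measurable_fst.comp measurable_snd))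
  · refine le_trans (le_of_eq ?_) (h.left x.1)
    have hm : Measurable fun y => ‖W y x.1‖ₑ := (h.meas.comp measurable_prodMk_right).enorm
    rw [← hν.2, lintegral_map hm measurable_fst]
    rfl
  · refine le_trans (le_of_eq ?_) (h.right x.1)
    have hm : Measurable fun y => ‖W x.1 y‖ₑ := (h.meas.comp measurable_prodMk_left).enorm
    rw [← hν.2, lintegral_map hm measurable_fst]
    rfl

theorem CutB.lift {W W' : ℝ → ℝ → ℝ} {M δ : ℝ} (h : KB unif01 W M) (h' : KB unif01 W' M)
    (hc : CutB unif01 W W' δ) {ν : Measure (ℝ × X)} (hν : inTM ν) :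
    CutB ν (liftK W) (liftK W') δ := by
  intro g hg hg1
  haveI := hν.1
  haveI : Nonempty (ℝ × X) := nonempty_of_isProbabilityMeasure ν
  haveI : Nonempty X := Nonempty.map Prod.snd this
  let κ := ν.condKernel
  have hd : unif01.compProd κ = ν := by
    have := ν.disintegrate κ
    rw [Measure.fst, hν.2] at this
    exact this
  let G : ℝ → ℝ := fun a => ∫ y, g (a, y) ∂(κ a)
  have hG : Measurable G := (hg.stronglyMeasurable.integral_kernel_prod_right' (κ := κ)).measurable
  have hG1 : ∀ a, |G a| ≤ 1 := fun a => by
    have := norm_integral_le_of_norm_le_const (μ := κ a) (f := fun y => g (a, y)) (C := 1)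
      (Eventually.of_forall fun z => hg1 _)
    simpa using this
  have key : ∀ V : ℝ → ℝ → ℝ, KB unif01 V M → ∀ x : ℝ × X,
      ∫ y, liftK V y x * g y ∂ν = ∫ a, V a x.1 * G a ∂unif01 := by
    intro V hV x
    have hi : Integrable (fun y => liftK V y x * g y) (unif01.compProd κ) := by
      rw [hd]
      exact (hV.lift hν).integrable_op x hg hg1
    conv_lhs => rw [← hd]
    rw [Measure.integral_compProd hi]
    refine integral_congr_ae (Eventually.of_forall fun a => ?_)
    simp only [liftK]
    rw [integral_const_mul]
  simp_rw [key W h, key W' h']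
  have hm : Measurable fun a => |∫ y, W y a * G y ∂unif01 - ∫ y, W' y a * G y ∂unif01| :=
    ((h.measurable_op hG).sub (h'.measurable_op hG)).abs
  have := hc G hG hG1
  rw [← hν.2] at this
  rw [integral_map measurable_fst.aemeasurable (by rw [hν.2]; exact hm.aestronglyMeasurable)] at this
  rw [hν.2] at this
  exact this

theorem TR_approx {m : ℕ} (t : RTree m) {W : ℝ → ℝ → ℝ} {M : ℝ} (hM : 0 ≤ M) (h : KB unif01 W M)
    {φ : (Fin (m + 1) → X) → ℝ} (hφ : Continuous φ) {N : ℕ} {g : Fin N → Fin (m + 1) → X → ℝ}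
    (hg : ∀ l a, Continuous (g l a)) {C : ℝ} (hC1 : 1 ≤ C) (hC : ∀ l a y, |g l a y| ≤ C)
    {ε : ℝ} (hap : ∀ y, |φ y - ∑ l, ∏ a, g l a (y a)| ≤ ε)
    {ν : Measure (ℝ × X)} (hν : inTM ν) :
    |TR t W φ ν - ∑ l, TI ν (liftK W) t (fun a z => g l a z.2)| ≤ ε * M ^ m := by
  haveI := hν.1
  have hK := h.lift hν
  have hgm : ∀ l a, Measurable fun z : ℝ × X => g l a z.2 := fun l a =>
    (hg l a).measurable.comp measurable_snd
  have hs : Measurable fun (z : Fin (m + 1) → ℝ × X) a => (z a).2 :=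
    measurable_pi_lambda _ fun a => measurable_snd.comp (measurable_pi_apply a)
  have hpm : ∀ l, Measurable fun z : Fin (m + 1) → ℝ × X => ∏ a, g l a (z a).2 := fun l =>
    Finset.measurable_prod _ fun a _ => (hgm l a).comp (measurable_pi_apply a)
  have hpb : ∀ l (z : Fin (m + 1) → ℝ × X), |∏ a, g l a (z a).2| ≤ C ^ (m + 1) := fun l z => by
    rw [Finset.abs_prod]
    refine (Finset.prod_le_prod (fun a _ => abs_nonneg _) fun a _ => hC l a _).trans ?_
    simp
  have hpi := fun l => RTree.integrable_mul_prod hK t (hpm l) (hpb l)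
  have hsum : ∑ l, TI ν (liftK W) t (fun a z => g l a z.2) =
      ∫ z, (∑ l, ∏ a, g l a (z a).2) * t.prod (liftK W) z ∂(Measure.pi fun _ => ν) := by
    simp_rw [Finset.sum_mul]
    rw [integral_finsetSum _ fun l _ => hpi l]
    refine Finset.sum_congr rfl fun l _ => ?_
    exact (RTree.integral_eq_TI hM hK t _ C hC1 (hgm l) (fun a z => hC l a _)).symm
  obtain ⟨B, hB⟩ : ∃ B, ∀ y, |φ y| ≤ B := by
    obtain ⟨B, hB⟩ := isCompact_univ.exists_bound_of_continuousOn hφ.continuousOn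
    exact ⟨B, fun y => hB y trivial⟩
  have hφm : Measurable fun z : Fin (m + 1) → ℝ × X => φ fun a => (z a).2 := hφ.measurable.comp hs
  rw [hsum, TR, ← integral_sub (RTree.integrable_mul_prod hK t hφm fun z => hB _)
    (RTree.integrable_mul_prod hK t (Finset.measurable_sum _ fun l _ => hpm l)
      (C := ∑ l : Fin N, C ^ (m + 1)) fun z => (Finset.abs_sum_le_sum_abs _ _).trans
        (Finset.sum_le_sum fun l _ => hpb l z))]
  simp_rw [← sub_mul]
  exact RTree.abs_integral_le hM hK t (hφm.sub (Finset.measurable_sum _ fun l _ => hpm l))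
    (fun z => hap _)

theorem exists_common_bound {Y : Type*} [TopologicalSpace Y] [CompactSpace Y] {N k : ℕ}
    {g : Fin N → Fin k → Y → ℝ} (hg : ∀ l a, Continuous (g l a)) :
    ∃ C : ℝ, 1 ≤ C ∧ ∀ l a y, |g l a y| ≤ C := by
  have : ∀ l a, ∃ B, ∀ y, |g l a y| ≤ B := fun l a => by
    obtain ⟨B, hB⟩ := isCompact_univ.exists_bound_of_continuousOn (hg l a).continuousOn
    exact ⟨B, fun y => hB y trivial⟩
  choose B hB using this
  refine ⟨1 + ∑ l, ∑ a, |B l a|, ?_, fun l a y => ?_⟩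
  · have : 0 ≤ ∑ l, ∑ a, |B l a| := Finset.sum_nonneg fun _ _ => Finset.sum_nonneg fun _ _ => abs_nonneg _
    linarith
  · have h1 : |B l a| ≤ ∑ a, |B l a| :=
      Finset.single_le_sum (f := fun a => |B l a|) (fun _ _ => abs_nonneg _) (Finset.mem_univ a)
    have h2 : ∑ a, |B l a| ≤ ∑ l, ∑ a, |B l a| :=
      Finset.single_le_sum (f := fun l => ∑ a, |B l a|) (fun _ _ => Finset.sum_nonneg fun _ _ => abs_nonneg _) (Finset.mem_univ l)
    linarith [hB l a y, le_abs_self (B l a)]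

/-- Lemma A: uniform counting lemma. -/
theorem TR_close {m : ℕ} (t : RTree m) {M : ℝ} (hM : 0 ≤ M)
    {φ : (Fin (m + 1) → X) → ℝ} (hφ : Continuous φ) {ε : ℝ} (hε : 0 < ε) :
    ∃ δ > 0, ∀ W W' : ℝ → ℝ → ℝ, KB unif01 W M → KB unif01 W' M → CutB unif01 W W' δ →
      ∀ ν : Measure (ℝ × X), inTM ν → |TR t W φ ν - TR t W' φ ν| ≤ ε := by
  obtain ⟨N, g, hg, hap⟩ := sw_prod hφ (ε := ε / 3 / (M ^ m + 1)) (by positivity)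
  obtain ⟨C, hC1, hC⟩ := exists_common_bound hg
  obtain ⟨L, hL, hTI⟩ := TI_diff (α := ℝ × X) hM t C hC1
  refine ⟨ε / 3 / (N * L + 1), by positivity, fun W W' h h' hc ν hν => ?_⟩
  haveI := hν.1
  have h1 := TR_approx t hM h hφ hg hC1 hC hap hν
  have h2 := TR_approx t hM h' hφ hg hC1 hC hap hν
  have h3 : ∀ l, |TI ν (liftK W) t (fun a z => g l a z.2) - TI ν (liftK W') t (fun a z => g l a z.2)| ≤
      L * (ε / 3 / (N * L + 1)) := fun l => by
    have := hTI ν (liftK W) (liftK W') (ε / 3 / (N * L + 1)) 0 (fun a z => g l a z.2)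
      (fun a z => g l a z.2) (h.lift hν) (h'.lift hν) (hc.lift h h' hν)
      (fun a => (hg l a).measurable.comp measurable_snd) (fun a => (hg l a).measurable.comp measurable_snd)
      (fun a z => hC l a _) (fun a z => hC l a _) (fun a => by simp)
    rwa [zero_add] at this
  have h4 : |∑ l, TI ν (liftK W) t (fun a z => g l a z.2) - ∑ l, TI ν (liftK W') t (fun a z => g l a z.2)| ≤
      N * (L * (ε / 3 / (N * L + 1))) := by
    rw [← Finset.sum_sub_distrib]
    refine (Finset.abs_sum_le_sum_abs _ _).trans ((Finset.sum_le_sum fun l _ => h3 l).trans ?_)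
    simp
  have h5 : ε / 3 / (M ^ m + 1) * M ^ m ≤ ε / 3 := by
    rw [div_mul_eq_mul_div, div_le_iff₀ (by positivity)]
    have : 0 ≤ ε / 3 := by positivity
    nlinarith
  have h6 : N * (L * (ε / 3 / (N * L + 1))) ≤ ε / 3 := by
    rw [← mul_assoc, mul_div_assoc', div_le_iff₀ (by positivity)]
    have : 0 ≤ ε / 3 := by positivity
    nlinarith
  rw [abs_le] at *
  constructor <;> linarith [h1.1, h1.2, h2.1, h2.2, h4.1, h4.2]

end AQ


theorem KB.integrable {W : ℝ → ℝ → ℝ} {M : ℝ} (h : KB unif01 W M) :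
    Integrable (fun z : ℝ × ℝ => W z.1 z.2) (unif01.prod unif01) := by
  have hm : Measurable fun z : ℝ × ℝ => W z.1 z.2 := h.meas
  refine ⟨hm.aestronglyMeasurable, ?_⟩
  rw [HasFiniteIntegral, lintegral_prod _ hm.enorm.aemeasurable]
  calc _ ≤ ∫⁻ x, ENNReal.ofReal M ∂unif01 := lintegral_mono fun x => h.right x
    _ < ⊤ := by simp

theorem cutB_of_L1 {W W' : ℝ → ℝ → ℝ} {M δ : ℝ} (h : KB unif01 W M) (h' : KB unif01 W' M)
    (hδ : ∫ z : ℝ × ℝ, |W z.1 z.2 - W' z.1 z.2| ∂(unif01.prod unif01) ≤ δ) :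
    CutB unif01 W W' δ := by
  intro g hg hg1
  refine le_trans ?_ hδ
  have hi : Integrable (fun z : ℝ × ℝ => |W z.1 z.2 - W' z.1 z.2|) (unif01.prod unif01) :=
    (h.integrable.sub h'.integrable).abs
  rw [integral_prod_symm _ hi]
  refine integral_mono_of_nonneg (Eventually.of_forall fun x => abs_nonneg _) hi.integral_prod_right
    (Eventually.of_forall fun x => ?_)
  dsimp only
  rw [← integral_sub (h.integrable_op x hg hg1) (h'.integrable_op x hg hg1)]
  refine abs_integral_le_integral_abs.trans (integral_mono
    ((h.integrable_op x hg hg1).sub (h'.integrable_op x hg hg1)).abs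
    ((h.integrable_left x).sub (h'.integrable_left x)).abs fun y => ?_)
  dsimp only
  rw [← sub_mul, abs_mul]
  exact mul_le_of_le_one_right (abs_nonneg _) (hg1 y)

/-- truncation -/
noncomputable def truncK (W : ℝ → ℝ → ℝ) (R : ℝ) : ℝ → ℝ → ℝ := fun x y => if |W x y| ≤ R then W x y else 0

theorem truncK_meas {W : ℝ → ℝ → ℝ} (h : Measurable (Function.uncurry W)) (R : ℝ) :
    Measurable (Function.uncurry (truncK W R)) :=
  Measurable.ite (measurableSet_le h.abs measurable_const) h measurable_const

theorem truncK_abs_le (W : ℝ → ℝ → ℝ) (R : ℝ) (x y : ℝ) : |truncK W R x y| ≤ |W x y| := by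
  rw [truncK]
  split_ifs
  · exact le_rfl
  · simp

theorem KB.trunc {W : ℝ → ℝ → ℝ} {M : ℝ} (h : KB unif01 W M) (R : ℝ) : KB unif01 (truncK W R) M := by
  have e : ∀ x y, ‖truncK W R x y‖ₑ ≤ ‖W x y‖ₑ := fun x y => by
    rw [enorm_le_iff_norm_le]
    exact truncK_abs_le W R x y
  exact ⟨truncK_meas h.meas R, fun x => (lintegral_mono fun y => e y x).trans (h.left x),
    fun x => (lintegral_mono fun y => e x y).trans (h.right x)⟩

theorem truncK_tendsto {W : ℝ → ℝ → ℝ} {M : ℝ} (h : KB unif01 W M) :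
    Tendsto (fun n : ℕ => ∫ z : ℝ × ℝ, |W z.1 z.2 - truncK W n z.1 z.2| ∂(unif01.prod unif01)) atTop
      (nhds 0) := by
  have e0 : (0 : ℝ) = ∫ z : ℝ × ℝ, (0 : ℝ) ∂(unif01.prod unif01) := by simp
  rw [e0]
  refine tendsto_integral_of_dominated_convergence (fun z : ℝ × ℝ => |W z.1 z.2|) ?_ h.integrable.abs ?_ ?_
  · intro n
    exact ((h.integrable.sub (h.trunc n).integrable).abs).aestronglyMeasurable
  · intro n
    refine Eventually.of_forall fun z => ?_
    rw [Real.norm_eq_abs, abs_abs, truncK]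
    split_ifs <;> simp
  · refine Eventually.of_forall fun z => ?_
    refine tendsto_const_nhds.congr' ?_
    filter_upwards [eventually_ge_atTop ⌈|W z.1 z.2|⌉₊] with n hn
    have : |W z.1 z.2| ≤ n := (Nat.le_ceil _).trans (by exact_mod_cast hn)
    rw [truncK, if_pos this]
    simp

theorem KB.of_bdd {W : ℝ → ℝ → ℝ} (h : Measurable (Function.uncurry W)) {R : ℝ}
    (hR : ∀ x y, |W x y| ≤ R) : KB unif01 W R := by
  have e : ∀ x y, ‖W x y‖ₑ ≤ ENNReal.ofReal R := fun x y => by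
    rw [← ofReal_norm_eq_enorm]
    exact ENNReal.ofReal_le_ofReal (hR x y)
  refine ⟨h, fun x => ?_, fun x => ?_⟩
  · exact (lintegral_mono fun y => e y x).trans (by simp)
  · exact (lintegral_mono fun y => e x y).trans (by simp)

theorem KB.mono {α : Type*} [MeasurableSpace α] {ν : Measure α} {W : α → α → ℝ} {M M' : ℝ}
    (h : KB ν W M) (hM : M ≤ M') : KB ν W M' :=
  ⟨h.meas, fun x => (h.left x).trans (ENNReal.ofReal_le_ofReal hM),
    fun x => (h.right x).trans (ENNReal.ofReal_le_ofReal hM)⟩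

theorem exists_cont_kernel {W : ℝ → ℝ → ℝ} (h : Measurable (Function.uncurry W)) {R : ℝ} (hR0 : 0 ≤ R)
    (hR : ∀ x y, |W x y| ≤ R) {δ : ℝ} (hδ : 0 < δ) :
    ∃ W' : ℝ → ℝ → ℝ, Continuous (Function.uncurry W') ∧ (∀ x y, |W' x y| ≤ R) ∧
      ∫ z : ℝ × ℝ, |W z.1 z.2 - W' z.1 z.2| ∂(unif01.prod unif01) ≤ δ := by
  have hi : Integrable (Function.uncurry W) (unif01.prod unif01) := (KB.of_bdd h hR).integrable
  obtain ⟨g, hg, hgi⟩ := hi.exists_boundedContinuous_integral_sub_le hδ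
  refine ⟨fun x y => max (-R) (min R (g (x, y))), ?_, ?_, ?_⟩
  · exact continuous_const.max (continuous_const.min g.continuous)
  · intro x y
    rw [abs_le]
    exact ⟨le_max_left _ _, max_le (by linarith) (min_le_left _ _)⟩
  · refine le_trans ?_ hg
    refine integral_mono_of_nonneg (Eventually.of_forall fun z => abs_nonneg _) (hi.sub hgi).norm
      (Eventually.of_forall fun z => ?_)
    have h1 := abs_le.mp (hR z.1 z.2)
    dsimp only [Function.uncurry, Pi.sub_apply]
    rw [Real.norm_eq_abs]
    rcases le_total R (g (z.1, z.2)) with h2 | h2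
    · rw [min_eq_left h2, max_eq_right (by linarith), abs_of_nonpos (by linarith), abs_of_nonpos (by linarith)]
      linarith
    · rw [min_eq_right h2]
      rcases le_total (-R) (g (z.1, z.2)) with h3 | h3
      · rw [max_eq_right h3]
      · rw [max_eq_left h3, abs_of_nonneg (by linarith), abs_of_nonneg (by linarith)]
        linarith

theorem RTree.continuous_prod {α : Type*} [TopologicalSpace α] {K : α → α → ℝ} (hK : Continuous (Function.uncurry K)) :
    ∀ {m : ℕ} (t : RTree m), Continuous (t.prod K)
  | _, .nil => continuous_const
  | _, .cons t p => by
    refine Continuous.mul ((RTree.continuous_prod hK t).comp ?_) ?_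
    · exact continuous_pi fun a => continuous_apply _
    · have h : Continuous fun z : Fin (_ + 1) → α => (z (Fin.last _), z p.castSucc) :=
        (continuous_apply _).prodMk (continuous_apply _)
      exact hK.comp h

theorem RTree.abs_prod_le {α : Type*} {K : α → α → ℝ} {R : ℝ} (hR0 : 0 ≤ R) (hR : ∀ x y, |K x y| ≤ R) :
    ∀ {m : ℕ} (t : RTree m) (z : Fin (m + 1) → α), |t.prod K z| ≤ R ^ m
  | _, .nil, z => by simp [RTree.prod]
  | _, .cons t p, z => by
    rw [RTree.prod, abs_mul, pow_succ]
    exact mul_le_mul (RTree.abs_prod_le hR0 hR t _) (hR _ _) (abs_nonneg _) (by positivity)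

section AR
variable {X : Type*} [MetricSpace X] [CompactSpace X] [MeasurableSpace X] [BorelSpace X]

theorem PolyApprox.of_approx {T : Measure (ℝ × X) → ℝ}
    (h : ∀ ε > 0, ∃ T', PolyApprox T' ∧ ∀ ν, inTM ν → |T ν - T' ν| ≤ ε) : PolyApprox T := by
  intro ε hε
  obtain ⟨T', hT', h1⟩ := h (ε / 2) (by positivity)
  obtain ⟨N, k, g, C, hg, hC, hap⟩ := hT' (ε / 2) (by positivity)
  refine ⟨N, k, g, C, hg, hC, fun ν hν => ?_⟩
  have := abs_sub_le (T ν) (T' ν) (∑ l, ∏ a, ∫ z, g l a z ∂ν)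
  linarith [h1 ν hν, hap ν hν]

theorem PolyApprox.of_cont {m : ℕ} (t : RTree m) {W : ℝ → ℝ → ℝ} (hW : Continuous (Function.uncurry W))
    {R : ℝ} (hR0 : 0 ≤ R) (hR : ∀ x y, |W x y| ≤ R)
    {φ : (Fin (m + 1) → X) → ℝ} (hφ : Continuous φ) : PolyApprox (TR t W φ) := by
  intro ε hε
  let F : (Fin (m + 1) → ℝ × X) → ℝ := fun z => φ (fun a => (z a).2) * t.prod (liftK W) z
  have hK : Continuous (Function.uncurry (liftK W : ℝ × X → ℝ × X → ℝ)) := by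
    have : Continuous fun p : (ℝ × X) × (ℝ × X) => (p.1.1, p.2.1) := by fun_prop
    exact hW.comp this
  have hF : Continuous F := by
    refine Continuous.mul (hφ.comp (by fun_prop)) (RTree.continuous_prod hK t)
  let e : Icc (0 : ℝ) 1 × X → ℝ × X := fun z => (z.1, z.2)
  have he : Continuous e := by fun_prop
  let p : ℝ × X → Icc (0 : ℝ) 1 × X := fun z => (projIcc 0 1 zero_le_one z.1, z.2)
  have hp : Continuous p := (continuous_projIcc.comp continuous_fst).prodMk continuous_snd
  have hFe : Continuous fun z : Fin (m + 1) → Icc (0 : ℝ) 1 × X => F fun a => e (z a) :=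
    hF.comp (by fun_prop)
  obtain ⟨N, g, hg, hap⟩ := sw_prod hFe hε
  obtain ⟨C, hC1, hC⟩ := exists_common_bound hg
  refine ⟨N, m + 1, fun l a z => g l a (p z), C, fun l a => (hg l a).comp hp, fun l a z => hC l a _,
    fun ν hν => ?_⟩
  haveI := hν.1
  have hgm : ∀ l a, Measurable fun z => g l a (p z) := fun l a => ((hg l a).comp hp).measurable
  have hpm : ∀ l, Measurable fun z : Fin (m + 1) → ℝ × X => ∏ a, g l a (p (z a)) := fun l =>
    Finset.measurable_prod _ fun a _ => (hgm l a).comp (measurable_pi_apply a)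
  have hpb : ∀ l (z : Fin (m + 1) → ℝ × X), |∏ a, g l a (p (z a))| ≤ C ^ (m + 1) := fun l z => by
    rw [Finset.abs_prod]
    refine (Finset.prod_le_prod (fun a _ => abs_nonneg _) fun a _ => hC l a _).trans ?_
    simp
  have hpi : ∀ l, Integrable (fun z : Fin (m + 1) → ℝ × X => ∏ a, g l a (p (z a))) (Measure.pi fun _ => ν) :=
    fun l => integrable_bdd (hpm l) (hpb l)
  have e1 : ∑ l, ∏ a, ∫ z, g l a (p z) ∂ν =
      ∫ z, ∑ l, ∏ a, g l a (p (z a)) ∂(Measure.pi fun _ : Fin (m + 1) => ν) := by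
    rw [integral_finsetSum _ fun l _ => hpi l]
    refine Finset.sum_congr rfl fun l _ => ?_
    rw [integral_fintype_prod_eq_prod (𝕜 := ℝ) (f := fun a z => g l a (p z))]
  obtain ⟨B, hB⟩ : ∃ B, ∀ y, |φ y| ≤ B := by
    obtain ⟨B, hB⟩ := isCompact_univ.exists_bound_of_continuousOn hφ.continuousOn
    exact ⟨B, fun y => hB y trivial⟩
  have hFi : Integrable F (Measure.pi fun _ => ν) := by
    refine integrable_bdd (C := B * R ^ m) hF.measurable fun z => ?_
    simp only [F]
    rw [abs_mul]
    have h0 := hB (fun a => (z a).2)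
    exact mul_le_mul h0 (RTree.abs_prod_le hR0 (fun _ _ => hR _ _) t z) (abs_nonneg _) ((abs_nonneg _).trans h0)
  have hae : ∀ᵐ z ∂(Measure.pi fun _ : Fin (m + 1) => ν), ∀ a, (z a).1 ∈ Icc (0 : ℝ) 1 := by
    rw [ae_all_iff]
    intro a
    exact (Measure.quasiMeasurePreserving_eval (fun _ : Fin (m + 1) => ν) a).ae (inTM_ae hν)
  rw [e1, TR]
  change |∫ z, F z ∂_ - _| ≤ ε
  rw [← integral_sub hFi (integrable_finsetSum _ fun l _ => hpi l)]
  have := norm_integral_le_of_norm_le_const (μ := Measure.pi fun _ : Fin (m + 1) => ν)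
    (f := fun z => F z - ∑ l, ∏ a, g l a (p (z a))) (C := ε) (by
      filter_upwards [hae] with z hz
      have h1 := hap (fun a => p (z a))
      have h2 : (fun a => e (p (z a))) = z := by
        ext a
        · simp only [e, p]
          rw [projIcc_of_mem _ (hz a)]
        · rfl
      rw [h2] at h1
      exact h1)
  simpa using this

theorem PolyApprox.TR {m : ℕ} (t : RTree m) {W : ℝ → ℝ → ℝ} {M : ℝ} (hM : 0 ≤ M) (hW : KB unif01 W M)
    {φ : (Fin (m + 1) → X) → ℝ} (hφ : Continuous φ) : PolyApprox (TR t W φ) := by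
  refine PolyApprox.of_approx fun ε hε => ?_
  obtain ⟨δ, hδ, hcl⟩ := TR_close (X := X) t hM hφ hε
  obtain ⟨n, hn⟩ := ((truncK_tendsto hW).eventually (ge_mem_nhds hδ)).exists
  refine ⟨_, ?_, hcl W (truncK W n) hW (hW.trunc n) (cutB_of_L1 hW (hW.trunc n) hn)⟩
  have hb : ∀ x y, |truncK W n x y| ≤ n := fun x y => by
    rw [truncK]
    split_ifs with h
    · exact h
    · simp
  refine PolyApprox.of_approx fun ε hε => ?_
  obtain ⟨δ, hδ, hcl⟩ := TR_close (X := X) t (Nat.cast_nonneg n) hφ hε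
  obtain ⟨W', hW', hb', hd⟩ := exists_cont_kernel (truncK_meas hW.meas n) (Nat.cast_nonneg n) hb hδ
  have k1 := KB.of_bdd (truncK_meas hW.meas n) hb
  have k2 := KB.of_bdd hW'.measurable hb'
  exact ⟨_, PolyApprox.of_cont t hW' (Nat.cast_nonneg n) hb' hφ, hcl _ _ k1 k2 (cutB_of_L1 k1 k2 hd)⟩

end AR


section comb
variable {ι : Type*} [Fintype ι] [DecidableEq ι]

theorem sum_snoc {m : ℕ} (F : (Fin (m + 2) → ι) → ℝ) :
    ∑ z, F z = ∑ y : Fin (m + 1) → ι, ∑ x, F (Fin.snoc (α := fun _ => ι) y x) := by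
  rw [← Fintype.sum_prod_type_right', ← (Fin.snocEquiv (fun _ : Fin (m + 2) => ι)).sum_comp]
  rfl

theorem RTree.prod_snoc {m : ℕ} (B : ι → ι → ℝ) (t : RTree m) (p : Fin (m + 1))
    (y : Fin (m + 1) → ι) (x : ι) :
    (RTree.cons t p).prod B (Fin.snoc (α := fun _ => ι) y x) = t.prod B y * B x (y p) := by
  simp [RTree.prod]

theorem RTree.prod_nonneg {B : ι → ι → ℝ} (hB : ∀ i j, 0 ≤ B i j) : ∀ {m : ℕ} (t : RTree m) z,
    0 ≤ t.prod B z
  | _, .nil, _ => by simp [RTree.prod]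
  | _, .cons t p, z => by
    simp only [RTree.prod]
    exact mul_nonneg (RTree.prod_nonneg hB t _) (hB _ _)

/-- split a sum according to the value at `l` -/
theorem sum_root {m : ℕ} (f : (Fin (m + 1) → ι) → ℝ) (l : Fin (m + 1)) (g : ι → ℝ) :
    ∑ y, f y * g (y l) = ∑ i, g i * ∑ y, if y l = i then f y else 0 := by
  simp_rw [Finset.mul_sum]
  rw [Finset.sum_comm]
  refine Finset.sum_congr rfl fun y _ => ?_
  simp [mul_comm]

theorem RTree.root_bound {B : ι → ι → ℝ} (hB : ∀ i j, 0 ≤ B i j) {M : ℝ} (hM : 0 ≤ M)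
    (hr : ∀ i, ∑ j, B i j ≤ M) (hc : ∀ i, ∑ j, B j i ≤ M) :
    ∀ {m : ℕ} (t : RTree m) (l : Fin (m + 1)) (j : ι),
      ∑ z, (if z l = j then t.prod B z else 0) ≤ M ^ m
  | _, .nil, l, j => by
    have : ∀ z : Fin 1 → ι, z l = j ↔ z = fun _ => j := by
      intro z
      constructor
      · intro h; ext a; rw [Subsingleton.elim a l, h]
      · intro h; rw [h]
    simp [RTree.prod, this]
  | _, .cons (m := m) t p, l, j => by
    rw [sum_snoc]
    refine Fin.lastCases ?_ (fun l => ?_) l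
    · simp only [RTree.prod_snoc, Fin.snoc_last, Finset.sum_ite_eq', Finset.mem_univ, if_true]
      rw [sum_root (fun y => t.prod B y) p (fun i => B j i)]
      calc _ ≤ ∑ i, B j i * M ^ m :=
            Finset.sum_le_sum fun i _ =>
              mul_le_mul_of_nonneg_left (RTree.root_bound hB hM hr hc t p i) (hB _ _)
        _ ≤ M ^ (m + 1) := by
            rw [← Finset.sum_mul, pow_succ, mul_comm]
            exact mul_le_mul_of_nonneg_left (hr j) (by positivity)
    · simp only [RTree.prod_snoc, Fin.snoc_castSucc]
      calc _ ≤ ∑ y : Fin (m + 1) → ι, (if y l = j then t.prod B y else 0) * M := by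
            refine Finset.sum_le_sum fun y _ => ?_
            split_ifs
            · rw [← Finset.mul_sum]
              exact mul_le_mul_of_nonneg_left (hc _) (RTree.prod_nonneg hB t _)
            · simp
        _ ≤ M ^ (m + 1) := by
            rw [← Finset.sum_mul, pow_succ]
            exact mul_le_mul_of_nonneg_right (RTree.root_bound hB hM hr hc t l j) hM

theorem schur_sq {B : ι → ι → ℝ} (hB : ∀ i j, 0 ≤ B i j) {M : ℝ} (hM : 0 ≤ M)
    (hr : ∀ i, ∑ j, B i j ≤ M) (hc : ∀ i, ∑ j, B j i ≤ M) (C : ι → ι → ℝ) :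
    ∑ a, ∑ b, (∑ x, B x a * C x b) ^ 2 ≤ M ^ 2 * ∑ a, ∑ b, C a b ^ 2 := by
  calc _ ≤ ∑ a, ∑ b, M * ∑ x, B x a * C x b ^ 2 := by
        refine Finset.sum_le_sum fun a _ => Finset.sum_le_sum fun b _ => ?_
        refine (Finset.sum_sq_le_sum_mul_sum_of_sq_eq_mul Finset.univ (f := fun x => B x a)
          (g := fun x => B x a * C x b ^ 2) (fun i _ => hB _ _)
          (fun i _ => mul_nonneg (hB _ _) (sq_nonneg _)) (fun i _ => by ring)).trans ?_
        exact mul_le_mul_of_nonneg_right (hc a)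
          (Finset.sum_nonneg fun i _ => mul_nonneg (hB _ _) (sq_nonneg _))
    _ = M * ∑ x, (∑ a, B x a) * ∑ b, C x b ^ 2 := by
        simp_rw [← Finset.mul_sum]
        congr 1
        simp_rw [Finset.sum_mul, Finset.mul_sum]
        rw [Finset.sum_comm, Finset.sum_comm]
        conv_lhs => enter [2, a]; rw [Finset.sum_comm]
        rw [Finset.sum_comm]
    _ ≤ M * ∑ x, M * ∑ b, C x b ^ 2 := by
        refine mul_le_mul_of_nonneg_left (Finset.sum_le_sum fun x _ => ?_) hM
        exact mul_le_mul_of_nonneg_right (hr x) (Finset.sum_nonneg fun i _ => sq_nonneg _)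
    _ = _ := by rw [← Finset.mul_sum]; ring

theorem RTree.two_root {B : ι → ι → ℝ} (hB : ∀ i j, 0 ≤ B i j) {M : ℝ} (hM : 1 ≤ M)
    (hr : ∀ i, ∑ j, B i j ≤ M) (hc : ∀ i, ∑ j, B j i ≤ M) :
    ∀ {m : ℕ} (t : RTree m) (l p : Fin (m + 1)), l ≠ p → ∀ C : ι → ι → ℝ, (∀ i j, 0 ≤ C i j) →
      2 * ∑ z, t.prod B z * C (z l) (z p) ≤ M ^ m * (∑ i, ∑ j, B i j ^ 2 + ∑ i, ∑ j, C i j ^ 2)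
  | _, .nil, l, p, hlp, C, hC => (hlp (Subsingleton.elim (α := Fin 1) l p)).elim
  | _, .cons (m := m) t q, l, p, hlp, C, hC => by
    have hM0 : 0 < M := by linarith
    have key : ∀ (p : Fin (m + 1)) (C : ι → ι → ℝ), (∀ i j, 0 ≤ C i j) →
        2 * ∑ y, ∑ x, t.prod B y * B x (y q) * C x (y p) ≤
          M ^ (m + 1) * (∑ i, ∑ j, B i j ^ 2 + ∑ i, ∑ j, C i j ^ 2) := by
      intro p C hC
      have hCC : ∀ a b, 0 ≤ ∑ x, B x a * C x b := fun a b =>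
        Finset.sum_nonneg fun x _ => mul_nonneg (hB _ _) (hC _ _)
      by_cases hqp : q = p
      · subst hqp
        have e : ∑ y, ∑ x, t.prod B y * B x (y q) * C x (y q) =
            ∑ y, t.prod B y * (fun b => ∑ x, B x b * C x b) (y q) := by
          simp only [Finset.mul_sum, mul_assoc]
        rw [e, sum_root (fun y => t.prod B y) q (fun b => ∑ x, B x b * C x b)]
        have h1 : ∑ i, (∑ x, B x i * C x i) * (∑ y, if y q = i then t.prod B y else 0) ≤
            ∑ i, (∑ x, B x i * C x i) * M ^ (m + 1) := by
          refine Finset.sum_le_sum fun i _ => mul_le_mul_of_nonneg_left ?_ (hCC i i)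
          exact (RTree.root_bound hB hM0.le hr hc t q i).trans (pow_le_pow_right₀ hM (by lia))
        rw [← Finset.sum_mul] at h1
        have h2 : 2 * ∑ i, ∑ x, B x i * C x i ≤ ∑ i, ∑ j, B i j ^ 2 + ∑ i, ∑ j, C i j ^ 2 := by
          rw [Finset.sum_comm]
          simp_rw [Finset.mul_sum, ← Finset.sum_add_distrib]
          refine Finset.sum_le_sum fun a _ => Finset.sum_le_sum fun b _ => ?_
          nlinarith [sq_nonneg (B a b - C a b)]
        have h3 : (0:ℝ) ≤ M ^ (m + 1) := by positivity
        nlinarith [mul_le_mul_of_nonneg_left h2 h3]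
      · have ih := RTree.two_root hB hM hr hc t q p hqp
          (fun a b => M⁻¹ * ∑ x, B x a * C x b) (fun a b => by have := hCC a b; positivity)
        have e : ∑ y, ∑ x, t.prod B y * B x (y q) * C x (y p) =
            M * ∑ y, t.prod B y * (M⁻¹ * ∑ x, B x (y q) * C x (y p)) := by
          simp_rw [Finset.mul_sum]
          refine Finset.sum_congr rfl fun y _ => Finset.sum_congr rfl fun x _ => ?_
          field_simp
        have hs : ∑ a, ∑ b, (M⁻¹ * ∑ x, B x a * C x b) ^ 2 ≤ ∑ a, ∑ b, C a b ^ 2 := by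
          have := schur_sq hB hM0.le hr hc C
          simp_rw [mul_pow, ← Finset.mul_sum]
          rw [inv_pow, inv_mul_le_iff₀ (by positivity)]
          exact this
        rw [e]
        calc _ = M * (2 * ∑ y, t.prod B y * (M⁻¹ * ∑ x, B x (y q) * C x (y p))) := by ring
          _ ≤ M * (M ^ m * (∑ i, ∑ j, B i j ^ 2 +
              ∑ a, ∑ b, (M⁻¹ * ∑ x, B x a * C x b) ^ 2)) :=
            mul_le_mul_of_nonneg_left ih hM0.le
          _ ≤ M * (M ^ m * (∑ i, ∑ j, B i j ^ 2 + ∑ i, ∑ j, C i j ^ 2)) := by gcongr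
          _ = _ := by ring
    rw [sum_snoc]
    simp only [RTree.prod_snoc]
    revert hlp
    refine Fin.lastCases ?_ (fun l => ?_) l
    · refine Fin.lastCases ?_ (fun p => ?_) p
      · intro h; exact (h rfl).elim
      · intro _
        simpa only [Fin.snoc_last, Fin.snoc_castSucc] using key p C hC
    · refine Fin.lastCases ?_ (fun p => ?_) p
      · intro _
        have := key l (fun i j => C j i) (fun i j => hC j i)
        rw [Finset.sum_comm (f := fun i j => C j i ^ 2)] at this
        simpa only [Fin.snoc_last, Fin.snoc_castSucc] using this
      · intro h
        have h' : l ≠ p := fun e => h (by rw [e])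
        have ih := RTree.two_root hB hM hr hc t l p h' C hC
        simp only [Fin.snoc_castSucc]
        calc _ ≤ 2 * ∑ y, M * (t.prod B y * C (y l) (y p)) := by
              refine mul_le_mul_of_nonneg_left (Finset.sum_le_sum fun y _ => ?_) (by norm_num)
              rw [← Finset.sum_mul, ← Finset.mul_sum]
              have h1 := RTree.prod_nonneg hB t y
              have h2 := mul_le_mul_of_nonneg_left (hc (y q)) (mul_nonneg h1 (hC (y l) (y p)))
              linarith
          _ = M * (2 * ∑ y, t.prod B y * C (y l) (y p)) := by rw [← Finset.mul_sum]; ring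
          _ ≤ M * (M ^ m * (∑ i, ∑ j, B i j ^ 2 + ∑ i, ∑ j, C i j ^ 2)) :=
              mul_le_mul_of_nonneg_left ih hM0.le
          _ = _ := by ring

open Classical in
theorem RTree.noninj (M : ℝ) (hM : 1 ≤ M) :
    ∀ {m : ℕ} (t : RTree m), ∃ C : ℝ, 0 ≤ C ∧ ∀ {ι : Type} [Fintype ι] {B : ι → ι → ℝ},
      (∀ i j, 0 ≤ B i j) → (∀ i, B i i = 0) → (∀ i, ∑ j, B i j ≤ M) → (∀ i, ∑ j, B j i ≤ M) →
      ∑ z, (if Function.Injective z then 0 else t.prod B z) ≤ C * ∑ i, ∑ j, B i j ^ 2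
  | _, .nil => by
    refine ⟨0, le_rfl, ?_⟩
    intro ι _ B _ _ _ _
    have : ∀ z : Fin 1 → ι, Function.Injective z := fun z => Function.injective_of_subsingleton z
    simp [this]
  | _, .cons (m := m) t p => by
    obtain ⟨C, hC0, hC⟩ := RTree.noninj M hM t
    have hM0 : 0 ≤ M := by linarith
    refine ⟨M * C + (m + 1) * M ^ m, by positivity, ?_⟩
    intro ι _ B hB hd hr hc
    rw [sum_snoc]
    simp only [RTree.prod_snoc]
    have h1 : ∀ y x, (if Function.Injective (Fin.snoc (α := fun _ => ι) y x : Fin (m + 2) → ι)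
        then 0 else t.prod B y * B x (y p)) ≤
        (if Function.Injective y then 0 else t.prod B y) * B x (y p) +
          ∑ l, if x = y l then t.prod B y * B x (y p) else 0 := by
      intro y x
      have hp := RTree.prod_nonneg hB t y
      have hp2 := mul_nonneg hp (hB x (y p))
      have hs : 0 ≤ ∑ l, if x = y l then t.prod B y * B x (y p) else 0 :=
        Finset.sum_nonneg fun l _ => by split_ifs <;> [exact hp2; exact le_rfl]
      by_cases hy : Function.Injective y
      · by_cases hx : ∃ l, x = y l
        · obtain ⟨l, hl⟩ := hx
          have h2 : (if x = y l then t.prod B y * B x (y p) else 0) ≤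
              ∑ l, if x = y l then t.prod B y * B x (y p) else 0 :=
            Finset.single_le_sum (f := fun l => if x = y l then t.prod B y * B x (y p) else 0)
              (fun l _ => by split_ifs <;> [exact hp2; exact le_rfl]) (Finset.mem_univ l)
          rw [if_pos hl] at h2
          rw [if_pos hy]
          split_ifs
          · linarith
          · linarith
        · have : Function.Injective (Fin.snoc (α := fun _ => ι) y x : Fin (m + 2) → ι) := by
            rw [Fin.snoc_injective_iff]
            refine ⟨hy, ?_⟩
            rintro ⟨l, hl⟩
            exact hx ⟨l, hl.symm⟩
          rw [if_pos this, if_pos hy]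
          linarith
      · rw [if_neg hy]
        split_ifs
        · linarith
        · linarith
    have h2 : ∀ l, ∑ y, t.prod B y * B (y l) (y p) ≤ M ^ m * ∑ i, ∑ j, B i j ^ 2 := by
      intro l
      by_cases hl : l = p
      · subst hl
        simp only [hd, mul_zero, Finset.sum_const_zero]
        have : 0 ≤ ∑ i, ∑ j, B i j ^ 2 :=
          Finset.sum_nonneg fun _ _ => Finset.sum_nonneg fun _ _ => sq_nonneg _
        positivity
      · have := RTree.two_root hB hM hr hc t l p hl B hB
        linarith
    calc _ ≤ ∑ y, ∑ x, ((if Function.Injective y then 0 else t.prod B y) * B x (y p) +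
          ∑ l, if x = y l then t.prod B y * B x (y p) else 0) :=
        Finset.sum_le_sum fun y _ => Finset.sum_le_sum fun x _ => h1 y x
      _ = ∑ y, (if Function.Injective y then 0 else t.prod B y) * ∑ x, B x (y p) +
          ∑ l, ∑ y, t.prod B y * B (y l) (y p) := by
        simp_rw [Finset.sum_add_distrib]
        congr 1
        · simp_rw [Finset.mul_sum]
        · rw [Finset.sum_comm (s := (Finset.univ : Finset (Fin (m + 1))))]
          refine Finset.sum_congr rfl fun y _ => ?_
          rw [Finset.sum_comm]
          simp
      _ ≤ ∑ y, (if Function.Injective y then 0 else t.prod B y) * M +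
          ∑ l : Fin (m + 1), M ^ m * ∑ i, ∑ j, B i j ^ 2 := by
        refine add_le_add (Finset.sum_le_sum fun y _ => ?_) (Finset.sum_le_sum fun l _ => h2 l)
        refine mul_le_mul_of_nonneg_left (hc _) ?_
        split_ifs <;> [exact le_rfl; exact RTree.prod_nonneg hB t y]
      _ ≤ _ := by
        rw [← Finset.sum_mul]
        have := hC hB hd hr hc
        simp only [Finset.sum_const, Finset.card_univ, Fintype.card_fin, nsmul_eq_mul]
        push_cast
        nlinarith [mul_le_mul_of_nonneg_right this hM0]

end comb


theorem Good.integral_fn {n : ℕ} {τ : ℝ → Fin n} (h : Good τ) (F : Fin n → ℝ) :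
    ∫ y, F (τ y) ∂unif01 = (n : ℝ)⁻¹ * ∑ i, F i := by
  rw [Good.integral_sum h.meas (fun i _ => F i) (fun i => integrable_const _), Finset.mul_sum]
  refine Finset.sum_congr rfl fun i _ => ?_
  rw [setIntegral_const, h.real]
  rfl

/-- signs -/
def sg {n : ℕ} (ξ : Fin n → Bool) (j : Fin n) : ℝ := if ξ j then 1 else -1

theorem sg_abs {n : ℕ} (ξ : Fin n → Bool) (j : Fin n) : |sg ξ j| = 1 := by
  unfold sg; split_ifs <;> simp

theorem sg_sum {n : ℕ} (j k : Fin n) :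
    ∑ ξ : Fin n → Bool, sg ξ j * sg ξ k = if j = k then 2 ^ n else 0 := by
  split_ifs with h
  · subst h
    have : ∀ ξ : Fin n → Bool, sg ξ j * sg ξ j = 1 := fun ξ => by
      unfold sg; split_ifs <;> simp
    simp [this]
  · have hinv : Function.Involutive
        (fun ξ : Fin n → Bool => Function.update ξ j (!ξ j)) := by
      intro ξ
      ext a
      by_cases ha : a = j
      · subst ha; simp
      · simp [ha]
    let P : Equiv.Perm (Fin n → Bool) := hinv.toPerm
    have e := Equiv.sum_comp P (fun ξ => sg ξ j * sg ξ k)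
    have e2 : ∀ ξ : Fin n → Bool, sg (P ξ) j * sg (P ξ) k =
        - (sg ξ j * sg ξ k) := by
      intro ξ
      have hk : k ≠ j := fun e => h e.symm
      simp only [P, Function.Involutive.coe_toPerm, sg, Function.update_self,
        Function.update_of_ne hk]
      cases ξ j <;> cases ξ k <;> simp
    simp_rw [e2, Finset.sum_neg_distrib] at e
    linarith

theorem sg_form {n : ℕ} (u w : Fin n → ℝ) :
    ∑ ξ : Fin n → Bool, (∑ j, u j * sg ξ j) * (∑ k, w k * sg ξ k) = 2 ^ n * ∑ j, u j * w j := by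
  simp_rw [Finset.sum_mul_sum]
  rw [Finset.sum_comm]
  rw [Finset.mul_sum]
  refine Finset.sum_congr rfl fun j _ => ?_
  rw [Finset.sum_comm]
  have : ∀ k, ∑ ξ : Fin n → Bool, u j * sg ξ j * (w k * sg ξ k) =
      u j * w k * if j = k then 2 ^ n else 0 := by
    intro k
    rw [← sg_sum, Finset.mul_sum]
    refine Finset.sum_congr rfl fun ξ _ => ?_
    ring
  simp_rw [this]
  simp
  ring

theorem sq_bound {n : ℕ} {τ : ℝ → Fin n} (hτ : Good τ) {W : ℝ → ℝ → ℝ} {M : ℝ} (hM : 0 ≤ M)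
    (hW : KB unif01 W M) {q : Fin n → Fin n → ℝ} (hq : ∀ i, ∑ j, |q j i| ≤ M) {R : ℝ} (hR : 0 ≤ R)
    {δ : ℝ} (hcut : CutB unif01 (fun y x => n * q (τ y) (τ x)) W δ) :
    (n : ℝ)⁻¹ * ∑ i, ∑ j, q j i ^ 2 ≤ M * δ +
      (M * ∫ z : ℝ × ℝ, |W z.1 z.2 - truncK W R z.1 z.2| ∂(unif01.prod unif01)) + R * M / n := by
  have hn := hτ.pos
  have hqM : ∀ i j, |q j i| ≤ M := fun i j =>
    (Finset.single_le_sum (f := fun j => |q j i|) (fun _ _ => abs_nonneg _) (Finset.mem_univ j)).trans (hq i)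
  have mfin : ∀ F : Fin n → ℝ, Measurable fun x => F (τ x) := fun F =>
    (measurable_of_finite F).comp hτ.meas
  let g : Fin n → ℝ → ℝ := fun j => (τ ⁻¹' {j}).indicator (fun _ => 1)
  have hg : ∀ j, Measurable (g j) := fun j => measurable_const.indicator (hτ.ms j)
  have hgv : ∀ j y, g j y = if τ y = j then 1 else 0 := fun j y => by
    simp only [g, indicator, mem_preimage, mem_singleton_iff]
  have hg1 : ∀ j y, |g j y| ≤ 1 := fun j y => by
    rw [hgv]; split_ifs <;> simp
  let b : Fin n → ℝ → ℝ := fun j x => ∫ y, W y x * g j y ∂unif01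
  have hbm : ∀ j, Measurable (b j) := fun j => hW.measurable_op (hg j)
  have hbM : ∀ j x, |b j x| ≤ M := fun j x => by
    simpa using hW.abs_op_le hM x zero_le_one (hg j) (hg1 j)
  have hA : ∀ (ξ : Fin n → Bool) x, ∫ y, (n * q (τ y) (τ x)) * sg ξ (τ y) ∂unif01 =
      ∑ j, q j (τ x) * sg ξ j := by
    intro ξ x
    rw [hτ.integral_fn (fun j => n * q j (τ x) * sg ξ j), Finset.mul_sum]
    refine Finset.sum_congr rfl fun j _ => ?_
    field_simp
  have hB : ∀ (ξ : Fin n → Bool) x, ∫ y, W y x * sg ξ (τ y) ∂unif01 = ∑ j, b j x * sg ξ j := by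
    intro ξ x
    have : ∀ y, W y x * sg ξ (τ y) = ∑ j, W y x * g j y * sg ξ j := by
      intro y
      simp [hgv]
    simp_rw [this]
    rw [integral_finsetSum _ fun j _ => (hW.integrable_op x (hg j) (hg1 j)).mul_const _]
    simp_rw [integral_mul_const]
    rfl
  have hAM : ∀ (ξ : Fin n → Bool) i, |∑ j, q j i * sg ξ j| ≤ M := by
    intro ξ i
    refine (Finset.abs_sum_le_sum_abs _ _).trans ?_
    simp_rw [abs_mul, sg_abs, mul_one]
    exact hq i
  have iqb : ∀ j, Integrable (fun x => q j (τ x) * (q j (τ x) - b j x)) unif01 := by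
    intro j
    have hm : Measurable fun x => q j (τ x) * (q j (τ x) - b j x) :=
      (mfin (q j)).mul ((mfin (q j)).sub (hbm j))
    refine integrable_bdd hm (C := M * (M + M)) fun x => ?_
    rw [abs_mul]
    refine mul_le_mul (hqM _ _) ?_ (abs_nonneg _) hM
    exact (abs_sub _ _).trans (add_le_add (hqM _ _) (hbM _ _))
  have iA : ∀ ξ : Fin n → Bool, Integrable (fun x => (∑ j, q j (τ x) * sg ξ j) *
      (∑ j, (q j (τ x) - b j x) * sg ξ j)) unif01 := by
    intro ξ
    have hm : Measurable fun x => (∑ j, (q j (τ x) - b j x) * sg ξ j) := by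
      refine Finset.measurable_sum _ fun j _ => ?_
      exact ((mfin (q j)).sub (hbm j)).mul_const _
    refine integrable_bdd ((mfin fun i => ∑ j, q j i * sg ξ j).mul hm)
      (C := M * ∑ j : Fin n, (M + M)) fun x => ?_
    rw [abs_mul]
    refine mul_le_mul (hAM _ _) ?_ (abs_nonneg _) hM
    refine (Finset.abs_sum_le_sum_abs _ _).trans (Finset.sum_le_sum fun j _ => ?_)
    rw [abs_mul, sg_abs, mul_one]
    exact (abs_sub _ _).trans (add_le_add (hqM _ _) (hbM _ _))
  -- Step 1
  have step1 : ∫ x, ∑ j, q j (τ x) * (q j (τ x) - b j x) ∂unif01 ≤ M * δ := by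
    have h1 : ∀ ξ : Fin n → Bool, ∫ x, (∑ j, q j (τ x) * sg ξ j) *
        (∑ j, (q j (τ x) - b j x) * sg ξ j) ∂unif01 ≤ M * δ := by
      intro ξ
      have hc := hcut (fun y => sg ξ (τ y)) (mfin (sg ξ)) (fun y => (sg_abs _ _).le)
      simp_rw [hA, hB, ← Finset.sum_sub_distrib, ← sub_mul] at hc
      refine le_trans ?_ (mul_le_mul_of_nonneg_left hc hM)
      rw [← integral_const_mul]
      have hm : Measurable fun x => (∑ j, (q j (τ x) - b j x) * sg ξ j) := by
        refine Finset.measurable_sum _ fun j _ => ?_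
        exact ((mfin (q j)).sub (hbm j)).mul_const _
      refine integral_mono (iA ξ) ?_ fun x => ?_
      · refine Integrable.const_mul (integrable_bdd hm (C := ∑ j : Fin n, (M + M)) fun x => ?_).abs _
        refine (Finset.abs_sum_le_sum_abs _ _).trans (Finset.sum_le_sum fun j _ => ?_)
        rw [abs_mul, sg_abs, mul_one]
        exact (abs_sub _ _).trans (add_le_add (hqM _ _) (hbM _ _))
      · refine (le_abs_self _).trans ?_
        rw [abs_mul]
        exact mul_le_mul_of_nonneg_right (hAM _ _) (abs_nonneg _)
    have h2 : ∑ ξ : Fin n → Bool, ∫ x, (∑ j, q j (τ x) * sg ξ j) *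
        (∑ j, (q j (τ x) - b j x) * sg ξ j) ∂unif01 =
        2 ^ n * ∫ x, ∑ j, q j (τ x) * (q j (τ x) - b j x) ∂unif01 := by
      rw [← integral_finsetSum _ fun ξ _ => iA ξ, ← integral_const_mul]
      refine integral_congr_ae (Eventually.of_forall fun x => ?_)
      exact sg_form _ _
    have h3 := Finset.sum_le_sum fun ξ (_ : ξ ∈ (Finset.univ : Finset (Fin n → Bool))) => h1 ξ
    rw [h2] at h3
    simp only [Finset.sum_const, Finset.card_univ, Fintype.card_pi, Fintype.card_bool,
      Finset.prod_const, Fintype.card_fin, nsmul_eq_mul] at h3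
    push_cast at h3
    exact le_of_mul_le_mul_left h3 (by positivity)
  -- Step 2
  have hD : Integrable (fun z : ℝ × ℝ => |W z.1 z.2 - truncK W R z.1 z.2|) (unif01.prod unif01) :=
    (hW.integrable.sub (hW.trunc R).integrable).abs
  have step2 : ∀ x, ∑ j, q j (τ x) * b j x ≤
      M * ∫ y, |W y x - truncK W R y x| ∂unif01 + R * M / n := by
    intro x
    have hWi : Integrable (fun y => |W y x - truncK W R y x|) unif01 :=
      ((hW.integrable_left x).sub ((hW.trunc R).integrable_left x)).abs
    have hgi : ∀ j, Integrable (g j) unif01 := fun j => integrable_bdd (hg j) (hg1 j)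
    have hWg : ∀ j, Integrable (fun y => |W y x - truncK W R y x| * g j y) unif01 := fun j => by
      have := hWi.bdd_mul (hg j).aestronglyMeasurable (Eventually.of_forall (hg1 j))
      exact this.congr (Eventually.of_forall fun y => mul_comm _ _)
    have hgint : ∀ j, ∫ y, g j y ∂unif01 = (n : ℝ)⁻¹ := fun j => by
      simp only [g]
      rw [integral_indicator_const _ (hτ.ms j), hτ.real]
      simp
    have hbj : ∀ j, |b j x| ≤ ∫ y, |W y x - truncK W R y x| * g j y ∂unif01 + R * (n : ℝ)⁻¹ := by
      intro j
      rw [← hgint j, ← integral_const_mul, ← integral_add (hWg j) ((hgi j).const_mul R)]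
      refine abs_integral_le_integral_abs.trans (integral_mono (hW.integrable_op x (hg j) (hg1 j)).abs
        ((hWg j).add ((hgi j).const_mul R)) fun y => ?_)
      dsimp only
      rw [hgv]
      split_ifs
      · simp only [mul_one, truncK]
        split_ifs with h
        · simpa using h
        · simp [hR]
      · simp
    have hsum : ∑ j, ∫ y, |W y x - truncK W R y x| * g j y ∂unif01 =
        ∫ y, |W y x - truncK W R y x| ∂unif01 := by
      rw [← integral_finsetSum _ fun j _ => hWg j]
      refine integral_congr_ae (Eventually.of_forall fun y => ?_)
      simp [hgv]
    calc _ ≤ ∑ j, |q j (τ x)| * |b j x| := Finset.sum_le_sum fun j _ => by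
          rw [← abs_mul]; exact le_abs_self _
      _ ≤ ∑ j, (M * ∫ y, |W y x - truncK W R y x| * g j y ∂unif01 + |q j (τ x)| * (R * (n : ℝ)⁻¹)) := by
          refine Finset.sum_le_sum fun j _ => ?_
          have h0 : 0 ≤ ∫ y, |W y x - truncK W R y x| * g j y ∂unif01 :=
            integral_nonneg fun y => mul_nonneg (abs_nonneg _) (by
              show 0 ≤ g j y
              rw [hgv]; split_ifs <;> simp)
          have h1 := mul_le_mul_of_nonneg_left (hbj j) (abs_nonneg (q j (τ x)))
          have h2 := mul_le_mul_of_nonneg_right (hqM (τ x) j) h0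
          nlinarith
      _ ≤ _ := by
          rw [Finset.sum_add_distrib, ← Finset.mul_sum, hsum, ← Finset.sum_mul]
          have : (∑ j, |q j (τ x)|) * (R * (n : ℝ)⁻¹) ≤ M * (R * (n : ℝ)⁻¹) :=
            mul_le_mul_of_nonneg_right (hq _) (by positivity)
          have e : M * (R * (n : ℝ)⁻¹) = R * M / n := by field_simp
          linarith
  have hE : Integrable (fun x => M * ∫ y, |W y x - truncK W R y x| ∂unif01 + R * M / n) unif01 :=
    (hD.integral_prod_right.const_mul M).add (integrable_const _)
  have iqb2 : Integrable (fun x => ∑ j, q j (τ x) * b j x) unif01 := by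
    refine integrable_finsetSum _ fun j _ => ?_
    refine integrable_bdd ((mfin (q j)).mul (hbm j)) (C := M * M) fun x => ?_
    rw [abs_mul]
    exact mul_le_mul (hqM _ _) (hbM _ _) (abs_nonneg _) hM
  have step3 : ∫ x, ∑ j, q j (τ x) * b j x ∂unif01 ≤
      M * (∫ z : ℝ × ℝ, |W z.1 z.2 - truncK W R z.1 z.2| ∂(unif01.prod unif01)) + R * M / n := by
    refine (integral_mono iqb2 hE step2).trans ?_
    rw [integral_add (hD.integral_prod_right.const_mul M) (integrable_const _), integral_const_mul,
      integral_prod_symm _ hD]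
    simp
  have e : (n : ℝ)⁻¹ * ∑ i, ∑ j, q j i ^ 2 = ∫ x, ∑ j, q j (τ x) * (q j (τ x) - b j x) ∂unif01 +
      ∫ x, ∑ j, q j (τ x) * b j x ∂unif01 := by
    rw [← hτ.integral_fn (fun i => ∑ j, q j i ^ 2),
      ← integral_add (integrable_finsetSum _ fun j _ => iqb j) iqb2]
    refine integral_congr_ae (Eventually.of_forall fun x => ?_)
    dsimp only
    rw [← Finset.sum_add_distrib]
    refine Finset.sum_congr rfl fun j _ => ?_
    ring
  rw [e]
  linarith


theorem RTree.prod_scale {ι : Type*} (Q : ι → ι → ℝ) (c : ℝ) : ∀ {m : ℕ} (t : RTree m) z,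
    t.prod (fun a b => |Q a b| / c) z = |t.prod Q z| / c ^ m
  | _, .nil, _ => by simp [RTree.prod]
  | _, .cons t p, z => by
    simp only [RTree.prod]
    rw [RTree.prod_scale Q c t, abs_mul, pow_succ, div_mul_div_comm]

section
variable {X : Type*} [MetricSpace X] [CompactSpace X] [MeasurableSpace X] [BorelSpace X]

theorem TR_step {m n : ℕ} (t : RTree m) {τ : ℝ → Fin n} (hτ : Measurable τ) (Q : Fin n → Fin n → ℝ)
    {φ : (Fin (m + 1) → X) → ℝ} (hφ : Continuous φ) {ν : Measure (ℝ × X)} (hν : inTM ν) :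
    TR t (fun a b => Q (τ a) (τ b)) φ ν =
      ∫ z, φ (fun a => (z a).2) * t.prod (fun p q : Fin n × X => Q p.1 q.1) z
        ∂(Measure.pi fun _ => ν.map (Prod.map τ id)) := by
  haveI := hν.1
  have hf : Measurable (Prod.map τ (id : X → X)) := hτ.prodMap measurable_id
  haveI : IsProbabilityMeasure (ν.map (Prod.map τ (id : X → X))) :=
    Measure.isProbabilityMeasure_map hf.aemeasurable
  rw [← Measure.pi_map_pi (fun _ : Fin (m + 1) => hf.aemeasurable)]
  have hK : Measurable (Function.uncurry fun p q : Fin n × X => Q p.1 q.1) := by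
    have h1 : Measurable (Function.uncurry Q) := measurable_of_finite _
    exact h1.comp ((measurable_fst.comp measurable_fst).prodMk (measurable_fst.comp measurable_snd))
  rw [integral_map]
  · rw [TR]
    refine integral_congr_ae (Eventually.of_forall fun z => ?_)
    have e := RTree.prod_comp (fun p q : Fin n × X => Q p.1 q.1) (Prod.map τ (id : X → X)) t z
    have e2 : (fun i => Prod.map τ (id : X → X) (z i)) = Prod.map τ id ∘ z := rfl
    dsimp only
    rw [e2, e]
    rfl
  · exact (measurable_pi_lambda _ fun a => hf.comp (measurable_pi_apply a)).aemeasurable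
  · refine Measurable.aestronglyMeasurable ?_
    refine Measurable.mul (hφ.measurable.comp ?_) (RTree.measurable_prod hK t)
    exact measurable_pi_lambda _ fun a => measurable_snd.comp (measurable_pi_apply a)

/-- Rooted V-statistic. -/
noncomputable def Vst {X : Type*} {m n : ℕ} (t : RTree m) (φ : (Fin (m + 1) → X) → ℝ) (Q : Fin n → Fin n → ℝ)
    (x : Fin n → X) : ℝ := (∑ i : Fin (m + 1) → Fin n, φ (x ∘ i) * t.prod Q i) / (n : ℝ) ^ (m + 1)

theorem TR_emp {m n : ℕ} (t : RTree m) {τ : ℝ → Fin n} (hτ : Good τ) (Q : Fin n → Fin n → ℝ)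
    {φ : (Fin (m + 1) → X) → ℝ} (hφ : Continuous φ) (x : Fin n → X) :
    TR t (fun a b => Q (τ a) (τ b)) φ (emp τ x) = Vst t φ Q x := by
  rw [TR_step t hτ.meas Q hφ (emp_inTM hτ.meas x)]
  have hf : Measurable (Prod.map τ (id : X → X)) := hτ.meas.prodMap measurable_id
  have hx : Measurable fun i : Fin n => (i, x i) := measurable_of_finite _
  have e1 : (emp τ x).map (Prod.map τ id) = (unif01.map τ).map (fun i => (i, x i)) := by
    rw [emp, Measure.map_map hf (emp_meas hτ.meas x), Measure.map_map hx hτ.meas]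
    rfl
  haveI : IsProbabilityMeasure (unif01.map τ) := Measure.isProbabilityMeasure_map hτ.meas.aemeasurable
  haveI : IsProbabilityMeasure ((unif01.map τ).map (fun i => (i, x i))) :=
    Measure.isProbabilityMeasure_map hx.aemeasurable
  rw [e1, ← Measure.pi_map_pi (fun _ : Fin (m + 1) => hx.aemeasurable)]
  have hK : Measurable (Function.uncurry fun p q : Fin n × X => Q p.1 q.1) := by
    have h1 : Measurable (Function.uncurry Q) := measurable_of_finite _
    exact h1.comp ((measurable_fst.comp measurable_fst).prodMk (measurable_fst.comp measurable_snd))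
  rw [integral_map]
  · rw [integral_fintype (.of_finite), Vst, Finset.sum_div]
    refine Finset.sum_congr rfl fun i _ => ?_
    have e := RTree.prod_comp (fun p q : Fin n × X => Q p.1 q.1) (fun i => (i, x i)) t i
    have e2 : (fun j => (i j, x (i j))) = (fun i => (i, x i)) ∘ i := rfl
    dsimp only
    rw [e2, e]
    have e3 : (Measure.pi fun _ : Fin (m + 1) => unif01.map τ).real {i} = ((n : ℝ) ^ (m + 1))⁻¹ := by
      rw [measureReal_def, Measure.pi_singleton]
      simp_rw [Measure.map_apply hτ.meas (measurableSet_singleton _), hτ.mass]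
      have := hτ.pos
      simp [ENNReal.toReal_ofReal]
    rw [e3, smul_eq_mul, div_eq_inv_mul]
    rfl
  · exact (measurable_pi_lambda _ fun a => hx.comp (measurable_pi_apply a)).aemeasurable
  · refine Measurable.aestronglyMeasurable ?_
    refine Measurable.mul (hφ.measurable.comp ?_) (RTree.measurable_prod hK t)
    exact measurable_pi_lambda _ fun a => measurable_snd.comp (measurable_pi_apply a)

end

theorem Vstat_eq {X : Type*} {m n : ℕ} {G : SimpleGraph (Fin (m + 1))} [DecidableRel G.Adj]
    {t : RTree m} {e : Fin (m + 1) ≃ Fin (m + 1)} {φ : (Fin (m + 1) → X) → ℝ} {Q : Fin n → Fin n → ℝ}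
    (h : ∀ z : Fin (m + 1) → Fin n, edgeProd G (fun a b => Q (z a) (z b)) = t.prod Q (z ∘ e))
    (x : Fin n → X) :
    Vstat G φ n Q x = Vst t (fun w => φ (w ∘ e.symm)) Q x := by
  unfold Vstat Vst
  congr 1
  simp_rw [h]
  refine (Equiv.sum_comp (Equiv.arrowCongr e (Equiv.refl (Fin n)))
    (fun i => φ (x ∘ i) * t.prod Q (i ∘ e))).symm.trans ?_
  refine Finset.sum_congr rfl fun i _ => ?_
  congr 2
  ext a
  simp [Equiv.arrowCongr]

theorem U_sub_V {X : Type*} {m n : ℕ} {G : SimpleGraph (Fin (m + 1))} [DecidableRel G.Adj]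
    {t : RTree m} {e : Fin (m + 1) ≃ Fin (m + 1)} {φ : (Fin (m + 1) → X) → ℝ} {Q : Fin n → Fin n → ℝ}
    (h : ∀ z : Fin (m + 1) → Fin n, edgeProd G (fun a b => Q (z a) (z b)) = t.prod Q (z ∘ e))
    {A : ℝ} (hA : ∀ w, |φ w| ≤ A) (x : Fin n → X) :
    |Ustat G φ n Q x - Vstat G φ n Q x| ≤
      A * ((n : ℝ)⁻¹ * ∑ z, (if Function.Injective z then 0 else t.prod (fun a b => |Q a b| / n) z)) := by
  unfold Ustat Vstat
  rw [Finset.sum_filter, ← sub_div, ← Finset.sum_sub_distrib, abs_div]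
  have hn : |(n : ℝ) ^ (m + 1)| = (n : ℝ) ^ (m + 1) := abs_of_nonneg (by positivity)
  rw [hn]
  have h1 : |∑ i, ((if Function.Injective i then φ (x ∘ i) * edgeProd G (fun a b => Q (i a) (i b)) else 0)
      - φ (x ∘ i) * edgeProd G (fun a b => Q (i a) (i b)))| ≤
      ∑ i : Fin (m + 1) → Fin n, A * (if Function.Injective i then 0 else |t.prod Q (i ∘ e)|) := by
    refine (Finset.abs_sum_le_sum_abs _ _).trans (Finset.sum_le_sum fun i _ => ?_)
    split_ifs
    · simp
    · rw [zero_sub, abs_neg, abs_mul, h]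
      exact mul_le_mul_of_nonneg_right (hA _) (abs_nonneg _)
  have h2 : ∑ i : Fin (m + 1) → Fin n, A * (if Function.Injective i then 0 else |t.prod Q (i ∘ e)|) =
      A * ∑ i : Fin (m + 1) → Fin n, (if Function.Injective i then 0 else |t.prod Q i|) := by
    rw [← Finset.mul_sum]
    congr 1
    refine (Equiv.sum_comp (Equiv.arrowCongr e (Equiv.refl (Fin n)))
      (fun i => if Function.Injective i then 0 else |t.prod Q (i ∘ e)|)).symm.trans ?_
    refine Finset.sum_congr rfl fun i _ => ?_
    have e1 : (Equiv.arrowCongr e (Equiv.refl (Fin n))) i = i ∘ e.symm := by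
      ext a
      simp [Equiv.arrowCongr]
    have e2 : (i ∘ e.symm) ∘ e = i := by ext a; simp
    rw [e1, e2]
    simp only [Equiv.injective_comp]
  refine (div_le_div_of_nonneg_right (h1.trans h2.le) (by positivity)).trans (le_of_eq ?_)
  rw [mul_div_assoc]
  congr 1
  simp_rw [RTree.prod_scale]
  rw [Finset.sum_div, Finset.mul_sum]
  refine Finset.sum_congr rfl fun i _ => ?_
  split_ifs
  · simp
  · rw [pow_succ]
    field_simp


/-- The cell index of a point. -/
noncomputable def idx (n : ℕ) [NeZero n] (x : ℝ) : Fin n :=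
  ⟨min (⌈(n : ℝ) * x⌉₊ - 1) (n - 1), by have := NeZero.pos n; lia⟩

theorem idx_meas (n : ℕ) [NeZero n] : Measurable (idx n) := by
  have h : Measurable fun x : ℝ => ⌈(n : ℝ) * x⌉₊ := Nat.measurable_ceil.comp (measurable_const.mul measurable_id)
  have e : idx n = (fun k : ℕ => (⟨min (k - 1) (n - 1), by have := NeZero.pos n; lia⟩ : Fin n)) ∘
      fun x : ℝ => ⌈(n : ℝ) * x⌉₊ := rfl
  rw [e]
  exact (measurable_of_countable _).comp h

theorem idx_iff (n : ℕ) [NeZero n] {x : ℝ} (hx : x ∈ Ioc (0:ℝ) 1) (i : Fin n) :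
    x ∈ Set.Ioc (((i : ℕ) : ℝ)/n) ((((i : ℕ) : ℝ)+1)/n) ↔ idx n x = i := by
  have hn : (0:ℝ) < n := by exact_mod_cast NeZero.pos n
  have hpos : 0 < (n : ℝ) * x := mul_pos hn hx.1
  have h1 : 1 ≤ ⌈(n : ℝ) * x⌉₊ := Nat.one_le_ceil_iff.mpr hpos
  have h2 : ⌈(n : ℝ) * x⌉₊ ≤ n := Nat.ceil_le.mpr (by nlinarith [hx.2])
  have e : idx n x = i ↔ ⌈(n : ℝ) * x⌉₊ = (i : ℕ) + 1 := by
    rw [Fin.ext_iff]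
    simp only [idx]
    lia
  rw [e, Nat.ceil_eq_iff (by lia), mem_Ioc, div_lt_iff₀ hn, le_div_iff₀ hn]
  push_cast
  simp only [Nat.add_sub_cancel, mul_comm x]

theorem stepKernel_eq (n : ℕ) [NeZero n] (Q : Fin n → Fin n → ℝ) {x y : ℝ} (hx : x ∈ Ioc (0:ℝ) 1)
    (hy : y ∈ Ioc (0:ℝ) 1) : stepKernel n Q x y = Q (idx n x) (idx n y) := by
  unfold stepKernel
  simp_rw [idx_iff n hx, idx_iff n hy]
  rw [Finset.sum_eq_single (idx n x), Finset.sum_eq_single (idx n y)]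
  · simp
  · intro j _ hj
    rw [if_neg fun h => hj h.2.symm]
  · simp
  · intro i _ hi
    refine Finset.sum_eq_zero fun j _ => ?_
    rw [if_neg fun h => hi h.1.symm]
  · simp

theorem ae_Ioc : ∀ᵐ x ∂unif01, x ∈ Ioc (0:ℝ) 1 := by
  rw [unif01, ← restrict_Ioc_eq_restrict_Icc]
  exact ae_restrict_mem measurableSet_Ioc

theorem idx_good (n : ℕ) [NeZero n] : Good (idx n) := by
  refine ⟨idx_meas n, fun i => ?_⟩
  have hn : (0:ℝ) < n := by exact_mod_cast NeZero.pos n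
  have h1 : unif01 (idx n ⁻¹' {i}) = unif01 (Ioc (((i : ℕ) : ℝ)/n) ((((i : ℕ) : ℝ)+1)/n)) := by
    refine measure_congr ?_
    filter_upwards [ae_Ioc] with x hx
    exact propext (idx_iff n hx i).symm
  have hin : (((i : ℕ) : ℝ)+1) ≤ n := by exact_mod_cast i.2
  have hsub : Ioc (((i : ℕ) : ℝ)/n) ((((i : ℕ) : ℝ)+1)/n) ⊆ Icc 0 1 := by
    intro x hx
    refine ⟨le_trans (by positivity) hx.1.le, hx.2.trans ?_⟩
    rw [div_le_one hn]
    exact hin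
  rw [h1, unif01, Measure.restrict_apply measurableSet_Ioc, inter_eq_left.mpr hsub, Real.volume_Ioc]
  congr 1
  field_simp
  ring

theorem Good.comp {n : ℕ} {τ : ℝ → Fin n} (h : Good τ) {σ : ℝ → ℝ} (hσ : MeasurePreserving σ unif01 unif01) :
    Good (τ ∘ σ) := by
  refine ⟨h.meas.comp hσ.measurable, fun i => ?_⟩
  rw [preimage_comp, hσ.measure_preimage (h.ms i).nullMeasurableSet, h.mass]

theorem step_KB {n : ℕ} {τ : ℝ → Fin n} (hτ : Good τ) {Q : Fin n → Fin n → ℝ} {M : ℝ}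
    (hr : ∀ i, ∑ j, |Q i j| / n ≤ M) (hs : ∀ i j, Q i j = Q j i) :
    KB unif01 (fun a b => Q (τ a) (τ b)) M := by
  have hm : Measurable (Function.uncurry Q) := measurable_of_finite _
  have key : ∀ i, ∫⁻ y, ‖Q i (τ y)‖ₑ ∂unif01 ≤ ENNReal.ofReal M := by
    intro i
    have hm : Measurable fun y => Q i (τ y) := (measurable_of_finite (Q i)).comp hτ.meas
    have hi : Integrable (fun y => Q i (τ y)) unif01 := integrable_bdd hm (C := ∑ j, |Q i j|)
      fun y => Finset.single_le_sum (f := fun j => |Q i j|) (fun _ _ => abs_nonneg _) (Finset.mem_univ _)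
    rw [← ofReal_integral_norm_eq_lintegral_enorm hi]
    refine ENNReal.ofReal_le_ofReal ?_
    simp_rw [Real.norm_eq_abs]
    rw [hτ.integral_fn (fun j => |Q i j|), ← div_eq_inv_mul, Finset.sum_div]
    exact hr i
  refine ⟨?_, fun x => ?_, fun x => key _⟩
  · exact hm.comp ((hτ.meas.comp measurable_fst).prodMk (hτ.meas.comp measurable_snd))
  · simp_rw [hs _ (τ x)]
    exact key _

theorem row_bound {n : ℕ} [NeZero n] {Q : Fin n → Fin n → ℝ} {M : ℝ} (hM : 0 ≤ M)
    (h : eLpNorm (degFun (stepKernel n Q)) ⊤ unif01 ≤ ENNReal.ofReal M) (i : Fin n) :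
    ∑ j, |Q i j| / n ≤ M := by
  have hn : (0:ℝ) < n := by exact_mod_cast NeZero.pos n
  have h1 : ∀ᵐ x ∂unif01, ‖degFun (stepKernel n Q) x‖ₑ ≤ ENNReal.ofReal M := by
    rw [eLpNorm_exponent_top] at h
    filter_upwards [ae_le_eLpNormEssSup (f := degFun (stepKernel n Q)) (μ := unif01)] with x hx
    exact hx.trans h
  have h2 : ∃ᵐ x ∂unif01, idx n x = i := by
    rw [Filter.Frequently, ae_iff]
    have : {x | ¬¬ idx n x = i} = idx n ⁻¹' {i} := by ext x; simp
    rw [this, (idx_good n).mass]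
    simp [hn]
  obtain ⟨x, hxi, hx1, hx⟩ := (h2.and_eventually (h1.and ae_Ioc)).exists
  have e : degFun (stepKernel n Q) x = ∑ j, |Q i j| / n := by
    unfold degFun
    rw [← Finset.sum_div, div_eq_inv_mul, ← (idx_good n).integral_fn (fun j => |Q i j|)]
    refine integral_congr_ae ?_
    filter_upwards [ae_Ioc] with y hy
    rw [stepKernel_eq n Q hx hy, hxi]
  rw [e, ← ofReal_norm_eq_enorm, ENNReal.ofReal_le_ofReal_iff hM] at hx1
  exact (le_abs_self _).trans hx1


theorem integral_abs_split {h : ℝ → ℝ} (hm : Measurable h) (hi : Integrable h unif01) :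
    ∫ x, |h x| ∂unif01 = ∫ x in {x | 0 ≤ h x}, h x ∂unif01 - ∫ x in {x | 0 ≤ h x}ᶜ, h x ∂unif01 := by
  have hS : MeasurableSet {x | 0 ≤ h x} := measurableSet_le measurable_const hm
  rw [← integral_add_compl hS hi.abs]
  have e1 : ∫ x in {x | 0 ≤ h x}, |h x| ∂unif01 = ∫ x in {x | 0 ≤ h x}, h x ∂unif01 :=
    setIntegral_congr_fun hS fun x hx => abs_of_nonneg hx
  have e2 : ∫ x in {x | 0 ≤ h x}ᶜ, |h x| ∂unif01 = - ∫ x in {x | 0 ≤ h x}ᶜ, h x ∂unif01 := by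
    rw [← integral_neg]
    refine setIntegral_congr_fun hS.compl fun x hx => ?_
    have : ¬ 0 ≤ h x := hx
    exact abs_of_neg (by linarith)
  rw [e1, e2]
  ring

theorem cutB_of_sets {W W' : ℝ → ℝ → ℝ} {M δ : ℝ} (h : KB unif01 W M) (h' : KB unif01 W' M)
    (H : ∀ S T : Set ℝ, MeasurableSet S → MeasurableSet T →
      |∫ x in S, ∫ y in T, (W x y - W' x y) ∂unif01 ∂unif01| ≤ δ) :
    CutB unif01 W W' (4 * δ) := by
  intro g hg hg1
  let D : ℝ × ℝ → ℝ := fun z => W z.1 z.2 - W' z.1 z.2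
  have hDm : Measurable D := h.meas.sub h'.meas
  have hD : Integrable D (unif01.prod unif01) := h.integrable.sub h'.integrable
  have hDl : ∀ x, Integrable (fun y => W y x - W' y x) unif01 := fun x =>
    (h.integrable_left x).sub (h'.integrable_left x)
  -- first: one-sided function on the second variable
  have key : ∀ T : Set ℝ, MeasurableSet T → ∫ y, |∫ x in T, D (y, x) ∂unif01| ∂unif01 ≤ 2 * δ := by
    intro T hT
    have hm : Measurable fun y => ∫ x in T, D (y, x) ∂unif01 :=
      (hDm.stronglyMeasurable.integral_prod_right (ν := unif01.restrict T)).measurable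
    have hi : Integrable (fun y => ∫ x in T, D (y, x) ∂unif01) unif01 := by
      have : Integrable D (unif01.prod (unif01.restrict T)) :=
        hD.mono_measure (Measure.prod_mono le_rfl Measure.restrict_le_self)
      exact this.integral_prod_left
    rw [integral_abs_split hm hi]
    have hS : MeasurableSet {y | 0 ≤ ∫ x in T, D (y, x) ∂unif01} := measurableSet_le measurable_const hm
    have a := H _ T hS hT
    have b := H _ T hS.compl hT
    have a' := (abs_le.mp a).2
    have b' := (abs_le.mp b).1
    simp only [D] at a' b' ⊢
    linarith
  let k : ℝ → ℝ := fun x => ∫ y, D (y, x) * g y ∂unif01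
  have hDg : Integrable (fun z : ℝ × ℝ => D z * g z.1) (unif01.prod unif01) := by
    have hgm : Measurable fun z : ℝ × ℝ => g z.1 := hg.comp measurable_fst
    have := hD.bdd_mul hgm.aestronglyMeasurable (Eventually.of_forall fun z => hg1 z.1)
    exact this.congr (Eventually.of_forall fun y => mul_comm _ _)
  have hkm : Measurable k := by
    have h0 : Measurable fun z : ℝ × ℝ => D (z.2, z.1) * g z.2 :=
      (hDm.comp measurable_swap).mul (hg.comp measurable_snd)
    exact (h0.stronglyMeasurable.integral_prod_right (ν := unif01)).measurable
  have hki : Integrable k unif01 := hDg.integral_prod_right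
  have e : ∀ x, ∫ y, W y x * g y ∂unif01 - ∫ y, W' y x * g y ∂unif01 = k x := by
    intro x
    rw [← integral_sub (h.integrable_op x hg hg1) (h'.integrable_op x hg hg1)]
    simp only [k, D, sub_mul]
  simp_rw [e]
  rw [integral_abs_split hkm hki]
  have hS : MeasurableSet {x | 0 ≤ k x} := measurableSet_le measurable_const hkm
  have bound : ∀ T : Set ℝ, MeasurableSet T → |∫ x in T, k x ∂unif01| ≤ 2 * δ := by
    intro T hT
    have hp : Integrable (fun z : ℝ × ℝ => D z * g z.1) (unif01.prod (unif01.restrict T)) :=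
      hDg.mono_measure (Measure.prod_mono le_rfl Measure.restrict_le_self)
    have hp' : Integrable D (unif01.prod (unif01.restrict T)) :=
      hD.mono_measure (Measure.prod_mono le_rfl Measure.restrict_le_self)
    have e1 : ∫ x in T, k x ∂unif01 = ∫ y, (∫ x in T, D (y, x) ∂unif01) * g y ∂unif01 := by
      simp only [k]
      rw [← integral_prod_symm _ hp, integral_prod _ hp]
      simp_rw [integral_mul_const]
    rw [e1]
    refine abs_integral_le_integral_abs.trans (le_trans ?_ (key T hT))
    refine integral_mono_of_nonneg (Eventually.of_forall fun x => abs_nonneg _) hp'.integral_prod_left.abs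
      (Eventually.of_forall fun y => ?_)
    dsimp only
    rw [abs_mul]
    exact mul_le_of_le_one_right (abs_nonneg _) (hg1 y)
  have a := (abs_le.mp (bound _ hS)).2
  have b := (abs_le.mp (bound _ hS.compl)).1
  linarith

theorem sets_of_cutDist {W₁ W₂ W W' : ℝ → ℝ → ℝ} {M δ : ℝ} (h : KB unif01 W M) (h' : KB unif01 W' M)
    {A : Set ℝ} (hA : ∀ᵐ x ∂unif01, x ∈ A)
    (e : ∀ x ∈ A, ∀ y ∈ A, W₁ x y - W₂ x y = W x y - W' x y) (hd : cutDist W₁ W₂ < δ)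
    (S T : Set ℝ) (hS : MeasurableSet S) (hT : MeasurableSet T) :
      |∫ x in S, ∫ y in T, (W x y - W' x y) ∂unif01 ∂unif01| ≤ δ := by
  have e1 : ∀ S T : Set ℝ, MeasurableSet S → MeasurableSet T →
      ∫ x in Set.Icc (0:ℝ) 1 ∩ S, ∫ y in Set.Icc (0:ℝ) 1 ∩ T, (W₁ x y - W₂ x y) =
      ∫ x in S, ∫ y in T, (W x y - W' x y) ∂unif01 ∂unif01 := by
    intro S T hS hT
    have r : ∀ S : Set ℝ, MeasurableSet S → (volume : Measure ℝ).restrict (Icc 0 1 ∩ S) = unif01.restrict S := by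
      intro S hS
      rw [unif01, Measure.restrict_restrict hS, inter_comm]
    rw [r S hS, r T hT]
    refine integral_congr_ae ?_
    filter_upwards [ae_restrict_of_ae hA] with x hx
    refine integral_congr_ae ?_
    filter_upwards [ae_restrict_of_ae hA] with y hy
    exact e x hx y hy
  have hD : Integrable (fun z : ℝ × ℝ => W z.1 z.2 - W' z.1 z.2) (unif01.prod unif01) :=
    h.integrable.sub h'.integrable
  let C := ∫ z : ℝ × ℝ, |W z.1 z.2 - W' z.1 z.2| ∂(unif01.prod unif01)
  have hC : ∀ S T : Set ℝ, MeasurableSet S → MeasurableSet T →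
      |∫ x in S, ∫ y in T, (W x y - W' x y) ∂unif01 ∂unif01| ≤ C := by
    intro S T hS hT
    have hp : Integrable (fun z : ℝ × ℝ => W z.1 z.2 - W' z.1 z.2)
        ((unif01.restrict S).prod (unif01.restrict T)) :=
      hD.mono_measure (Measure.prod_mono Measure.restrict_le_self Measure.restrict_le_self)
    rw [← integral_prod _ hp]
    refine abs_integral_le_integral_abs.trans ?_
    exact integral_mono_measure (Measure.prod_mono Measure.restrict_le_self Measure.restrict_le_self)
      (Eventually.of_forall fun _ => abs_nonneg _) hD.abs
  have hC0 : 0 ≤ C := integral_nonneg fun _ => abs_nonneg _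
  refine le_trans ?_ hd.le
  unfold cutDist
  have b1 : ∀ S : {S : Set ℝ // MeasurableSet S}, BddAbove (range fun T : {T : Set ℝ // MeasurableSet T} =>
    |∫ x in Set.Icc (0:ℝ) 1 ∩ S.1, ∫ y in Set.Icc (0:ℝ) 1 ∩ T.1, (W₁ x y - W₂ x y)|) := by
    intro S
    refine ⟨C, ?_⟩
    rintro _ ⟨T, rfl⟩
    dsimp only
    rw [e1 _ _ S.2 T.2]
    exact hC _ _ S.2 T.2
  have b2 : BddAbove (range fun S : {S : Set ℝ // MeasurableSet S} => ⨆ T : {T : Set ℝ // MeasurableSet T},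
    |∫ x in Set.Icc (0:ℝ) 1 ∩ S.1, ∫ y in Set.Icc (0:ℝ) 1 ∩ T.1, (W₁ x y - W₂ x y)|) := by
    refine ⟨C, ?_⟩
    rintro _ ⟨S, rfl⟩
    refine Real.iSup_le (fun T => ?_) hC0
    rw [e1 _ _ S.2 T.2]
    exact hC _ _ S.2 T.2
  have l1 := le_ciSup (b1 ⟨S, hS⟩) ⟨T, hT⟩
  have l2 := le_ciSup b2 ⟨S, hS⟩
  refine le_trans ?_ (l1.trans l2)
  dsimp only
  rw [e1 S T hS hT]

open Classical in
/-- Modification of a kernel off a null set. -/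
noncomputable def modK (A : Set ℝ) (W : ℝ → ℝ → ℝ) : ℝ → ℝ → ℝ := fun x y =>
  if x ∈ A ∧ y ∈ A then W x y else 0

theorem exists_good_set {W : ℝ → ℝ → ℝ} (hW : Measurable (Function.uncurry W))
    (hs : ∀ x y, W x y = W y x) (h1 : kerNorm W 1 ≠ ⊤) {M : ℝ}
    (hd : eLpNorm (degFun W) ⊤ unif01 ≤ ENNReal.ofReal M) :
    ∃ A : Set ℝ, (∀ᵐ x ∂unif01, x ∈ A) ∧ KB unif01 (modK A W) M ∧ MeasurableSet A := by
  have hm : Measurable fun x => ∫⁻ y, ‖W x y‖ₑ ∂unif01 :=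
    Measurable.lintegral_prod_right (f := fun x y => ‖W x y‖ₑ) hW.enorm
  let A : Set ℝ := {x | ∫⁻ y, ‖W x y‖ₑ ∂unif01 ≤ ENNReal.ofReal M}
  have hAm : MeasurableSet A := measurableSet_le hm measurable_const
  refine ⟨A, ?_, ⟨?_, ?_, ?_⟩, hAm⟩
  · have hi : Integrable (fun z : ℝ × ℝ => W z.1 z.2) (unif01.prod unif01) := by
      rw [← memLp_one_iff_integrable]
      exact ⟨hW.aestronglyMeasurable, lt_top_iff_ne_top.mpr h1⟩
    rw [eLpNorm_exponent_top] at hd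
    filter_upwards [hi.prod_right_ae, ae_le_eLpNormEssSup (f := degFun W) (μ := unif01)] with x hx hx2
    show ∫⁻ y, ‖W x y‖ₑ ∂unif01 ≤ ENNReal.ofReal M
    rw [← ofReal_integral_norm_eq_lintegral_enorm hx]
    refine le_trans ?_ (hx2.trans hd)
    rw [← ofReal_norm_eq_enorm]
    exact ENNReal.ofReal_le_ofReal (le_abs_self _)
  · refine Measurable.ite ?_ hW measurable_const
    exact (measurable_fst hAm).inter (measurable_snd hAm)
  · intro x
    by_cases hx : x ∈ A
    · refine le_trans (lintegral_mono fun y => ?_) hx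
      rw [modK, hs y x]
      split_ifs
      · exact le_rfl
      · simp
    · simp [modK, hx]
  · intro x
    by_cases hx : x ∈ A
    · refine le_trans (lintegral_mono fun y => ?_) hx
      rw [modK]
      split_ifs
      · exact le_rfl
      · simp
    · simp [modK, hx]


theorem RTree.prod_congr {α : Type*} {K K' : α → α → ℝ} {A : Set α} (h : ∀ x ∈ A, ∀ y ∈ A, K x y = K' x y) :
    ∀ {m : ℕ} (t : RTree m) (z : Fin (m + 1) → α), (∀ a, z a ∈ A) → t.prod K z = t.prod K' z
  | _, .nil, _, _ => rfl
  | _, .cons t p, z, hz => by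
    simp only [RTree.prod]
    rw [RTree.prod_congr h t (Fin.init z) (fun a => hz _), h _ (hz _) _ (hz _)]

section
variable {X : Type*} [MetricSpace X] [CompactSpace X] [MeasurableSpace X] [BorelSpace X]

theorem TWphi_eq {m : ℕ} {G : SimpleGraph (Fin (m + 1))} [DecidableRel G.Adj]
    {t : RTree m} {e : Fin (m + 1) ≃ Fin (m + 1)} {W : ℝ → ℝ → ℝ}
    (h : ∀ z : Fin (m + 1) → ℝ, edgeProd G (fun a b => W (z a) (z b)) = t.prod W (z ∘ e))
    {A : Set ℝ} (hA : ∀ᵐ x ∂unif01, x ∈ A)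
    (φ : (Fin (m + 1) → X) → ℝ) {ν : Measure (ℝ × X)} (hν : inTM ν) :
    TWphi G W φ ν = TR t (modK A W) (fun w => φ (w ∘ e.symm)) ν := by
  haveI := hν.1
  have hp : probOr ν = ν := by rw [probOr, if_pos hν.1]
  have hAν : ∀ᵐ z ∂ν, z.1 ∈ A := by
    rw [← hν.2] at hA
    exact ae_of_ae_map measurable_fst.aemeasurable hA
  have hpi : ∀ᵐ z ∂(Measure.pi fun _ : Fin (m + 1) => ν), ∀ a, (z a).1 ∈ A := by
    rw [ae_all_iff]
    intro a
    exact (Measure.quasiMeasurePreserving_eval (μ := fun _ : Fin (m + 1) => ν) a).ae hAν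
  have hmp := measurePreserving_arrowCongr' (fun _ : Fin (m + 1) => ν) (fun _ => ν) e
    (MeasurableEquiv.refl (ℝ × X)) (fun _ => MeasurePreserving.id ν)
  unfold TWphi TR piProb
  simp_rw [hp]
  rw [← hmp.integral_comp (MeasurableEquiv.measurableEmbedding _)]
  refine integral_congr_ae ?_
  filter_upwards [hpi] with z hz
  have e0 : (MeasurableEquiv.arrowCongr' e (MeasurableEquiv.refl (ℝ × X))) z = z ∘ e.symm := by
    ext a <;> rfl
  rw [e0, h (fun a => ((z ∘ e.symm) a).1)]
  have e1 : t.prod (liftK (modK A W)) z = t.prod (modK A W) (fun a => (z a).1) :=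
    (RTree.prod_comp (modK A W) (Prod.fst : ℝ × X → ℝ) t z).symm
  have e2 : (fun a => ((z ∘ e.symm) a).1) ∘ e = fun a => (z a).1 := by
    ext a
    simp
  rw [e1, e2]
  congr 1
  refine RTree.prod_congr (A := A) (fun x hx y hy => ?_) t _ fun a => hz _
  simp [modK, hx, hy]

end

theorem mpb_id : MPB id := ⟨bijOn_id _, MeasurePreserving.id _⟩

theorem exists_tau {n : ℕ} [NeZero n] {Q : Fin n → Fin n → ℝ} {M δ : ℝ}
    (hs : ∀ i j, Q i j = Q j i) (hr : ∀ i, ∑ j, |Q i j| / n ≤ M) {W : ℝ → ℝ → ℝ} {A : Set ℝ}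
    (hA : ∀ᵐ x ∂unif01, x ∈ A) (hW : KB unif01 (modK A W) M)
    (h : weakCutDist (stepKernel n Q) W < δ) :
    ∃ τ : ℝ → Fin n, Good τ ∧ CutB unif01 (fun a b => Q (τ a) (τ b)) (modK A W) (4 * δ) := by
  unfold weakCutDist at h
  haveI : Nonempty {σ : ℝ → ℝ // MPB σ} := ⟨⟨id, mpb_id⟩⟩
  obtain ⟨⟨σ, hσ⟩, h1⟩ := exists_lt_of_ciInf_lt h
  have hg := (idx_good n).comp hσ.2
  refine ⟨idx n ∘ σ, hg, ?_⟩
  have hk := step_KB hg hr hs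
  refine cutB_of_sets hk hW fun S T hS hT => ?_
  refine sets_of_cutDist (A := A ∩ σ ⁻¹' Ioc 0 1) hk hW ?_ ?_ h1 S T hS hT
  · filter_upwards [hA, hσ.2.quasiMeasurePreserving.ae ae_Ioc] with x hx hx2
    exact ⟨hx, hx2⟩
  · intro x hx y hy
    simp only
    rw [stepKernel_eq n Q hx.2 hy.2, modK, if_pos ⟨hx.1, hy.1⟩]
    rfl


/-- Theorem 1.2 (iii): the tree case. -/
theorem ldp_inhomogeneous_U_V_statistics_tree
    {X : Type*} [MetricSpace X] [CompactSpace X] [MeasurableSpace X] [BorelSpace X]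
    (μ : Measure X) [IsProbabilityMeasure μ]
    (hnondeg : ∀ x : X, μ ≠ Measure.dirac x)
    {v : ℕ} (hv : 2 ≤ v) (G : SimpleGraph (Fin v)) [DecidableRel G.Adj]
    (htree : G.IsTree)
    (φ : (Fin v → X) → ℝ) (hφ : Continuous φ)
    (Q : ∀ n : ℕ, Fin n → Fin n → ℝ)
    (hQsymm : ∀ n i j, Q n i j = Q n j i) (hQzero : ∀ n i, Q n i i = 0)
    (W : ℝ → ℝ → ℝ) (hWmeas : Measurable (Function.uncurry W))
    (hWsymm : ∀ x y, W x y = W y x) (hWL1 : kerNorm W 1 ≠ ⊤)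
    (hcut : Tendsto (fun n => weakCutDist (stepKernel n (Q n)) W) atTop (nhds 0))
    (hdegQ : Filter.atTop.limsup
      (fun n => eLpNorm (degFun (stepKernel n (Q n))) ⊤ unif01) ≠ ⊤)
    (hdegW : eLpNorm (degFun W) ⊤ unif01 ≠ ⊤) :
    SatisfiesLDP (fun n => Measure.pi fun _ : Fin n => μ)
      (fun n x => Ustat G φ n (Q n) x) (rate0 G W φ μ) ∧
    SatisfiesLDP (fun n => Measure.pi fun _ : Fin n => μ)
      (fun n x => Vstat G φ n (Q n) x) (rate0 G W φ μ) := by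
  obtain ⟨m, rfl⟩ : ∃ m, v = m + 1 := ⟨v - 1, by lia⟩
  obtain ⟨t, e, hte⟩ := exists_rtree.{0} G htree
  -- a common bound
  obtain ⟨M, hM1, hMW, hMQ⟩ : ∃ M : ℝ, 1 ≤ M ∧ eLpNorm (degFun W) ⊤ unif01 ≤ ENNReal.ofReal M ∧
      ∀ᶠ n in atTop, eLpNorm (degFun (stepKernel n (Q n))) ⊤ unif01 ≤ ENNReal.ofReal M := by
    set a := Filter.atTop.limsup (fun n => eLpNorm (degFun (stepKernel n (Q n))) ⊤ unif01) with ha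
    set b := eLpNorm (degFun W) ⊤ unif01
    have ha0 := ENNReal.toReal_nonneg (a := a)
    have hb0 := ENNReal.toReal_nonneg (a := b)
    refine ⟨a.toReal + b.toReal + 1, by linarith, ?_, ?_⟩
    · calc b = ENNReal.ofReal b.toReal := (ENNReal.ofReal_toReal hdegW).symm
        _ ≤ _ := ENNReal.ofReal_le_ofReal (by
          have := ENNReal.toReal_nonneg (a := a)
          linarith)
    · have hlt : a < ENNReal.ofReal (a.toReal + b.toReal + 1) := by
        rw [ENNReal.lt_ofReal_iff_toReal_lt hdegQ]
        have := ENNReal.toReal_nonneg (a := b)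
        linarith
      filter_upwards [Filter.eventually_lt_of_limsup_lt hlt] with n hn
      exact hn.le
  have hM0 : 0 ≤ M := by linarith
  obtain ⟨A, hA, hKB, -⟩ := exists_good_set hWmeas hWsymm hWL1 hMW
  set W' := modK A W with hW'
  set φ' : (Fin (m + 1) → X) → ℝ := fun w => φ (w ∘ e.symm) with hφ'
  have hφc : Continuous φ' := hφ.comp (by fun_prop)
  obtain ⟨B, hB0, hB⟩ : ∃ B : ℝ, 0 ≤ B ∧ ∀ w, |φ w| ≤ B := by
    obtain ⟨B, hB⟩ := isCompact_univ.exists_bound_of_continuousOn hφ.continuousOn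
    exact ⟨max B 0, le_max_right _ _, fun w => (hB w (mem_univ w)).trans (le_max_left _ _)⟩
  have hTeq : ∀ ν : Measure (ℝ × X), inTM ν → TWphi G W φ ν = TR t W' φ' ν := fun ν hν =>
    TWphi_eq (fun z => hte W hWsymm z) hA φ hν
  have hrate : rate0 G W φ μ = rateT μ (TR t W' φ') := by
    funext s
    unfold rate0 rateT
    refine le_antisymm ?_ ?_
    · refine le_iInf fun ν => ?_
      exact iInf_le_of_le ⟨ν.1, ν.2.1, ν.2.2.1, (hTeq _ ν.2.1).trans ν.2.2.2⟩ le_rfl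
    · refine le_iInf fun ν => ?_
      exact iInf_le_of_le ⟨ν.1, ν.2.1, ν.2.2.1, (hTeq _ ν.2.1).symm.trans ν.2.2.2⟩ le_rfl
  have hpoly : PolyApprox (TR t W' φ') := PolyApprox.TR t hM0 hKB hφc
  have hG : ∀ n, ∀ z : Fin (m + 1) → Fin n, edgeProd G (fun a b => Q n (z a) (z b)) =
      t.prod (Q n) (z ∘ e) := fun n z => hte (Q n) (hQsymm n) z
  -- the main approximation
  have main : ∀ ε > 0, ∀ δ > 0, ∀ᶠ n : ℕ in atTop, ∃ τ : ℝ → Fin n, Good τ ∧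
      (∀ i, ∑ j, |Q n i j| / n ≤ M) ∧ CutB unif01 (fun a b => Q n (τ a) (τ b)) W' δ ∧
      (∀ x, |Vstat G φ n (Q n) x - TR t W' φ' (emp τ x)| ≤ ε) ∧
      ∀ ν ν' : Measure (ℝ × X), inTM ν → inTM ν' →
        ν'.map (Prod.map τ id) = ν.map (Prod.map τ id) → |TR t W' φ' ν' - TR t W' φ' ν| ≤ ε := by
    intro ε hε δ hδ
    obtain ⟨δ₁, hδ₁, hcl⟩ := TR_close (X := X) t hM0 hφc (half_pos hε)
    have hδ₂ : 0 < min δ δ₁ / 4 := by positivity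
    filter_upwards [hMQ, hcut.eventually (gt_mem_nhds hδ₂), eventually_ge_atTop 1] with n hn1 hn2 hn3
    haveI : NeZero n := ⟨by lia⟩
    have hr := row_bound hM0 hn1
    obtain ⟨τ, hτ, hc⟩ := exists_tau (hQsymm n) hr hA hKB hn2
    have hmin : 4 * (min δ δ₁ / 4) = min δ δ₁ := by ring
    rw [hmin] at hc
    have hcl' := hcl _ W' (step_KB hτ hr (hQsymm n)) hKB
      (fun g hg hg1 => (hc g hg hg1).trans (min_le_right _ _))
    refine ⟨τ, hτ, hr, fun g hg hg1 => (hc g hg hg1).trans (min_le_left _ _), ?_, ?_⟩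
    · intro x
      rw [Vstat_eq (hG n) x, ← TR_emp t hτ (Q n) hφc x]
      exact (hcl' _ (emp_inTM hτ.meas x)).trans (by linarith)
    · intro ν ν' hν hν' he
      have h1 := hcl' ν hν
      have h2 := hcl' ν' hν'
      rw [TR_step t hτ.meas (Q n) hφc hν] at h1
      rw [TR_step t hτ.meas (Q n) hφc hν', he] at h2
      rw [abs_le] at h1 h2 ⊢
      constructor <;> linarith [h1.1, h1.2, h2.1, h2.2]
  rw [hrate]
  refine ⟨?_, ?_⟩
  · refine abstract_LDP μ hpoly _ fun ε hε => ?_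
    obtain ⟨C, hC0, hC⟩ := RTree.noninj M hM1 t
    -- choose a small parameter
    set η := ε / 2 / (B * C + 1) with hη
    have hBC : 0 ≤ B * C := mul_nonneg hB0 hC0
    have hη0 : 0 < η := by positivity
    obtain ⟨R, hR⟩ := ((truncK_tendsto hKB).eventually
      (gt_mem_nhds (show 0 < η / 3 / M by positivity))).exists
    have hlim : ∀ᶠ n : ℕ in atTop, (R : ℝ) * M / n < η / 3 :=
      (tendsto_const_div_atTop_nhds_zero_nat ((R : ℝ) * M)).eventually (gt_mem_nhds (by positivity))
    filter_upwards [main (ε / 2) (by positivity) (η / 3 / M) (by positivity), hlim] with n hn hnl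
    obtain ⟨τ, hτ, hr, hc, hV, hinv⟩ := hn
    refine ⟨τ, hτ, fun x => ?_, fun ν ν' hν hν' he => (hinv ν ν' hν hν' he).trans (by linarith)⟩
    have hn0 := hτ.pos
    have hq : ∀ i, ∑ j, |Q n j i / n| ≤ M := by
      intro i
      simp_rw [abs_div, Nat.abs_cast, hQsymm n _ i]
      exact hr i
    have hc' : CutB unif01 (fun y x => n * (fun i j => Q n i j / n) (τ y) (τ x)) W' (η / 3 / M) := by
      have : (fun y x : ℝ => n * (fun i j => Q n i j / n) (τ y) (τ x)) =
          fun a b => Q n (τ a) (τ b) := by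
        funext a b
        field_simp
      rw [this]
      exact hc
    have hsq := sq_bound hτ hM0 hKB (q := fun i j => Q n i j / n) hq (Nat.cast_nonneg R) hc'
    have hMη : M * (η / 3 / M) = η / 3 := by field_simp
    have hsq2 : (n : ℝ)⁻¹ * ∑ i, ∑ j, (|Q n i j| / n) ^ 2 ≤ η := by
      have e1 : ∑ i, ∑ j, (|Q n i j| / n) ^ 2 = ∑ i, ∑ j, (Q n j i / n) ^ 2 := by
        refine Finset.sum_congr rfl fun i _ => Finset.sum_congr rfl fun j _ => ?_
        rw [div_pow, div_pow, sq_abs, hQsymm n i j]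
      rw [e1]
      have := mul_le_mul_of_nonneg_left hR.le hM0
      rw [hMη] at this hsq
      linarith
    have hUV := U_sub_V (hG n) hB x
    have hN := hC (B := fun a b => |Q n a b| / n) (fun i j => by positivity)
      (fun i => by simp [hQzero]) hr (fun i => by simp_rw [hQsymm n _ i]; exact hr i)
    have hUV2 : |Ustat G φ n (Q n) x - Vstat G φ n (Q n) x| ≤ ε / 2 := by
      refine hUV.trans ?_
      calc _ ≤ B * ((n : ℝ)⁻¹ * (C * ∑ i, ∑ j, (|Q n i j| / n) ^ 2)) := by
            refine mul_le_mul_of_nonneg_left (mul_le_mul_of_nonneg_left ?_ (by positivity)) hB0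
            refine le_trans (le_of_eq ?_) hN
            refine Finset.sum_congr rfl fun z _ => ?_
            congr
        _ = B * C * ((n : ℝ)⁻¹ * ∑ i, ∑ j, (|Q n i j| / n) ^ 2) := by ring
        _ ≤ B * C * η := mul_le_mul_of_nonneg_left hsq2 hBC
        _ ≤ (B * C + 1) * η := by nlinarith
        _ = ε / 2 := by rw [hη]; field_simp
    have h3 := hV x
    rw [abs_le] at h3 hUV2 ⊢
    constructor <;> linarith [h3.1, h3.2, hUV2.1, hUV2.2]
  · refine abstract_LDP μ hpoly _ fun ε hε => ?_
    filter_upwards [main ε hε 1 one_pos] with n hn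
    obtain ⟨τ, hτ, -, -, hV, hinv⟩ := hn
    exact ⟨τ, hτ, hV, hinv⟩
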